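/- Let r, s be integers with r ≥ 4 and r−1 ≤ s ≤ 2r−4, and let S ⊂ P^r be an irreducible, reduced, nondegenerate projective surface of degree s, sectional genus π, and arithmetic genus p_a(S). Then −binom(π₀−π+1, 2) ≤ p_a(S) ≤ 0, where π₀ := s−r+1. -/

import Mathlib

open scoped BigOperators

noncomputable section

/-- The homogeneous coordinate ring of `ℙ^{n-1}` over `ℂ`: polynomials in `n` variables. -/
abbrev MPoly (n : ℕ) : Type := MvPolynomial (Fin n) ℂ

/-- An ideal is homogeneous if it contains all homogeneous components of its members. -/
def IsHomogIdeal {n : ℕ} (I : Ideal (MPoly n)) : Prop :=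
  ∀ f ∈ I, ∀ k : ℕ, MvPolynomial.homogeneousComponent k f ∈ I

/-- The degree-`k` graded piece of the homogeneous coordinate ring of the subscheme `V(I)`. -/
def degQ {n : ℕ} (I : Ideal (MPoly n)) (k : ℕ) : Submodule ℂ (MPoly n ⧸ I) :=
  (MvPolynomial.homogeneousSubmodule (Fin n) ℂ k).map (Ideal.Quotient.mkₐ ℂ I).toLinearMap

/-- The graded pieces, indexed by `ℤ` (zero in negative degrees). -/
def degQZ {n : ℕ} (I : Ideal (MPoly n)) (t : ℤ) : Submodule ℂ (MPoly n ⧸ I) :=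
  if 0 ≤ t then degQ I t.toNat else ⊥

/-- The Hilbert function of the closed subscheme `V(I) ⊆ ℙ^{n-1}`. -/
def hilbNat {n : ℕ} (I : Ideal (MPoly n)) (t : ℤ) : ℕ :=
  Module.finrank ℂ (degQZ I t)

/-- The Hilbert function, as an integer-valued function. -/
def hilbZ {n : ℕ} (I : Ideal (MPoly n)) (t : ℤ) : ℤ := (hilbNat I t : ℤ)

/-- The irrelevant maximal ideal `(x_0, …, x_{n-1})`. -/
def mId (n : ℕ) : Ideal (MPoly n) := Ideal.span (Set.range MvPolynomial.X)

/-- The space of degree-`t` graded module homomorphisms `m^k → R/I`. -/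
def gradedHomSub {n : ℕ} (I : Ideal (MPoly n)) (k : ℕ) (t : ℤ) :
    Submodule ℂ ((mId n ^ k : Ideal (MPoly n)) →ₗ[MPoly n] (MPoly n ⧸ I)) where
  carrier := {φ | ∀ (j : ℕ) (f : MPoly n) (hf : f ∈ mId n ^ k),
    f ∈ MvPolynomial.homogeneousSubmodule (Fin n) ℂ j → φ ⟨f, hf⟩ ∈ degQZ I ((j : ℤ) + t)}
  add_mem' := by
    intro a b ha hb j f hf hj
    simpa using Submodule.add_mem _ (ha j f hf hj) (hb j f hf hj)
  zero_mem' := by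
    intro j f hf hj
    simpa using Submodule.zero_mem _
  smul_mem' := by
    intro c φ hφ j f hf hj
    simpa using Submodule.smul_mem _ c (hφ j f hf hj)

/-- `h⁰(X, 𝒪_X(t))` for `X = V(I)`: the stable value of the dimensions of the graded Hom
modules `Hom(m^k, R/I)_t` (the Deligne formula for twisted global sections). -/
def h0Nat {n : ℕ} (I : Ideal (MPoly n)) (t : ℤ) : ℕ :=
  ⨆ k : ℕ, Module.finrank ℂ (gradedHomSub I k t)

/-- `h¹(ℙ^{n-1}, 𝓘_X(t)) = h⁰(X, 𝒪_X(t)) − h_X(t)` (valid for the saturated ideal of `X`). -/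
def h1INat {n : ℕ} (I : Ideal (MPoly n)) (t : ℤ) : ℕ := h0Nat I t - hilbNat I t

/-- The dimension over `ℂ` of the Hartshorne–Rao module `M(X) = ⊕_t H¹(ℙ, 𝓘_X(t))`. -/
def raoDim {n : ℕ} (I : Ideal (MPoly n)) : ℕ := ∑ᶠ t : ℤ, h1INat I t

/-- Arithmetically Cohen–Macaulay (for an integral curve): the Hartshorne–Rao module vanishes. -/
def IsACM {n : ℕ} (I : Ideal (MPoly n)) : Prop := ∀ t : ℤ, h0Nat I t = hilbNat I t

/-- Saturation of an ideal with respect to the irrelevant maximal ideal. -/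
def satIdeal {n : ℕ} (I : Ideal (MPoly n)) : Ideal (MPoly n) where
  carrier := {f | ∃ k : ℕ, ∀ j : Fin n, MvPolynomial.X j ^ k * f ∈ I}
  zero_mem' := ⟨0, fun j => by simpa using I.zero_mem⟩
  add_mem' := by
    rintro f g ⟨k, hk⟩ ⟨l, hl⟩
    refine ⟨k + l, fun j => ?_⟩
    have h1 : MvPolynomial.X (R := ℂ) j ^ (k + l) * (f + g)
        = MvPolynomial.X j ^ l * (MvPolynomial.X j ^ k * f)
          + MvPolynomial.X j ^ k * (MvPolynomial.X j ^ l * g) := by ring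
    rw [h1]
    exact I.add_mem (I.mul_mem_left _ (hk j)) (I.mul_mem_left _ (hl j))
  smul_mem' := by
    rintro c f ⟨k, hk⟩
    refine ⟨k, fun j => ?_⟩
    have h1 : MvPolynomial.X (R := ℂ) j ^ k * (c • f) = c * (MvPolynomial.X j ^ k * f) := by
      rw [smul_eq_mul]; ring
    rw [h1]
    exact I.mul_mem_left _ (hk j)

/-- The hyperplane section of `V(I)` by the hyperplane `{ℓ = 0}`, as a closed subscheme
(its saturated homogeneous ideal). -/
def sect {n : ℕ} (I : Ideal (MPoly n)) (ℓ : MPoly n) : Ideal (MPoly n) :=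
  satIdeal (I ⊔ Ideal.span {ℓ})

/-- A property `P` holds for a *general* `k`-tuple of linear forms (hyperplanes): it holds on a
nonempty Zariski-open subset of the space of coefficients. -/
def GenericForms (n k : ℕ) (P : (Fin k → MPoly n) → Prop) : Prop :=
  ∃ Q : MvPolynomial (Fin k × Fin n) ℂ, Q ≠ 0 ∧
    ∀ c : Fin k → Fin n → ℂ, MvPolynomial.eval (fun p => c p.1 p.2) Q ≠ 0 →
      P fun t => ∑ j : Fin n, MvPolynomial.C (c t j) * MvPolynomial.X j

/-- `V(I) ⊆ ℙ^{n-1}` is nondegenerate: contained in no hyperplane. -/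
def Nondeg {n : ℕ} (I : Ideal (MPoly n)) : Prop :=
  ∀ f ∈ MvPolynomial.homogeneousSubmodule (Fin n) ℂ 1, f ∈ I → f = 0

/-- `V(I)` is an integral curve: `I` homogeneous prime, with cone of Krull dimension 2. -/
def IsCurve {n : ℕ} (I : Ideal (MPoly n)) : Prop :=
  IsHomogIdeal I ∧ I.IsPrime ∧ ringKrullDim (MPoly n ⧸ I) = 2

/-- `V(I)` is an integral surface: `I` homogeneous prime, with cone of Krull dimension 3. -/
def IsSurface {n : ℕ} (I : Ideal (MPoly n)) : Prop :=
  IsHomogIdeal I ∧ I.IsPrime ∧ ringKrullDim (MPoly n ⧸ I) = 3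

/-- The curve `V(I)` has degree `d` and arithmetic genus `g`: its Hilbert polynomial is
`d·t + 1 − g`. -/
def CurveInv {n : ℕ} (I : Ideal (MPoly n)) (d g : ℤ) : Prop :=
  ∃ N : ℤ, ∀ t : ℤ, N ≤ t → hilbZ I t = d * t + 1 - g

/-- The surface `V(I)` has degree `s`, sectional genus `π` and arithmetic genus `pa`:
its Hilbert polynomial is `s·choose(t+1, 2) + (1 − π)·t + 1 + pa`. -/
def SurfInv {n : ℕ} (I : Ideal (MPoly n)) (s π pa : ℤ) : Prop :=
  ∃ N : ℤ, ∀ t : ℤ, N ≤ t → hilbZ I t = s * (t * (t + 1) / 2) + (1 - π) * t + 1 + pa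

/-- `V(IC)` is not contained in any integral surface of degree `< s`. -/
def NotInSurfDegLT {n : ℕ} (IC : Ideal (MPoly n)) (s : ℤ) : Prop :=
  ∀ (T : Ideal (MPoly n)) (s' π' pa' : ℤ), IsSurface T → SurfInv T s' π' pa' → s' < s →
    ¬ T ≤ IC

/-- `V(IC)` is not contained in any integral surface of degree `s` with sectional genus `> π`. -/
def NotInSurfSecGT {n : ℕ} (IC : Ideal (MPoly n)) (s π : ℤ) : Prop :=
  ∀ (T : Ideal (MPoly n)) (π' pa' : ℤ), IsSurface T → SurfInv T s π' pa' → π < π' →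
    ¬ T ≤ IC

/-- `V(IC)` is not contained in any integral surface of degree `s` with arithmetic genus `< p`. -/
def NotInSurfGenLT {n : ℕ} (IC : Ideal (MPoly n)) (s p : ℤ) : Prop :=
  ∀ (T : Ideal (MPoly n)) (π' pa' : ℤ), IsSurface T → SurfInv T s π' pa' → pa' < p →
    ¬ T ≤ IC

/-- `binom2 z = z.choose 2` for integers. -/
def binom2 (z : ℤ) : ℤ := z * (z - 1) / 2

/-- The bound `G*(r,d,s,π,p)` of Di Gennaro–Franco, with `m = (d-1)/s`, `ε = (d-1) % s`. -/
def Gstar (r d s π p : ℤ) : ℤ :=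
  binom2 ((d - 1) / s) * s + ((d - 1) / s) * ((d - 1) % s + π) - p
    + max 0 ((2 * π - (s - 1 - (d - 1) % s)) / 2)

/-- The numerical function `h_{r,d,s,π}`. -/
def hF (r d s π : ℤ) (i : ℤ) : ℤ :=
  if 1 ≤ i ∧ i ≤ (d - 1) / s then
    1 - π + i * s - max 0 ((s - r + 1) - π - i + 1)
  else if i = (d - 1) / s + 1 then
    d - max 0 ((2 * π - (s - 1 - (d - 1) % s)) / 2)
  else if (d - 1) / s + 2 ≤ i then d
  else 0

/-- The threshold `d₀(r)`. -/
def d0 (r : ℤ) : ℤ :=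
  if r ≤ 6 then 16 * (r - 2) * (2 * r - 3)
  else if r ≤ 11 then 8 * (r - 2) ^ 3
  else 2 ^ (r.toNat + 1)

end
noncomputable section

/-- The affine cone of `V(I)`: common zeroes of the elements of `I`. -/
def zeroCone {n : ℕ} (I : Ideal (MPoly n)) : Set (Fin n → ℂ) :=
  {a | ∀ f ∈ I, MvPolynomial.eval a f = 0}

/-- Jacobian-criterion smoothness: at every nonzero point of the affine cone (of dimension `c`)
the gradients of the equations span a subspace of dimension `n - c`. -/
def IsSmooth {n : ℕ} (I : Ideal (MPoly n)) (c : ℕ) : Prop :=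
  ∀ a ∈ zeroCone I, a ≠ 0 →
    Module.finrank ℂ (Submodule.span ℂ
      {g : Fin n → ℂ | ∃ f ∈ I, g = fun j => MvPolynomial.eval a (MvPolynomial.pderiv j f)})
      = n - c

/-- Castelnuovo's bound for the genus of a nondegenerate integral curve of degree `d`
in `ℙ^R`. -/
def castelG (R d : ℤ) : ℤ :=
  binom2 ((d - 1) / (R - 1)) * (R - 1) + ((d - 1) / (R - 1)) * ((d - 1) % (R - 1))

/-- The ideal of the projective cone (from `ℙ^{n-1}` to `ℙ^n`) over `V(I)`. -/
def coneIdeal {n : ℕ} (I : Ideal (MPoly n)) : Ideal (MPoly (n + 1)) :=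
  Ideal.map (MvPolynomial.rename (Fin.castSucc : Fin n → Fin (n + 1))) I

/-- `J` is the (saturated homogeneous) ideal of a line in `ℙ^{n-1}`: it is generated by
`n - 2` linearly independent linear forms. -/
def IsLineIdeal {n : ℕ} (J : Ideal (MPoly n)) : Prop :=
  ∃ V : Submodule ℂ (MPoly n), V ≤ MvPolynomial.homogeneousSubmodule (Fin n) ℂ 1 ∧
    Module.finrank ℂ V = n - 2 ∧ J = Ideal.span (V : Set (MPoly n))

/-- `V(T) ⊆ ℙ^{n-1}` is a smooth rational normal scroll surface: a smooth nondegenerate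
integral surface of minimal degree `n - 2` (with sectional and arithmetic genus `0`)
containing a line (which rules out the Veronese surface). -/
def IsSmoothRNScroll {n : ℕ} (T : Ideal (MPoly n)) : Prop :=
  IsSurface T ∧ Nondeg T ∧ IsSmooth T 3 ∧ SurfInv T ((n : ℤ) - 2) 0 0 ∧
    ∃ J : Ideal (MPoly n), IsLineIdeal J ∧ T ≤ J

/-- The linear projection on points determined by the matrix `L`. -/
def projPt {nb ns : ℕ} (L : Fin ns → Fin nb → ℂ) (a : Fin nb → ℂ) : Fin ns → ℂ :=
  fun t => ∑ j, L t j * a j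

/-- The substitution algebra homomorphism determined by the matrix `L` (pullback of the
linear projection `ℙ^{nb-1} ⇢ ℙ^{ns-1}`). -/
def substHom {nb ns : ℕ} (L : Fin ns → Fin nb → ℂ) : MPoly ns →ₐ[ℂ] MPoly nb :=
  MvPolynomial.aeval fun t => ∑ j, MvPolynomial.C (L t j) * MvPolynomial.X j

/-- The linear projection given by `L` maps `V(I')` isomorphically onto `V(I)`: the center of
projection misses `V(I')`, `V(I)` is the image, and the projection is (projectively) bijective
from `V(I')` onto `V(I)`. -/
def IsIsoProjection {nb ns : ℕ} (L : Fin ns → Fin nb → ℂ)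
    (I' : Ideal (MPoly nb)) (I : Ideal (MPoly ns)) : Prop :=
  I = I'.comap (substHom L) ∧
  (∀ a ∈ zeroCone I', a ≠ 0 → projPt L a ≠ 0) ∧
  (∀ a ∈ zeroCone I', ∀ b ∈ zeroCone I', a ≠ 0 → b ≠ 0 →
    (∃ c : ℂ, c ≠ 0 ∧ projPt L a = c • projPt L b) → ∃ c : ℂ, c ≠ 0 ∧ a = c • b) ∧
  (∀ y ∈ zeroCone I, y ≠ 0 → ∃ a ∈ zeroCone I', a ≠ 0 ∧ ∃ c : ℂ, c ≠ 0 ∧ y = c • projPt L a)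

/-- `t` bounds the Castelnuovo–Mumford regularity of the surface `V(I) ⊆ ℙ^{n-1}`:
for every `t' ≥ t`, `H^i(ℙ, 𝓘(t'-i)) = 0` for all `i ≥ 1`, expressed through the standard
inductive characterization by successive general hyperplane sections. -/
def IsRegBound {n : ℕ} (I : Ideal (MPoly n)) (t : ℤ) : Prop :=
  GenericForms n 2 fun L => ∀ t' : ℤ, t ≤ t' →
    h1INat I (t' - 1) = 0 ∧ h1INat (sect I (L 0)) (t' - 1) = 0 ∧
      h1INat (sect (sect I (L 0)) (L 1)) (t' - 1) = 0

end

/-!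
The homogeneous coordinate ring of the surface is traded for the function field `F`, generated
over `k = ℂ` by the space `V` spanned by the quotients `x_i / x_0`; the Hilbert function becomes
`t ↦ dim V ^ t`. A general hyperplane section is replaced by the generic one, defined over the
field `k₁` generated by its coefficients, with function field `F₁` and space `V₁`. A second
section gives a finite extension `L / K`, with a space `V₂ ⊆ L`, which stands for the points of a
general linear section of codimension two. The global sections of `𝒪(t)` are replaced by the
saturation of `V` in degree `t`, and a lemma of Dedekind–Mertens type yields the usual
inequalities between the Hilbert functions, and the saturations, of a variety and of its
hyperplane section.

Two facts of Bertini type are needed: `k₁` is algebraically closed in `F₁`, and `L / K` has no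
proper intermediate field, because the monodromy of the points is doubly transitive. Both hold
because all pairs of distinct points of a generic section look alike, which in turn follows from
`F ⊗ F` being a domain.

Since `dim V₂ = r - 1` and `[L : K] ≤ s ≤ 2 r - 4`, one has `V₂ ^ 2 = L`. Therefore the dimension
`b t` of the saturation of `V₁` in degree `t ≥ 1` equals `s t + 1 - π`, and summing over `t`
bounds the Hilbert function of the surface from above, which gives `p_a ≤ 0`. For the lower bound
consider the deficits `d t = b t - dim V₁ ^ t`, with `d 1 = π₀ - π`. They do not increase. If
`d (t + 1) = d t` then, by the linear Cauchy–Davenport inequality in `L`, they are constant from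
`t` on, hence zero, since they vanish for large `t`. So they decrease strictly until they vanish,
their sum is at most `binom (π₀ - π + 1) 2`, and `p_a` is at least minus that sum.
-/

namespace SurfaceGenus

universe u

lemma finrank_map_of_injective {R M N : Type*} [Semiring R] [AddCommMonoid M] [AddCommMonoid N]
    [Module R M] [Module R N] (A : Submodule R M) {f : M →ₗ[R] N} (hf : Function.Injective f) :
    Module.finrank R (A.map f) = Module.finrank R A :=
  (Submodule.equivMapOfInjective f hf A).finrank_eq.symm

/-! ### The linear Cauchy–Davenport inequality -/

section CauchyDavenport

open IntermediateField Module
open scoped Pointwise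

variable {K L : Type*} [Field K] [Field L] [Algebra K L]

lemma finrank_smul {e : L} (he : e ≠ 0) (B : Submodule K L) : finrank K ↥(e • B) = finrank K B :=
  finrank_map_of_injective B (f := DistribSMul.toLinearMap K L e) (mul_right_injective₀ he)

lemma smul_le_mul {a : L} {A : Submodule K L} (ha : a ∈ A) (B : Submodule K L) :
    a • B ≤ A * B := by
  rintro _ ⟨b, hb, rfl⟩
  exact Submodule.mul_mem_mul ha hb

lemma compr₂_mul_injective {φ : L →ₗ[K] K} (hφ : φ ≠ 0) :
    Function.Injective ((LinearMap.mul K L).compr₂ φ) := by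
  rw [← LinearMap.ker_eq_bot, LinearMap.ker_eq_bot']
  intro x hx
  by_contra hx0
  refine hφ (LinearMap.ext fun y => ?_)
  simpa [hx0] using LinearMap.congr_fun hx (x⁻¹ * y)

lemma finrank_add_finrank_le_of_le_ker [FiniteDimensional K L] {φ : L →ₗ[K] K} (hφ : φ ≠ 0)
    {A B : Submodule K L} (h : A * B ≤ LinearMap.ker φ) :
    finrank K A + finrank K B ≤ finrank K L := by
  let T : L →ₗ[K] Module.Dual K L := (LinearMap.mul K L).compr₂ φ
  have hle : A.map T ≤ B.dualAnnihilator := by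
    rintro _ ⟨a, ha, rfl⟩
    exact (Submodule.mem_dualAnnihilator _).2 fun b hb => h (Submodule.mul_mem_mul ha hb)
  calc finrank K A + finrank K B = finrank K B + finrank K (A.map T) := by
        rw [finrank_map_of_injective A (compr₂_mul_injective hφ), add_comm]
    _ ≤ finrank K B + finrank K B.dualAnnihilator :=
        Nat.add_le_add_left (Submodule.finrank_mono hle) _
    _ = finrank K L := Subspace.finrank_add_finrank_dualAnnihilator_eq B

lemma mul_eq_top_of_finrank_lt [FiniteDimensional K L] {A B : Submodule K L}
    (h : finrank K L < finrank K A + finrank K B) : A * B = ⊤ := by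
  by_contra hne
  obtain ⟨φ, hφ, hle⟩ := Submodule.exists_le_ker_of_lt_top _ (lt_top_iff_ne_top.2 hne)
  exact h.not_ge (finrank_add_finrank_le_of_le_ker hφ hle)

/-- Dyson's `e`-transform of a pair of subspaces of a field, the linear analogue of
`Finset.mulDysonETransform`: it preserves the sum of the dimensions and does not enlarge the
product. -/
def dysonETransform (e : L) (A B : Submodule K L) : Submodule K L × Submodule K L :=
  (A ⊓ e • B, e⁻¹ • (A ⊔ e • B))

lemma dysonETransform_mul_le {e : L} (he : e ≠ 0) (A B : Submodule K L) :
    (dysonETransform e A B).1 * (dysonETransform e A B).2 ≤ A * B := by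
  rw [dysonETransform, Submodule.smul_sup', inv_smul_smul₀ he, Submodule.mul_sup]
  refine sup_le ?_ (mul_le_mul_left inf_le_left _)
  refine Submodule.mul_le.2 ?_
  rintro _ ⟨_, b, hb, rfl⟩ _ ⟨a, ha, rfl⟩
  have : e • b * e⁻¹ • a = a * b := by simp only [smul_eq_mul]; field_simp
  exact this ▸ Submodule.mul_mem_mul ha hb

lemma finrank_dysonETransform [FiniteDimensional K L] {e : L} (he : e ≠ 0) (A B : Submodule K L) :
    finrank K (dysonETransform e A B).1 + finrank K (dysonETransform e A B).2 =
      finrank K A + finrank K B := by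
  calc _ = finrank K ↥(A ⊓ e • B) + finrank K ↥(A ⊔ e • B) :=
        congrArg _ (finrank_smul (inv_ne_zero he) _)
    _ = finrank K A + finrank K B := by
        rw [add_comm, Submodule.finrank_sup_add_finrank_inf_eq, finrank_smul he]

/-- The subalgebra of all multipliers of a subspace `B`, i.e. of the `c` with `c B ⊆ B`. -/
def multiplierAlgebra (B : Submodule K L) : Subalgebra K L where
  carrier := {c | ∀ y ∈ B, c * y ∈ B}
  mul_mem' := fun hc hd y hy => by rw [mul_assoc]; exact hc _ (hd _ hy)
  add_mem' := fun hc hd y hy => by rw [add_mul]; exact add_mem (hc _ hy) (hd _ hy)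
  algebraMap_mem' := fun c y hy => by rw [← Algebra.smul_def]; exact B.smul_mem _ hy

lemma eq_top_of_mem_multiplierAlgebra {B : Submodule K L} (hB : B ≠ ⊥) {c : L}
    (hc : IsAlgebraic K c) (htop : K⟮c⟯ = ⊤) (hcB : c ∈ multiplierAlgebra B) : B = ⊤ := by
  obtain ⟨b, hb, hb0⟩ := (Submodule.ne_bot_iff B).1 hB
  have hadj : Algebra.adjoin K {c} = ⊤ := by
    rw [← adjoin_simple_toSubalgebra_of_isAlgebraic hc, htop, top_toSubalgebra]
  have hle : (⊤ : Subalgebra K L) ≤ multiplierAlgebra B :=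
    hadj ▸ Algebra.adjoin_le (Set.singleton_subset_iff.2 hcB)
  refine eq_top_iff.2 fun x _ => ?_
  have hx : x * b⁻¹ * b ∈ B := hle (Algebra.mem_top (x := x * b⁻¹)) b hb
  rwa [inv_mul_cancel_right₀ hb0] at hx

-- If no Dyson transform makes `A` smaller, all quotients of elements of `A` are multipliers of `B`.
lemma min_finrank_le_finrank_mul_of_le_smul [FiniteDimensional K L]
    (hL : ∀ c : L, c ∉ Set.range (algebraMap K L) → K⟮c⟯ = ⊤) {A B : Submodule K L}
    (hA : A ≠ ⊥) (hB : B ≠ ⊥)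
    (h : ∀ a ∈ A, ∀ b ∈ B, a ≠ 0 → b ≠ 0 → A ≤ (a * b⁻¹) • B) :
    min (finrank K L) (finrank K A + finrank K B - 1) ≤ finrank K (A * B : Submodule K L) := by
  obtain ⟨a, ha, ha0⟩ := (Submodule.ne_bot_iff A).1 hA
  have hBAB : finrank K B ≤ finrank K (A * B : Submodule K L) :=
    finrank_smul ha0 B ▸ Submodule.finrank_mono (smul_le_mul ha B)
  have hmult : ∀ a' ∈ A, a' * a⁻¹ ∈ multiplierAlgebra B := by
    intro a' ha' y hy
    rcases eq_or_ne y 0 with rfl | hy0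
    · simp
    obtain ⟨w, hw, rfl⟩ := h a ha y hy ha0 hy0 ha'
    have : a * y⁻¹ * w * a⁻¹ * y = w := by field_simp
    exact this.symm ▸ hw
  by_cases hconst : ∀ a' ∈ A, a' * a⁻¹ ∈ Set.range (algebraMap K L)
  · have hspan : A ≤ K ∙ a := fun a' ha' => by
      obtain ⟨c, hc⟩ := hconst a' ha'
      exact Submodule.mem_span_singleton.2 ⟨c, by rw [Algebra.smul_def, hc]; field_simp⟩
    have hA1 : finrank K A ≤ 1 := finrank_span_singleton (K := K) ha0 ▸ Submodule.finrank_mono hspan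
    exact (min_le_right _ _).trans (by omega)
  · push Not at hconst
    obtain ⟨a', ha', hc⟩ := hconst
    have hBtop : B = ⊤ := eq_top_of_mem_multiplierAlgebra hB
      (Algebra.IsAlgebraic.isAlgebraic _) (hL _ hc) (hmult a' ha')
    refine (min_le_left _ _).trans ?_
    rwa [hBtop, finrank_top, ← hBtop] at hBAB

lemma min_finrank_le_finrank_mul [FiniteDimensional K L]
    (hL : ∀ c : L, c ∉ Set.range (algebraMap K L) → K⟮c⟯ = ⊤) {A B : Submodule K L}
    (hA : A ≠ ⊥) (hB : B ≠ ⊥) :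
    min (finrank K L) (finrank K A + finrank K B - 1) ≤ finrank K (A * B : Submodule K L) := by
  induction hn : finrank K A using Nat.strong_induction_on generalizing A B with
  | _ n ih =>
  subst hn
  by_cases h : ∀ a ∈ A, ∀ b ∈ B, a ≠ 0 → b ≠ 0 → A ≤ (a * b⁻¹) • B
  · exact min_finrank_le_finrank_mul_of_le_smul hL hA hB h
  push Not at h
  obtain ⟨a, ha, b, hb, ha0, hb0, hnle⟩ := h
  set e : L := a * b⁻¹ with he
  have he0 : e ≠ 0 := mul_ne_zero ha0 (inv_ne_zero hb0)
  have haeB : a ∈ e • B := ⟨b, hb, by simp [he, hb0]⟩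
  have hlt : finrank K (dysonETransform e A B).1 < finrank K A :=
    Submodule.finrank_lt_finrank_of_lt (inf_lt_left.2 hnle)
  have hA' : (dysonETransform e A B).1 ≠ ⊥ := (Submodule.ne_bot_iff _).2 ⟨a, ⟨ha, haeB⟩, ha0⟩
  have hB' : (dysonETransform e A B).2 ≠ ⊥ := (Submodule.ne_bot_iff _).2
    ⟨e⁻¹ • a, Submodule.smul_mem_pointwise_smul _ _ _ (Submodule.mem_sup_left ha),
      smul_ne_zero (inv_ne_zero he0) ha0⟩
  calc min (finrank K L) (finrank K A + finrank K B - 1)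
      = min (finrank K L) (finrank K (dysonETransform e A B).1 +
          finrank K (dysonETransform e A B).2 - 1) := by rw [finrank_dysonETransform he0]
    _ ≤ _ := ih _ hlt hA' hB' rfl
    _ ≤ _ := Submodule.finrank_mono (dysonETransform_mul_le he0 A B)

end CauchyDavenport

/-! ### Saturation and the Dedekind–Mertens lemma -/

section Saturation

open Submodule

variable {k F : Type*} [CommSemiring k] [CommSemiring F] [Algebra k F]

/-- The degree-`t` part of the saturation of the graded algebra `⨁ V ^ n`: the elements that
multiply `V ^ n` into `V ^ (n + t)` for some (equivalently, all large) `n`. When `V` is spanned by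
affine coordinates of a projective variety, it stands for the global sections of `𝒪(t)`. -/
def saturation (V : Submodule k F) (t : ℕ) : Submodule k F := ⨆ n, V ^ (n + t) / V ^ n

lemma monotone_pow_div_pow (V : Submodule k F) (t : ℕ) :
    Monotone fun n => V ^ (n + t) / V ^ n := by
  refine monotone_nat_of_le_succ fun n => le_div_iff_mul_le.2 ?_
  calc V ^ (n + t) / V ^ n * V ^ (n + 1) = V ^ (n + t) / V ^ n * V ^ n * V := by
        rw [pow_succ, mul_assoc]
    _ ≤ V ^ (n + t) * V := mul_le_mul_left (Submodule.le_div_iff_mul_le.1 le_rfl) _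
    _ = V ^ (n + 1 + t) := by rw [← pow_succ]; ring_nf

variable {V W : Submodule k F} {t : ℕ} {x : F}

lemma mem_saturation : x ∈ saturation V t ↔ ∃ n, ∀ y ∈ V ^ n, x * y ∈ V ^ (n + t) := by
  simp_rw [saturation, mem_iSup_of_directed _ (monotone_pow_div_pow V t).directed_le,
    mem_div_iff_forall_mul_mem]

lemma le_saturation_of_mul_pow_le {n : ℕ} (h : W * V ^ n ≤ V ^ (n + t)) : W ≤ saturation V t :=
  (le_div_iff_mul_le.2 h).trans (le_iSup (fun n => V ^ (n + t) / V ^ n) n)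

lemma pow_le_saturation (V : Submodule k F) (t : ℕ) : V ^ t ≤ saturation V t :=
  le_saturation_of_mul_pow_le (n := 0) (by simp)

lemma le_saturation_one (V : Submodule k F) : V ≤ saturation V 1 := by
  simpa using pow_le_saturation V 1

lemma saturation_mul_le (V : Submodule k F) (i j : ℕ) :
    saturation V i * saturation V j ≤ saturation V (i + j) := by
  simp only [saturation, iSup_mul, mul_iSup]
  refine iSup_le fun m => iSup_le fun n => le_iSup_of_le (n + m) (le_div_iff_mul_le.2 ?_)
  calc V ^ (n + i) / V ^ n * (V ^ (m + j) / V ^ m) * V ^ (n + m)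
      = V ^ (n + i) / V ^ n * V ^ n * (V ^ (m + j) / V ^ m * V ^ m) := by
        rw [pow_add V n m, mul_mul_mul_comm]
    _ ≤ V ^ (n + i) * V ^ (m + j) :=
        mul_le_mul' (Submodule.le_div_iff_mul_le.1 le_rfl) (Submodule.le_div_iff_mul_le.1 le_rfl)
    _ = V ^ (n + m + (i + j)) := by rw [← pow_add]; ring_nf

lemma mul_mem_saturation {i j : ℕ} {y : F} (hx : x ∈ saturation V i) (hy : y ∈ saturation V j) :
    x * y ∈ saturation V (i + j) :=
  saturation_mul_le V i j (mul_mem_mul hx hy)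

lemma exists_mul_pow_le (hW : W.FG) (hle : W ≤ saturation V t) :
    ∃ n, ∀ m, n ≤ m → W * V ^ m ≤ V ^ (m + t) := by
  have hmono := monotone_pow_div_pow V t
  obtain ⟨_, ⟨n, rfl⟩, hn⟩ := (CompleteLattice.isCompactElement_iff_le_of_directed_sSup_le _ _).1
    ((fg_iff_compact W).1 hW) _ (Set.range_nonempty _) hmono.directed_le.directedOn_range
    (hle.trans sSup_range.ge)
  exact ⟨n, fun m hm => le_div_iff_mul_le.1 (hn.trans (hmono hm))⟩

lemma le_saturation_of_pow_mul_le (hV : V.FG) (hW : W.FG) {n : ℕ}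
    (h : V ^ n * W ≤ saturation V (n + t)) : W ≤ saturation V t := by
  obtain ⟨m, hm⟩ := exists_mul_pow_le ((hV.pow n).mul hW) h
  refine le_saturation_of_mul_pow_le (n := n + m) ?_
  calc W * V ^ (n + m) = V ^ n * W * V ^ m := by rw [pow_add, mul_left_comm, mul_assoc]
    _ ≤ V ^ (m + (n + t)) := hm m le_rfl
    _ = V ^ (n + m + t) := by ring_nf

end Saturation

lemma isIntegral_of_mem_saturation_zero {k F : Type*} [CommRing k] [CommRing F] [IsDomain F]
    [Algebra k F] {V : Submodule k F} (hV : V.FG) (h1 : (1 : F) ∈ V)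
    {x : F} (hx : x ∈ saturation V 0) : IsIntegral k x := by
  obtain ⟨n, hn⟩ := mem_saturation.1 hx
  have hne : V ^ n ≠ ⊥ :=
    (Submodule.ne_bot_iff _).2 ⟨1, one_pow (M := F) n ▸ Submodule.pow_mem_pow V h1 n, one_ne_zero⟩
  exact isIntegral_of_smul_mem_submodule _ hne (hV.pow n) x hn

section DedekindMertens

open MvPolynomial

variable {k F σ : Type*} [CommRing k] [CommRing F] [Algebra k F] {V : Submodule k F}

-- Every monomial of degree `m + n + 1` has degree `> m` in `A` or degree `> n` in `B`.
lemma sup_pow_add_add_one_le (A B : Submodule k F) (m n : ℕ) :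
    (A ⊔ B) ^ (m + n + 1) ≤ A ^ (m + 1) * (A ⊔ B) ^ n ⊔ B ^ (n + 1) * (A ⊔ B) ^ m := by
  have hle : ∀ i j, A ^ i * B ^ j ≤ (A ⊔ B) ^ (i + j) := fun i j => by
    rw [pow_add]; gcongr <;> simp
  conv_lhs => rw [← Submodule.add_eq_sup, (Commute.all A B).add_pow']
  refine Finset.sum_induction _ (· ≤ _) (fun _ _ => sup_le) bot_le fun p hp => ?_
  have hp := Finset.HasAntidiagonal.mem_antidiagonal.1 hp
  rw [nsmul_eq_self (Nat.choose_pos (by omega)).ne']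
  by_cases hm : m < p.1
  · obtain ⟨i, hi⟩ := Nat.exists_eq_add_of_le hm
    refine le_sup_of_le_left ?_
    rw [hi, pow_add, mul_assoc, show n = i + p.2 by omega]
    exact mul_le_mul_right (hle _ _) _
  · obtain ⟨j, hj⟩ := Nat.exists_eq_add_of_le (show n + 1 ≤ p.2 by omega)
    refine le_sup_of_le_right ?_
    rw [hj, pow_add, mul_left_comm, show m = p.1 + j by omega]
    exact mul_le_mul_right (hle _ _) _

lemma sup_pow_mul_le_saturation {A B C : Submodule k F} (hA : A ≤ V) (hB : B ≤ V) {m n t : ℕ}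
    (hAC : A ^ (m + 1) * C ≤ saturation V (m + t))
    (hBC : B ^ (n + 1) * C ≤ saturation V (n + t)) :
    (A ⊔ B) ^ (m + n + 1) * C ≤ saturation V (m + n + t) := by
  have hpow : ∀ i, (A ⊔ B) ^ i ≤ saturation V i := fun i =>
    (pow_le_pow_left' (sup_le hA hB) i).trans (pow_le_saturation V i)
  refine (mul_le_mul_left (sup_pow_add_add_one_le A B m n) C).trans ?_
  rw [Submodule.sup_mul]
  refine sup_le ?_ ?_
  · calc A ^ (m + 1) * (A ⊔ B) ^ n * C = A ^ (m + 1) * C * (A ⊔ B) ^ n := mul_right_comm ..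
      _ ≤ saturation V (m + t) * saturation V n := mul_le_mul' hAC (hpow n)
      _ ≤ saturation V (m + t + n) := saturation_mul_le V _ _
      _ = saturation V (m + n + t) := by rw [add_right_comm]
  · calc B ^ (n + 1) * (A ⊔ B) ^ m * C = (A ⊔ B) ^ m * (B ^ (n + 1) * C) := by
          rw [mul_comm (B ^ _), mul_assoc]
      _ ≤ saturation V m * saturation V (n + t) := mul_le_mul' (hpow m) hBC
      _ ≤ saturation V (m + (n + t)) := saturation_mul_le V _ _
      _ = saturation V (m + n + t) := by rw [add_assoc]

variable [Fintype σ]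

/-- The linear form `∑ i, z i * X i` with coefficient family `z`. -/
noncomputable def linearForm (z : σ → F) : MvPolynomial σ F := ∑ i, C (z i) * X i

lemma coeff_linearForm_mul (z : σ → F) (q : MvPolynomial σ F) (β : σ →₀ ℕ) :
    coeff β (linearForm z * q) = ∑ i, z i * coeff β (X i * q) := by
  simp only [linearForm, Finset.sum_mul, coeff_sum, mul_assoc, coeff_C_mul]

-- Descending induction on the exponent of `X i`: compare the coefficients of `X ^ α * X i`.
lemma pow_mul_coeff_mem_saturation {z : σ → F} (hz : ∀ i, z i ∈ V) {t : ℕ}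
    {q : MvPolynomial σ F} (h : ∀ β, coeff β (linearForm z * q) ∈ saturation V t) (i : σ) {j : ℕ}
    {α : σ →₀ ℕ} (hα : degreeOf i q ≤ α i + j) :
    z i ^ (j + 1) * coeff α q ∈ saturation V (j + t) := by
  classical
  have htail : ∀ α : σ →₀ ℕ, z i * coeff α q =
      coeff (α + Finsupp.single i 1) (linearForm z * q) -
        ∑ l ∈ Finset.univ.erase i, z l * coeff (α + Finsupp.single i 1) (X l * q) := fun α => by
    rw [coeff_linearForm_mul, ← Finset.add_sum_erase _ _ (Finset.mem_univ i), add_comm α,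
      coeff_X_mul, add_sub_cancel_right]
  have happly : ∀ (α : σ →₀ ℕ) (l : σ), l ≠ i →
      (α + Finsupp.single i 1 - Finsupp.single l 1 : σ →₀ ℕ) i = α i + 1 := fun α l hl => by
    simp [hl]
  induction j generalizing α with
  | zero =>
    simp only [zero_add, pow_one]
    rw [htail, Finset.sum_eq_zero fun l hl => ?_, sub_zero]
    · exact h _
    · rw [coeff_X_mul']
      split_ifs
      · rw [notMem_support_iff.1 (notMem_support_of_degreeOf_lt i ?_), mul_zero]
        rw [happly α l (Finset.ne_of_mem_erase hl)]
        omega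
      · exact mul_zero _
  | succ j ih =>
    rw [pow_succ, mul_assoc, htail, mul_sub, Finset.mul_sum]
    refine sub_mem ?_ (sum_mem fun l hl => ?_)
    · exact mul_mem_saturation (pow_le_saturation V _ (Submodule.pow_mem_pow _ (hz i) _)) (h _)
    · rw [coeff_X_mul', mul_left_comm, show j + 1 + t = 1 + (j + t) by ring]
      refine mul_mem_saturation (le_saturation_one V (hz l)) ?_
      split_ifs
      · exact ih (by rw [happly α l (Finset.ne_of_mem_erase hl)]; omega)
      · rw [mul_zero]; exact zero_mem _

lemma exists_pow_mul_span_coeff_le_saturation {z : σ → F} (hz : V = Submodule.span k (Set.range z))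
    {t : ℕ} {q : MvPolynomial σ F} (h : ∀ β, coeff β (linearForm z * q) ∈ saturation V t)
    (α : σ →₀ ℕ) : ∃ n, V ^ (n + 1) * Submodule.span k {coeff α q} ≤ saturation V (n + t) := by
  have hzV : ∀ i, z i ∈ V := fun i => hz ▸ Submodule.subset_span ⟨i, rfl⟩
  suffices ∀ s : Finset σ, ∃ n, Submodule.span k (z '' s) ^ (n + 1) * Submodule.span k {coeff α q}
      ≤ saturation V (n + t) by
    simpa only [Finset.coe_univ, Set.image_univ, ← hz] using this Finset.univ
  intro s
  induction s using Finset.cons_induction with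
  | empty => exact ⟨0, by simp⟩
  | cons i s _ ih =>
    obtain ⟨n, hn⟩ := ih
    rw [Finset.coe_cons, Set.image_insert_eq, Submodule.span_insert]
    refine ⟨degreeOf i q + n, sup_pow_mul_le_saturation ?_ ?_ ?_ hn⟩
    · exact (Submodule.span_singleton_le_iff_mem _ _).2 (hzV i)
    · exact Submodule.span_le.2 (Set.image_subset_iff.2 fun l _ => hzV l)
    · rw [Submodule.span_pow, Set.singleton_pow, Submodule.span_mul_span,
        Set.singleton_mul_singleton, Submodule.span_singleton_le_iff_mem]
      exact pow_mul_coeff_mem_saturation hzV h i (Nat.le_add_left _ _)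

lemma mem_coeffsIn_saturation {z : σ → F} (hz : V = Submodule.span k (Set.range z)) {t : ℕ}
    {q : MvPolynomial σ F} (h : linearForm z * q ∈ coeffsIn σ (saturation V (t + 1))) :
    q ∈ coeffsIn σ (saturation V t) := by
  intro α
  obtain ⟨n, hn⟩ := exists_pow_mul_span_coeff_le_saturation hz h α
  have hV : V.FG := hz ▸ Submodule.fg_span (Set.finite_range z)
  refine le_saturation_of_pow_mul_le hV (Submodule.fg_span_singleton _) (n := n + 1) ?_
    (Submodule.mem_span_singleton_self _)
  rwa [show n + 1 + t = n + (t + 1) by ring]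

end DedekindMertens

section BaseChange

open TensorProduct
open scoped Pointwise

lemma fg_and_finrank_le_of_forall_fg {k M : Type*} [DivisionRing k] [AddCommGroup M] [Module k M]
    {S : Submodule k M} {n : ℕ}
    (h : ∀ W : Submodule k M, W ≤ S → W.FG → Module.finrank k W ≤ n) :
    S.FG ∧ Module.finrank k S ≤ n := by
  have hrank : Module.rank k S ≤ n := rank_le fun s hs => by
    have hli : LinearIndependent k fun i : s => ((i : S) : M) :=
      hs.map' S.subtype (Submodule.ker_subtype S)
    rw [← Fintype.card_coe s, ← finrank_span_eq_card hli]
    refine h _ (Submodule.span_le.2 ?_) (Submodule.fg_span (Set.finite_range _))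
    rintro _ ⟨i, rfl⟩
    exact i.1.2
  have : Module.Finite k S :=
    Module.rank_lt_aleph0_iff.1 (hrank.trans_lt Cardinal.natCast_lt_aleph0)
  exact ⟨Module.Finite.iff_fg.1 this, Module.finrank_le_of_rank_le hrank⟩

lemma finrank_map_add_finrank_inf_ker {k M N : Type*} [DivisionRing k] [AddCommGroup M]
    [AddCommGroup N] [Module k M] [Module k N] (f : M →ₗ[k] N) {W : Submodule k M} (hW : W.FG) :
    Module.finrank k (W.map f) + Module.finrank k (W ⊓ LinearMap.ker f : Submodule k M) =
      Module.finrank k W := by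
  have : Module.Finite k W := Module.Finite.iff_fg.2 hW
  rw [← LinearMap.finrank_range_add_finrank_ker (f.domRestrict W), LinearMap.range_domRestrict,
    LinearMap.ker_domRestrict, ← finrank_map_of_injective _ W.subtype_injective,
    Submodule.map_comap_subtype]

lemma fg_baseChange {k K M : Type*} [CommRing k] [CommRing K] [Algebra k K] [AddCommGroup M]
    [Module k M] {W : Submodule k M} (hW : W.FG) : (W.baseChange K).FG := by
  obtain ⟨s, rfl⟩ := hW
  rw [Submodule.baseChange_span]
  exact Submodule.fg_span (s.finite_toSet.image _)

section Algebra

variable {k K F : Type*} [CommRing k] [CommRing K] [CommRing F] [Algebra k K] [Algebra k F]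

lemma baseChange_mul (W₁ W₂ : Submodule k F) :
    (W₁ * W₂).baseChange K = W₁.baseChange K * W₂.baseChange K := by
  calc (W₁ * W₂).baseChange K = (Submodule.span k ((W₁ : Set F) * (W₂ : Set F))).baseChange K := by
        rw [← Submodule.span_mul_span, Submodule.span_eq, Submodule.span_eq]
    _ = W₁.baseChange K * W₂.baseChange K := by
        rw [Submodule.baseChange_span, Submodule.baseChange_eq_span, Submodule.baseChange_eq_span,
          Submodule.span_mul_span]
        exact congrArg _ (Set.image_mul (Algebra.TensorProduct.includeRight : F →ₐ[k] K ⊗[k] F))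

lemma baseChange_pow (W : Submodule k F) (n : ℕ) :
    (W ^ n).baseChange K = W.baseChange K ^ n := by
  induction n with
  | zero =>
    rw [pow_zero, pow_zero, Submodule.one_eq_span, Submodule.one_eq_span,
      Submodule.baseChange_span, Set.image_singleton]
    rfl
  | succ n ih => rw [pow_succ, pow_succ, baseChange_mul, ih]

end Algebra

section Field

variable {k K M : Type*} [Field k] [Field K] [Algebra k K] [AddCommGroup M] [Module k M]

lemma finrank_baseChange_submodule (W : Submodule k M) :
    Module.finrank K (W.baseChange K) = Module.finrank k W := by
  have hinj : Function.Injective (W.subtype.baseChange K) :=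
    Module.Flat.lTensor_preserves_injective_linearMap W.subtype W.subtype_injective
  rw [Submodule.baseChange, LinearMap.finrank_range_of_inj hinj, Module.finrank_baseChange]

lemma mem_of_one_tmul_mem_baseChange {W : Submodule k M} {x : M}
    (h : (1 : K) ⊗ₜ[k] x ∈ W.baseChange K) : x ∈ W := by
  obtain ⟨y, hy⟩ := h
  have hzero : (1 : K) ⊗ₜ[k] W.mkQ x = 0 := by
    rw [← LinearMap.baseChange_tmul, ← hy, ← LinearMap.comp_apply, ← LinearMap.baseChange_comp]
    rw [W.range_subtype.le.trans W.ker_mkQ.ge |> LinearMap.range_le_ker_iff.1,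
      LinearMap.baseChange_zero, LinearMap.zero_apply]
  rw [← Submodule.Quotient.mk_eq_zero, ← Submodule.mkQ_apply]
  exact Module.FaithfullyFlat.tensorProduct_mk_injective (A := k) (B := K) _
    (hzero.trans (TensorProduct.tmul_zero _ _).symm)

end Field

end BaseChange

/-! ### Generic hyperplane sections -/

section ScalarExtension

open TensorProduct

variable (k F K F' : Type*) [CommRing k] [CommRing F] [CommRing K] [CommRing F'] [Algebra k F]
  [Algebra k K] [Algebra K F'] [Algebra F F'] [Algebra k F'] [IsScalarTower k F F']
  [IsScalarTower k K F']

/-- The multiplication map `K ⊗ F → F'`. For the function field `F'` of the generic hyperplane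
section over the field `K` generated by its coefficients, it is restriction to the section. -/
noncomputable def specialization : K ⊗[k] F →ₐ[K] F' :=
  Algebra.TensorProduct.lift (Algebra.ofId K F') (IsScalarTower.toAlgHom k F F')
    fun _ _ => Commute.all _ _

variable {k F K F'}

@[simp]
lemma specialization_tmul (a : K) (x : F) :
    specialization k F K F' (a ⊗ₜ[k] x) = algebraMap K F' a * algebraMap F F' x := by
  simp [specialization, Algebra.ofId_apply]

variable (K F')

/-- The `K`-submodule of `F'` generated by a `k`-submodule of `F`. -/
noncomputable def scalarExt (W : Submodule k F) : Submodule K F' :=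
  (W.baseChange K).map (specialization k F K F').toLinearMap

lemma scalarExt_span (s : Set F) :
    scalarExt K F' (Submodule.span k s) = Submodule.span K (algebraMap F F' '' s) := by
  rw [scalarExt, Submodule.baseChange_span, Submodule.map_span, ← Set.image_comp]
  congr 2
  ext x
  simp

lemma scalarExt_mono : Monotone (scalarExt K F' : Submodule k F → Submodule K F') :=
  fun _ _ h => Submodule.map_mono (Submodule.baseChange_mono K h)

lemma scalarExt_mul (W₁ W₂ : Submodule k F) :
    scalarExt K F' (W₁ * W₂) = scalarExt K F' W₁ * scalarExt K F' W₂ := by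
  rw [scalarExt, baseChange_mul, Submodule.map_mul, scalarExt, scalarExt]

lemma scalarExt_pow (W : Submodule k F) (n : ℕ) :
    scalarExt K F' (W ^ n) = scalarExt K F' W ^ n := by
  rw [scalarExt, baseChange_pow, Submodule.map_pow, scalarExt]

variable {K F'}

lemma algebraMap_mem_scalarExt {W : Submodule k F} {x : F} (hx : x ∈ W) :
    algebraMap F F' x ∈ scalarExt K F' W :=
  ⟨1 ⊗ₜ x, Submodule.tmul_mem_baseChange_of_mem 1 hx, by simp⟩

lemma scalarExt_saturation_le (V : Submodule k F) (t : ℕ) :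
    scalarExt K F' (saturation V t) ≤ saturation (scalarExt K F' V) t := by
  rw [← Submodule.span_eq (saturation V t), scalarExt_span, Submodule.span_le]
  rintro _ ⟨x, hx, rfl⟩
  obtain ⟨n, hn⟩ := exists_mul_pow_le (Submodule.fg_span_singleton (R := k) x)
    ((Submodule.span_singleton_le_iff_mem _ _).2 hx)
  refine le_saturation_of_mul_pow_le (n := n) ?_
    (algebraMap_mem_scalarExt (Submodule.mem_span_singleton_self (R := k) x))
  rw [← scalarExt_pow, ← scalarExt_pow, ← scalarExt_mul]
  exact scalarExt_mono K F' (hn n le_rfl)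

end ScalarExtension

section HyperplaneSection

open MvPolynomial TensorProduct

/-- A generic hyperplane section of the variety with affine coordinates `z i` in `F`, encoded by
function fields: `K` is the field of rational functions over `k` in the coefficients `X i` of the
universal linear form `∑ i, z i * X i`, and `F'` is the fraction field of the quotient of
`F[X i]` by that form. -/
structure GenericSection (k F K F' : Type*) {σ : Type*} [Field k] [Field F] [Field K] [Field F']
    [Algebra k F] [Algebra k K] [Algebra K F'] [Algebra F F'] [Fintype σ] (z : σ → F) where
  /-- The inclusion of the polynomial ring in its fraction field. -/
  toBase : MvPolynomial σ k →ₐ[k] K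
  /-- The projection to the quotient ring, inside its fraction field. -/
  toSection : MvPolynomial σ F →ₐ[F] F'
  toBase_injective : Function.Injective toBase
  exists_toBase_mul_eq : ∀ x, ∃ p q, q ≠ 0 ∧ toBase q * x = toBase p
  toSection_X : ∀ i, toSection (X i) = algebraMap K F' (toBase (X i))
  ker_toSection : RingHom.ker toSection = Ideal.span {linearForm z}
  exists_toSection_mul_eq : ∀ x, ∃ p q, toSection q ≠ 0 ∧ toSection q * x = toSection p

lemma linearForm_ne_zero {F σ : Type*} [CommRing F] [Fintype σ] {z : σ → F} (hz : z ≠ 0) :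
    linearForm z ≠ 0 := by
  classical
  obtain ⟨i, hi⟩ := Function.ne_iff.1 hz
  have hcoeff : coeff (Finsupp.single i 1) (linearForm z) = z i := by
    simp [linearForm, coeff_sum, coeff_C_mul, coeff_X, Finsupp.single_left_inj]
  exact fun h => hi (by rw [← hcoeff, h, coeff_zero, Pi.zero_apply])

lemma map_algebraMap_mul_mem_coeffsIn {k F σ : Type*} [CommSemiring k] [CommSemiring F]
    [Algebra k F] {W : Submodule k F} (g : MvPolynomial σ k) {p : MvPolynomial σ F}
    (hp : p ∈ coeffsIn σ W) : map (algebraMap k F) g * p ∈ coeffsIn σ W := by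
  rw [← one_mul W, coeffsIn_mul]
  refine Submodule.mul_mem_mul (fun α => ?_) hp
  rw [coeff_map]
  exact Submodule.algebraMap_mem _

namespace GenericSection

variable {k F K F' σ : Type*} [Field k] [Field F] [Field K] [Field F'] [Algebra k F]
  [Algebra k K] [Algebra K F'] [Algebra F F'] [Fintype σ] {z : σ → F}
  (G : GenericSection k F K F' z)

lemma toBase_ne_zero {g : MvPolynomial σ k} (hg : g ≠ 0) : G.toBase g ≠ 0 :=
  (map_ne_zero_iff _ G.toBase_injective).2 hg

/-- The localisation map from the polynomial ring over `F` to `K ⊗ F`. -/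
noncomputable def toTensor : MvPolynomial σ F →ₐ[k] K ⊗[k] F :=
  (Algebra.TensorProduct.map G.toBase (AlgHom.id k F)).comp
    ((Algebra.TensorProduct.comm k F (MvPolynomial σ k)).toAlgHom.comp
      ((algebraTensorAlgEquiv (σ := σ) k F).symm.restrictScalars k).toAlgHom)

lemma toTensor_monomial (α : σ →₀ ℕ) (c : F) :
    G.toTensor (monomial α c) = G.toBase (monomial α 1) ⊗ₜ[k] c := by
  simp [toTensor, algebraTensorAlgEquiv_symm_monomial]

lemma toTensor_map_mul (g : MvPolynomial σ k) (p : MvPolynomial σ F) :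
    G.toTensor (map (algebraMap k F) g * p) = G.toBase g • G.toTensor p := by
  have hmap : G.toTensor (map (algebraMap k F) g) = G.toBase g ⊗ₜ[k] (1 : F) := by
    simp [toTensor, algebraTensorAlgEquiv_symm_map]
  rw [map_mul, hmap, Algebra.smul_def]
  rfl

lemma toTensor_injective : Function.Injective G.toTensor := by
  have hmap : Function.Injective (Algebra.TensorProduct.map G.toBase (AlgHom.id k F)) :=
    Module.Flat.rTensor_preserves_injective_linearMap G.toBase.toLinearMap G.toBase_injective
  exact hmap.comp ((Algebra.TensorProduct.comm k F (MvPolynomial σ k)).injective.comp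
    (algebraTensorAlgEquiv k F).symm.injective)

lemma toTensor_mem_baseChange {W : Submodule k F} {p : MvPolynomial σ F}
    (hp : p ∈ coeffsIn σ W) : G.toTensor p ∈ W.baseChange K := by
  rw [p.as_sum, map_sum]
  refine sum_mem fun α _ => ?_
  rw [toTensor_monomial]
  exact Submodule.tmul_mem_baseChange_of_mem _ (hp α)

lemma exists_smul_eq_toTensor {W : Submodule k F} {y : K ⊗[k] F} (hy : y ∈ W.baseChange K) :
    ∃ g ≠ 0, ∃ p ∈ coeffsIn σ W, G.toBase g • y = G.toTensor p := by
  rw [Submodule.baseChange_eq_span] at hy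
  induction hy using Submodule.span_induction with
  | mem y hy =>
    obtain ⟨x, hx, rfl⟩ := hy
    refine ⟨1, one_ne_zero, monomial 0 x, monomial_mem_coeffsIn.2 hx, ?_⟩
    rw [toTensor_monomial]
    simp
  | zero => exact ⟨1, one_ne_zero, 0, zero_mem _, by simp⟩
  | add y y' _ _ h h' =>
    obtain ⟨g, hg, p, hp, e⟩ := h
    obtain ⟨g', hg', p', hp', e'⟩ := h'
    refine ⟨g' * g, mul_ne_zero hg' hg, map (algebraMap k F) g' * p + map (algebraMap k F) g * p',
      add_mem (map_algebraMap_mul_mem_coeffsIn _ hp) (map_algebraMap_mul_mem_coeffsIn _ hp'), ?_⟩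
    rw [map_add, toTensor_map_mul, toTensor_map_mul, ← e, ← e', map_mul, smul_add, mul_smul,
      mul_comm, mul_smul]
  | smul c y _ h =>
    obtain ⟨g, hg, p, hp, e⟩ := h
    obtain ⟨a, b, hb, hc⟩ := G.exists_toBase_mul_eq c
    refine ⟨b * g, mul_ne_zero hb hg, map (algebraMap k F) a * p,
      map_algebraMap_mul_mem_coeffsIn _ hp, ?_⟩
    rw [toTensor_map_mul, ← e, ← hc, map_mul, smul_smul, smul_smul, mul_right_comm]

lemma exists_toBase_smul_eq_toTensor (y : K ⊗[k] F) :
    ∃ g ≠ 0, ∃ p, G.toBase g • y = G.toTensor p := by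
  obtain ⟨g, hg, p, _, h⟩ := G.exists_smul_eq_toTensor (W := ⊤) (y := y) (by simp)
  exact ⟨g, hg, p, h⟩

/-- The universal linear form, as an element of `K ⊗ F`. -/
noncomputable def tensorForm : K ⊗[k] F := G.toTensor (linearForm z)

lemma tensorForm_mem_baseChange :
    G.tensorForm ∈ (Submodule.span k (Set.range z)).baseChange K := by
  refine G.toTensor_mem_baseChange (sum_mem fun i _ => ?_)
  rw [C_mul_X_eq_monomial]
  exact monomial_mem_coeffsIn.2 (Submodule.subset_span ⟨i, rfl⟩)

lemma mem_baseChange_of_tensorForm_mul_mem {W U : Submodule k F}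
    (hU : ∀ q, linearForm z * q ∈ coeffsIn σ W → q ∈ coeffsIn σ U)
    {y : K ⊗[k] F} (h : G.tensorForm * y ∈ W.baseChange K) : y ∈ U.baseChange K := by
  obtain ⟨g, hg, q, hgq⟩ := G.exists_toBase_smul_eq_toTensor y
  obtain ⟨f, hf, p, hp, hfp⟩ := G.exists_smul_eq_toTensor h
  have heq : linearForm z * (map (algebraMap k F) f * q) = map (algebraMap k F) g * p := by
    refine G.toTensor_injective ?_
    rw [map_mul, toTensor_map_mul, toTensor_map_mul, ← hgq, ← hfp, ← tensorForm, mul_smul_comm,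
      mul_smul_comm, smul_comm]
  have hmem := G.toTensor_mem_baseChange
    (hU (map (algebraMap k F) f * q) (heq ▸ map_algebraMap_mul_mem_coeffsIn g hp))
  rwa [toTensor_map_mul, ← hgq, Submodule.smul_mem_iff _ (G.toBase_ne_zero hf),
    Submodule.smul_mem_iff _ (G.toBase_ne_zero hg)] at hmem

lemma mulLeft_tensorForm_injective (hz : z ≠ 0) :
    Function.Injective (LinearMap.mulLeft K G.tensorForm) := by
  refine LinearMap.ker_eq_bot.1 (LinearMap.ker_eq_bot'.2 fun y hy => ?_)
  suffices y ∈ (⊥ : Submodule k F).baseChange K by simpa using this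
  refine G.mem_baseChange_of_tensorForm_mul_mem (W := ⊥) (fun q hq => ?_) ?_
  · have hzero : linearForm z * q = 0 := ext _ _ fun β => by simpa using hq β
    rw [(mul_eq_zero.1 hzero).resolve_left (linearForm_ne_zero hz)]
    exact zero_mem _
  · rw [← LinearMap.mulLeft_apply (R := K), hy]
    exact zero_mem _

variable [Algebra k F'] [IsScalarTower k F F'] [IsScalarTower k K F']

lemma toSection_map (g : MvPolynomial σ k) :
    G.toSection (map (algebraMap k F) g) = algebraMap K F' (G.toBase g) := by
  have h : ((G.toSection.restrictScalars k).comp (mapAlgHom (Algebra.ofId k F))) =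
      (IsScalarTower.toAlgHom k K F').comp G.toBase := by
    ext i
    simp [G.toSection_X]
  exact DFunLike.congr_fun h g

lemma specialization_toTensor (p : MvPolynomial σ F) :
    specialization k F K F' (G.toTensor p) = G.toSection p := by
  induction p using MvPolynomial.induction_on' with
  | monomial α c =>
    have h := G.toSection_map (monomial α 1)
    rw [map_monomial, map_one] at h
    rw [toTensor_monomial, specialization_tmul, ← h, mul_comm, ← Algebra.smul_def, ← map_smul,
      smul_monomial, smul_eq_mul, mul_one]
  | add p q hp hq => simp only [map_add, hp, hq]

lemma specialization_tensorForm : specialization k F K F' G.tensorForm = 0 := by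
  rw [tensorForm, specialization_toTensor, ← RingHom.mem_ker, G.ker_toSection]
  exact Ideal.mem_span_singleton_self _

lemma exists_eq_tensorForm_mul {y : K ⊗[k] F} (hy : specialization k F K F' y = 0) :
    ∃ y', y = G.tensorForm * y' := by
  obtain ⟨g, hg, p, e⟩ := G.exists_toBase_smul_eq_toTensor y
  have hp : p ∈ RingHom.ker G.toSection := by
    rw [RingHom.mem_ker, ← specialization_toTensor, ← e, map_smul, hy, smul_zero]
  rw [G.ker_toSection, Ideal.mem_span_singleton] at hp
  obtain ⟨q, rfl⟩ := hp
  refine ⟨(G.toBase g)⁻¹ • G.toTensor q, ?_⟩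
  rw [mul_smul_comm, tensorForm, ← map_mul, ← e, inv_smul_smul₀ (G.toBase_ne_zero hg)]

lemma finrank_scalarExt_add_finrank_inf_ker {W : Submodule k F} (hW : W.FG) :
    Module.finrank K (scalarExt K F' W) + Module.finrank K
      (W.baseChange K ⊓ LinearMap.ker (specialization k F K F').toLinearMap :
        Submodule K (K ⊗[k] F)) = Module.finrank k W := by
  rw [scalarExt, finrank_map_add_finrank_inf_ker _ (fg_baseChange hW),
    finrank_baseChange_submodule]

include G in
lemma finrank_add_finrank_scalarExt_le (hz : z ≠ 0) {W U : Submodule k F} (hW : W.FG)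
    (h : Submodule.span k (Set.range z) * U ≤ W) :
    Module.finrank k U + Module.finrank K (scalarExt K F' W) ≤ Module.finrank k W := by
  rw [← finrank_scalarExt_add_finrank_inf_ker (K := K) (F' := F') hW, add_comm,
    ← finrank_baseChange_submodule (K := K) U,
    ← finrank_map_of_injective _ (G.mulLeft_tensorForm_injective hz)]
  have : Module.Finite K (W.baseChange K) := Module.Finite.iff_fg.2 (fg_baseChange hW)
  have : Module.Finite K (W.baseChange K ⊓ LinearMap.ker (specialization k F K F').toLinearMap :
    Submodule K (K ⊗[k] F)) := Submodule.finiteDimensional_of_le inf_le_left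
  refine Nat.add_le_add_left (Submodule.finrank_mono ?_) _
  rintro _ ⟨y, hy, rfl⟩
  refine ⟨Submodule.baseChange_mono K h ?_, ?_⟩
  · rw [baseChange_mul]
    exact Submodule.mul_mem_mul G.tensorForm_mem_baseChange hy
  · simp [LinearMap.mem_ker, G.specialization_tensorForm]

include G in
lemma finrank_le_finrank_scalarExt_add {W U : Submodule k F} (hW : W.FG) (hUf : U.FG)
    (hU : ∀ q, linearForm z * q ∈ coeffsIn σ W → q ∈ coeffsIn σ U) :
    Module.finrank k W ≤ Module.finrank K (scalarExt K F' W) + Module.finrank k U := by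
  rw [← finrank_scalarExt_add_finrank_inf_ker (K := K) (F' := F') hW,
    ← finrank_baseChange_submodule (K := K) U]
  have : Module.Finite K (U.baseChange K) := Module.Finite.iff_fg.2 (fg_baseChange hUf)
  refine Nat.add_le_add_left ((Submodule.finrank_mono ?_).trans
    (Submodule.finrank_map_le (LinearMap.mulLeft K G.tensorForm) _)) _
  rintro y ⟨hy, hy0⟩
  obtain ⟨y', rfl⟩ := G.exists_eq_tensorForm_mul hy0
  exact ⟨y', G.mem_baseChange_of_tensorForm_mul_mem hU hy, rfl⟩

variable {V : Submodule k F} (hV : V = Submodule.span k (Set.range z)) (t : ℕ)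
include G hV

lemma finrank_pow_add_finrank_scalarExt_pow_le (hz : z ≠ 0) :
    Module.finrank k (V ^ t : Submodule k F)
      + Module.finrank K (scalarExt K F' V ^ (t + 1) : Submodule K F')
      ≤ Module.finrank k (V ^ (t + 1) : Submodule k F) := by
  rw [← scalarExt_pow]
  refine G.finrank_add_finrank_scalarExt_le hz
    ((hV ▸ Submodule.fg_span (Set.finite_range z)).pow _) ?_
  rw [← hV, pow_succ']

lemma finrank_pow_succ_le (hs : (saturation V t).FG) :
    Module.finrank k (V ^ (t + 1) : Submodule k F) ≤
      Module.finrank K (scalarExt K F' V ^ (t + 1) : Submodule K F')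
        + Module.finrank k (saturation V t) := by
  rw [← scalarExt_pow]
  exact G.finrank_le_finrank_scalarExt_add ((hV ▸ Submodule.fg_span (Set.finite_range z)).pow _) hs
    fun q hq => mem_coeffsIn_saturation hV fun β => pow_le_saturation V _ (hq β)

-- The exact sequence `H⁰(𝒪(t)) → H⁰(𝒪(t + 1)) → H⁰(𝒪_H(t + 1))`.
lemma fg_saturation_succ_and_finrank_le (hs : (saturation V t).FG)
    (hs' : (saturation (scalarExt K F' V) (t + 1)).FG) :
    (saturation V (t + 1)).FG ∧ Module.finrank k (saturation V (t + 1)) ≤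
      Module.finrank K (saturation (scalarExt K F' V) (t + 1))
        + Module.finrank k (saturation V t) := by
  refine fg_and_finrank_le_of_forall_fg fun W hW hWf => ?_
  have : Module.Finite K (saturation (scalarExt K F' V) (t + 1)) := Module.Finite.iff_fg.2 hs'
  have hmono := Submodule.finrank_mono
    ((scalarExt_mono K F' hW).trans (scalarExt_saturation_le V (t + 1)))
  exact (G.finrank_le_finrank_scalarExt_add hWf hs fun q hq =>
    mem_coeffsIn_saturation hV fun β => hW (hq β)).trans (Nat.add_le_add_right hmono _)

lemma finrank_saturation_add_finrank_scalarExt_le (hz : z ≠ 0) (hs : (saturation V (t + 1)).FG) :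
    Module.finrank k (saturation V t) + Module.finrank K (scalarExt K F' (saturation V (t + 1)))
      ≤ Module.finrank k (saturation V (t + 1)) := by
  refine G.finrank_add_finrank_scalarExt_le hz hs ?_
  rw [← hV, add_comm]
  exact (mul_le_mul_left (le_saturation_one V) _).trans (saturation_mul_le V 1 t)

lemma saturation_succ_le_of_section
    (h : saturation (scalarExt K F' V) (t + 1) ≤ scalarExt K F' V ^ (t + 1)) :
    saturation V (t + 1) ≤ V ^ (t + 1) ⊔ V * saturation V t := by
  intro x hx
  obtain ⟨w, hw, hwx⟩ := scalarExt_pow K F' V (t + 1) ▸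
    h (scalarExt_saturation_le V _ (algebraMap_mem_scalarExt (K := K) (F' := F') hx))
  obtain ⟨y, hy⟩ := G.exists_eq_tensorForm_mul (y := (1 : K) ⊗ₜ[k] x - w) (by
    rw [map_sub, specialization_tmul, map_one, one_mul, ← hwx, AlgHom.toLinearMap_apply, sub_self])
  have hyV : y ∈ (saturation V t).baseChange K := by
    refine G.mem_baseChange_of_tensorForm_mul_mem (fun q => mem_coeffsIn_saturation hV) ?_
    rw [← hy]
    exact sub_mem (Submodule.tmul_mem_baseChange_of_mem _ hx)
      (Submodule.baseChange_mono K (pow_le_saturation V _) hw)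
  refine mem_of_one_tmul_mem_baseChange (K := K) ?_
  rw [← sub_add_cancel ((1 : K) ⊗ₜ[k] x) w, hy]
  refine add_mem (Submodule.baseChange_mono K le_sup_right ?_)
    (Submodule.baseChange_mono K le_sup_left hw)
  rw [baseChange_mul]
  exact Submodule.mul_mem_mul (hV ▸ G.tensorForm_mem_baseChange) hyV

end GenericSection

end HyperplaneSection

section Existence

open MvPolynomial
open scoped Pointwise

lemma isIntegral_of_pow_mul_le_saturation {k F : Type*} [Field k] [Field F] [Algebra k F]
    {V : Submodule k F} (hV : V.FG) (h1 : (1 : F) ∈ V) {c : F} (hc : c ≠ 0) {n : ℕ}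
    (h : V ^ (n + 1) * Submodule.span k {c} ≤ saturation V n) {x : F} (hx : x ∈ V) :
    IsIntegral k x := by
  obtain ⟨m, hm⟩ := exists_mul_pow_le ((hV.pow _).mul (Submodule.fg_span_singleton c)) h
  have hle : c • V ^ (n + 1 + m) ≤ V ^ (m + n) := by
    rw [← Submodule.span_singleton_mul, pow_add, ← mul_assoc, mul_comm (Submodule.span k _)]
    exact hm m le_rfl
  have : Module.Finite k (V ^ (m + n) : Submodule k F) := Module.Finite.iff_fg.2 (hV.pow _)
  have : Module.Finite k (V ^ (n + 1 + m) : Submodule k F) := Module.Finite.iff_fg.2 (hV.pow _)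
  have heq : V ^ (m + n) = V ^ (n + 1 + m) :=
    Submodule.eq_of_le_of_finrank_le (pow_le_pow_right' (Submodule.one_le.2 h1) (by omega))
      (finrank_smul hc (V ^ (n + 1 + m)) ▸ Submodule.finrank_mono hle)
  refine isIntegral_of_mem_saturation_zero hV h1
    (le_saturation_of_mul_pow_le (n := m + n) ?_ hx)
  rw [← pow_succ', add_zero, heq, show m + n + 1 = n + 1 + m by ring]

variable {F ι : Type*} [CommRing F] [Fintype ι] (z : Option ι → F)

/-- The substitution of `-∑ i, z i * X i` for the variable `X none`. When `z none = 1` it identifies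
the quotient by the universal linear form with a polynomial ring. -/
noncomputable def substNone : MvPolynomial (Option ι) F →ₐ[F] MvPolynomial ι F :=
  aeval fun o => o.elim (-∑ i, C (z (some i)) * X i) X

@[simp]
lemma substNone_X_some (i : ι) : substNone z (X (some i)) = X i := by simp [substNone]

lemma substNone_rename_some (p : MvPolynomial ι F) : substNone z (rename some p) = p := by
  have h : (substNone z).comp (rename some) = AlgHom.id F _ := by ext i; simp
  exact AlgHom.congr_fun h p

variable {z}

lemma ker_substNone (hz : z none = 1) :
    RingHom.ker (substNone z) = Ideal.span {linearForm z} := by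
  have hform : linearForm z = X none + ∑ i, C (z (some i)) * X (some i) := by
    rw [linearForm, Fintype.sum_option, hz, map_one, one_mul]
  refine le_antisymm (fun p hp => ?_) ((Ideal.span_singleton_le_iff_mem _).2 ?_)
  · set I := Ideal.span {linearForm z}
    have hcomp : ((Ideal.Quotient.mkₐ F I).comp (rename some)).comp (substNone z) =
        Ideal.Quotient.mkₐ F I := by
      ext o
      rcases o with _ | i
      · have hzero : Ideal.Quotient.mkₐ F I (linearForm z) = 0 :=
          Ideal.Quotient.eq_zero_iff_mem.2 (Ideal.mem_span_singleton_self _)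
        rw [hform, map_add, map_sum] at hzero
        simpa [substNone, rename_C] using (eq_neg_of_add_eq_zero_left hzero).symm
      · simp
    have hp' := AlgHom.congr_fun hcomp p
    rw [AlgHom.comp_apply, (RingHom.mem_ker).1 hp, map_zero] at hp'
    exact Ideal.Quotient.eq_zero_iff_mem.1 hp'.symm
  · rw [RingHom.mem_ker, hform]
    simp [substNone, ← algebraMap_eq]

section Field

variable {k F ι : Type*} [Field k] [Field F] [Algebra k F] [Fintype ι] {z : Option ι → F}

-- A relation `g` over `k` would be a multiple of the linear form, with all coefficients in
-- degree `0` of the saturation, so that the Dedekind–Mertens argument makes all `z i` algebraic.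
lemma substNone_map_injective (hz : z none = 1) {i : Option ι} (hi : Transcendental k (z i)) :
    Function.Injective fun g => substNone z (map (algebraMap k F) g) := by
  refine (injective_iff_map_eq_zero ((substNone z).toRingHom.comp (map (algebraMap k F)))).2
    fun g hg => ?_
  by_contra hg0
  have hker : map (algebraMap k F) g ∈ RingHom.ker (substNone z) := hg
  rw [ker_substNone hz, Ideal.mem_span_singleton] at hker
  obtain ⟨q, hq⟩ := hker
  have hq0 : q ≠ 0 := by
    rintro rfl
    exact hg0 (map_injective _ (algebraMap k F).injective (by rw [hq, mul_zero, map_zero]))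
  obtain ⟨α, hα⟩ := ne_zero_iff.1 hq0
  obtain ⟨n, hn⟩ := exists_pow_mul_span_coeff_le_saturation (k := k) rfl (t := 0) (q := q)
    (fun β => by
      rw [← hq, coeff_map]
      exact pow_le_saturation _ 0 (by simp)) α
  exact hi (isIntegral_of_pow_mul_le_saturation (Submodule.fg_span (Set.finite_range z))
    (hz ▸ Submodule.subset_span ⟨none, rfl⟩) hα hn (Submodule.subset_span ⟨i, rfl⟩)).isAlgebraic

/-- The generic section built from fraction fields of polynomial rings, in coordinates with
`z none = 1`. -/
noncomputable def GenericSection.ofIsFractionRing {K F' : Type*} [Field K] [Field F']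
    [Algebra k K] [Algebra F F'] [Algebra K F'] [Algebra (MvPolynomial (Option ι) k) K]
    [Algebra (MvPolynomial ι F) F'] [IsScalarTower k (MvPolynomial (Option ι) k) K]
    [IsScalarTower F (MvPolynomial ι F) F'] [IsFractionRing (MvPolynomial (Option ι) k) K]
    [IsFractionRing (MvPolynomial ι F) F'] (hz : z none = 1)
    (hcompat : ∀ p : MvPolynomial (Option ι) k, algebraMap K F' (algebraMap _ K p) =
      algebraMap _ F' (substNone z (map (algebraMap k F) p))) : GenericSection k F K F' z where
  toBase := IsScalarTower.toAlgHom k (MvPolynomial (Option ι) k) K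
  toSection := (IsScalarTower.toAlgHom F (MvPolynomial ι F) F').comp (substNone z)
  toBase_injective := IsFractionRing.injective (MvPolynomial (Option ι) k) K
  exists_toBase_mul_eq x := by
    obtain ⟨p, q, hq, rfl⟩ := IsFractionRing.div_surjective (A := MvPolynomial (Option ι) k) x
    exact ⟨p, q, nonZeroDivisors.ne_zero hq, mul_div_cancel₀ _ (by simpa using hq)⟩
  toSection_X i := by simp [hcompat]
  ker_toSection := by
    rw [← ker_substNone hz]
    ext p
    simp [RingHom.mem_ker]
  exists_toSection_mul_eq x := by
    obtain ⟨p, q, hq, rfl⟩ := IsFractionRing.div_surjective (A := MvPolynomial ι F) x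
    refine ⟨rename some p, rename some q, ?_, ?_⟩ <;>
      simp only [AlgHom.comp_apply, substNone_rename_some, IsScalarTower.coe_toAlgHom']
    · simpa using hq
    · exact mul_div_cancel₀ _ (by simpa using hq)

end Field

theorem exists_genericSection {k F ι : Type u} [Field k] [Field F] [Algebra k F] [Fintype ι]
    {z : Option ι → F} (hz : z none = 1) {i : Option ι} (hi : Transcendental k (z i)) :
    ∃ (K F' : Type u) (_ : Field K) (_ : Field F') (_ : Algebra k K) (_ : Algebra K F')
      (_ : Algebra F F') (_ : Algebra k F') (_ : IsScalarTower k F F') (_ : IsScalarTower k K F')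
      (G : GenericSection k F K F' z),
      AlgebraicIndependent F fun i : ι => G.toSection (X (some i)) := by
  let K := FractionRing (MvPolynomial (Option ι) k)
  let F' := FractionRing (MvPolynomial ι F)
  have hinj := IsFractionRing.injective (MvPolynomial ι F) F'
  let f : MvPolynomial (Option ι) k →+* F' := (algebraMap (MvPolynomial ι F) F').comp
    ((substNone z).toRingHom.comp (map (algebraMap k F)))
  have hf : Function.Injective f := hinj.comp (substNone_map_injective hz hi)
  let _ : Algebra K F' := (IsFractionRing.lift hf : K →+* F').toAlgebra
  have hcompat (p : MvPolynomial (Option ι) k) : algebraMap K F' (algebraMap _ K p) = f p :=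
    IsFractionRing.lift_algebraMap hf p
  have htower : IsScalarTower k K F' := IsScalarTower.of_algebraMap_eq fun c => by
    rw [IsScalarTower.algebraMap_apply k (MvPolynomial (Option ι) k) K, hcompat,
      IsScalarTower.algebraMap_apply k F F', IsScalarTower.algebraMap_apply F (MvPolynomial ι F) F']
    simp [f, algebraMap_eq]
  refine ⟨K, F', inferInstance, inferInstance, inferInstance, inferInstance, inferInstance,
    inferInstance, inferInstance, htower, .ofIsFractionRing hz hcompat, ?_⟩
  have hX : (fun i => GenericSection.toSection (.ofIsFractionRing (K := K) (F' := F') hz hcompat)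
      (X (some i))) = fun i => algebraMap (MvPolynomial ι F) F' (X i) := by
    funext i
    simp [GenericSection.ofIsFractionRing]
  rw [hX]
  exact (algebraicIndependent_X ι F).map' (f := IsScalarTower.toAlgHom F (MvPolynomial ι F) F') hinj

end Existence

/-! ### Growth of the powers of a subspace -/

section HilbertFunctionStep

open Module

variable {K A L : Type*} [Field K] [CommRing A] [Algebra K A] [Field L] [Algebra K L]
  (ρ : A →ₐ[K] L)

lemma pow_add_two_le_of_map_eq_top {U : Submodule K A} {l : A} {t : ℕ} (h1 : 1 ∈ U)
    (hsur : (U ^ t).map ρ.toLinearMap = ⊤)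
    (hker : ∀ b ∈ U ^ (t + 1), ρ b = 0 → ∃ c ∈ U ^ t, b = l * c) :
    U ^ (t + 2) ≤ (U ^ (t + 1)).map (LinearMap.mulLeft K l) ⊔ U ^ (t + 1) := by
  rw [pow_succ' U (t + 1), Submodule.mul_le]
  intro a ha b hb
  obtain ⟨b', hb', e⟩ : ρ b ∈ (U ^ t).map ρ.toLinearMap := hsur ▸ Submodule.mem_top
  have hb'' : b' ∈ U ^ (t + 1) := pow_le_pow_right' (Submodule.one_le.2 h1) t.le_succ hb'
  obtain ⟨c, hc, hbc⟩ := hker (b - b') (sub_mem hb hb'')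
    (by rw [map_sub, sub_eq_zero]; exact e.symm)
  rw [show a * b = l * (a * c) + a * b' by linear_combination a * hbc, pow_succ']
  exact add_mem (Submodule.mem_sup_left ⟨a * c, Submodule.mul_mem_mul ha hc, rfl⟩)
    (Submodule.mem_sup_right (Submodule.mul_mem_mul ha hb'))

lemma exists_apply_mul_eq [FiniteDimensional K L] {τ : L →ₗ[K] K} (hτ : τ ≠ 0)
    {U W : Submodule K A} (hsur : W.map ρ.toLinearMap = ⊤) {ψ : A →ₗ[K] K}
    (hψ : ∀ x ∈ U, ∀ b ∈ W, ρ b = 0 → ψ (x * b) = 0) :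
    ∃ c : A →ₗ[K] L, ∀ x ∈ U, ∀ b ∈ W, τ (c x * ρ b) = ψ (x * b) := by
  obtain ⟨s, hs⟩ := LinearMap.exists_rightInverse_of_surjective
    (ρ.toLinearMap.domRestrict W) (by rw [LinearMap.range_domRestrict, hsur])
  let g : A →ₗ[K] Module.Dual K L :=
    ((LinearMap.mul K A).compr₂ ψ).compl₂ (W.subtype.comp s)
  let e := LinearEquiv.ofInjectiveOfFinrankEq _ (compr₂_mul_injective hτ)
    Subspace.dual_finrank_eq.symm
  refine ⟨e.symm.toLinearMap.comp g, fun x hx b hb => ?_⟩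
  have he : e (e.symm (g x)) = g x := e.apply_symm_apply _
  have hsb : ρ (b - s (ρ b)) = 0 := by
    rw [map_sub, sub_eq_zero]
    exact (LinearMap.congr_fun hs (ρ b)).symm
  have hψb := hψ x hx _ (sub_mem hb (s (ρ b)).2) hsb
  rw [mul_sub, map_sub, sub_eq_zero] at hψb
  exact (LinearMap.congr_fun he (ρ b)).trans hψb.symm

lemma finrank_le_finrank_map_add {M N P : Type*} [AddCommGroup M] [Module K M] [AddCommGroup N]
    [Module K N] [AddCommGroup P] [Module K P] (f : M →ₗ[K] N) (g : M →ₗ[K] P)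
    {U : Submodule K M} (hU : U.FG) :
    finrank K U ≤ finrank K (U.map g) +
      finrank K ((U ⊓ LinearMap.ker g).map f) + finrank K ↥(U ⊓ LinearMap.ker f) := by
  have : FiniteDimensional K U := Module.Finite.iff_fg.2 hU
  have hfin : FiniteDimensional K ↥(U ⊓ LinearMap.ker g) :=
    Submodule.finiteDimensional_of_le inf_le_left
  have : FiniteDimensional K ↥(U ⊓ LinearMap.ker f) :=
    Submodule.finiteDimensional_of_le inf_le_left
  have hker : finrank K ↥(U ⊓ LinearMap.ker g ⊓ LinearMap.ker f) ≤
      finrank K ↥(U ⊓ LinearMap.ker f) :=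
    Submodule.finrank_mono (inf_le_inf_right _ inf_le_left)
  have hg := finrank_map_add_finrank_inf_ker g hU
  have hf := finrank_map_add_finrank_inf_ker f (Module.Finite.iff_fg.1 hfin)
  omega

lemma exists_eq_mul_of_map_eq_zero {U W : Submodule K A} {l : A} (hW : W.FG) (hl0 : ρ l = 0)
    (hinj : Function.Injective (LinearMap.mulLeft K l))
    (hlU : U.map (LinearMap.mulLeft K l) ≤ W) (hsur : W.map ρ.toLinearMap = ⊤)
    (hrank : finrank K W = finrank K U + finrank K L) {b : A} (hb : b ∈ W) (hb0 : ρ b = 0) :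
    ∃ c ∈ U, b = l * c := by
  have hker := finrank_map_add_finrank_inf_ker ρ.toLinearMap hW
  rw [hsur, finrank_top] at hker
  have : FiniteDimensional K W := Module.Finite.iff_fg.2 hW
  have : FiniteDimensional K ↥(W ⊓ LinearMap.ker ρ.toLinearMap) :=
    Submodule.finiteDimensional_of_le inf_le_left
  have hle : U.map (LinearMap.mulLeft K l) ≤ W ⊓ LinearMap.ker ρ.toLinearMap := by
    refine le_inf hlU ?_
    rintro _ ⟨x, -, rfl⟩
    simp [hl0]
  have heq : U.map (LinearMap.mulLeft K l) = W ⊓ LinearMap.ker ρ.toLinearMap :=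
    Submodule.eq_of_le_of_finrank_le hle (by rw [finrank_map_of_injective _ hinj]; omega)
  obtain ⟨c, hc, rfl⟩ := heq.ge ⟨hb, hb0⟩
  exact ⟨c, hc, rfl⟩

lemma map_inf_ker_mul_map_mul_map_le_ker {U : Submodule K A} {τ : L →ₗ[K] K} {ψ : A →ₗ[K] K}
    {c : A →ₗ[K] L} (hc : ∀ x ∈ U, ∀ b ∈ U ^ 2, τ (c x * ρ b) = ψ (x * b)) :
    (U ⊓ LinearMap.ker c).map ρ.toLinearMap * U.map c * U.map ρ.toLinearMap ≤
      LinearMap.ker τ := by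
  have hUU : ∀ {x y}, x ∈ U → y ∈ U → x * y ∈ U ^ 2 := fun hx hy =>
    pow_two U ▸ Submodule.mul_mem_mul hx hy
  rw [mul_assoc, Submodule.mul_le]
  rintro _ ⟨n, ⟨hnU, hnc⟩, rfl⟩ a ha
  refine Submodule.mul_induction_on ha ?_ fun a b ha hb => ?_
  · rintro _ ⟨x, hx, rfl⟩ _ ⟨y, hy, rfl⟩
    have hcomm : ρ n * (c x * ρ y) = c x * ρ (n * y) := by rw [map_mul, mul_left_comm]
    calc τ (ρ n * (c x * ρ y)) = ψ (n * (x * y)) := by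
          rw [hcomm, hc x hx _ (hUU hnU hy), mul_left_comm]
      _ = τ (c n * ρ (x * y)) := (hc n hnU _ (hUU hx hy)).symm
      _ = 0 := by rw [LinearMap.mem_ker.1 hnc, zero_mul, map_zero]
  · rw [mul_add]
    exact add_mem ha hb

variable [FiniteDimensional K L]

-- A functional `ψ` separating the two sides would be represented, through a functional `τ` on `L`,
-- by a linear map `c : U → L`. With `N = U ∩ ker c`, which contains `1`, the product `ρ N * c U`
-- is `τ`-orthogonal to `ρ U`, and is too large for that by the Cauchy-Davenport inequality.
lemma pow_three_le_of_map_eq_top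
    (hL : ∀ c : L, c ∉ Set.range (algebraMap K L) → IntermediateField.adjoin K {c} = ⊤)
    {U : Submodule K A} {l : A} (hU : U.FG) (h1 : 1 ∈ U)
    (hker : ∀ b ∈ U ^ 2, ρ b = 0 → ∃ c ∈ U, b = l * c)
    (hsur : (U ^ 2).map ρ.toLinearMap = ⊤)
    (hρU : finrank K (U.map ρ.toLinearMap) + 1 = finrank K U)
    (hLU : finrank K L + 4 ≤ 2 * finrank K U) :
    U ^ 3 ≤ (U ^ 2).map (LinearMap.mulLeft K l) ⊔ U ^ 2 := by
  by_contra hnot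
  obtain ⟨w, hw, hwn⟩ := Set.not_subset.1 hnot
  obtain ⟨ψ, hψw, hψ⟩ := Submodule.exists_le_ker_of_notMem hwn
  have hUU : ∀ {x y}, x ∈ U → y ∈ U → x * y ∈ U ^ 2 := fun hx hy =>
    pow_two U ▸ Submodule.mul_mem_mul hx hy
  obtain ⟨τ, hτ⟩ : ∃ τ : L →ₗ[K] K, τ ≠ 0 := exists_ne _
  obtain ⟨c, hc⟩ : ∃ c : A →ₗ[K] L, ∀ x ∈ U, ∀ b ∈ U ^ 2, τ (c x * ρ b) = ψ (x * b) := by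
    refine exists_apply_mul_eq ρ hτ hsur fun x hx b hb hb0 => ?_
    obtain ⟨a, ha, rfl⟩ := hker b hb hb0
    rw [mul_left_comm]
    exact hψ (Submodule.mem_sup_left ⟨x * a, hUU hx ha, rfl⟩)
  have hcU : U.map c ≠ ⊥ := by
    intro h0
    have hle : U ^ 3 ≤ LinearMap.ker ψ := by
      rw [pow_succ' U 2, Submodule.mul_le]
      intro x hx b hb
      have hcx : c x = 0 := (Submodule.eq_bot_iff _).1 h0 _ ⟨x, hx, rfl⟩
      rw [LinearMap.mem_ker, ← hc x hx b hb, hcx, zero_mul, map_zero]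
    exact hψw (hle hw)
  have hc1 : c 1 = 0 := by
    refine compr₂_mul_injective hτ (LinearMap.ext fun y => ?_)
    obtain ⟨b, hb, rfl⟩ : y ∈ (U ^ 2).map ρ.toLinearMap := hsur ▸ Submodule.mem_top
    simpa [hc 1 h1 b hb] using hψ (Submodule.mem_sup_right hb)
  have hN : (U ⊓ LinearMap.ker c).map ρ.toLinearMap ≠ ⊥ := fun h0 =>
    one_ne_zero ((Submodule.eq_bot_iff _).1 h0 1 ⟨1, ⟨h1, hc1⟩, map_one ρ⟩)
  have horth := map_inf_ker_mul_map_mul_map_le_ker ρ hc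
  have hcd := min_finrank_le_finrank_mul hL hN hcU
  have hdim := finrank_add_finrank_le_of_le_ker hτ horth
  have hcount := finrank_le_finrank_map_add ρ.toLinearMap c hU
  have hUker := finrank_map_add_finrank_inf_ker ρ.toLinearMap hU
  omega

lemma finrank_pow_add_two_le
    (hL : ∀ c : L, c ∉ Set.range (algebraMap K L) → IntermediateField.adjoin K {c} = ⊤)
    {U : Submodule K A} {l : A} (hU : U.FG) (h1 : 1 ∈ U) (hl : l ∈ U) (hl0 : ρ l = 0)
    (hinj : Function.Injective (LinearMap.mulLeft K l))
    (hsur : (U ^ 2).map ρ.toLinearMap = ⊤)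
    (hρU : finrank K (U.map ρ.toLinearMap) + 1 = finrank K U)
    (hLU : finrank K L + 4 ≤ 2 * finrank K U) {t : ℕ} (ht : 1 ≤ t)
    (heq : finrank K ↥(U ^ (t + 1)) = finrank K ↥(U ^ t) + finrank K L) :
    finrank K ↥(U ^ (t + 2)) ≤ finrank K ↥(U ^ (t + 1)) + finrank K L := by
  have hmono {m n : ℕ} (h : m ≤ n) : U ^ m ≤ U ^ n :=
    pow_le_pow_right' (Submodule.one_le.2 h1) h
  have hfin (n : ℕ) : FiniteDimensional K ↥(U ^ n) := Module.Finite.iff_fg.2 (hU.pow n)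
  have hsurj {n : ℕ} (hn : 2 ≤ n) : (U ^ n).map ρ.toLinearMap = ⊤ :=
    eq_top_iff.2 (hsur ▸ Submodule.map_mono (hmono hn))
  have hlmul : (U ^ t).map (LinearMap.mulLeft K l) ≤ U ^ (t + 1) := by
    rintro _ ⟨x, hx, rfl⟩
    exact pow_succ' U t ▸ Submodule.mul_mem_mul hl hx
  have hker : ∀ b ∈ U ^ (t + 1), ρ b = 0 → ∃ c ∈ U ^ t, b = l * c := fun b hb hb0 =>
    exists_eq_mul_of_map_eq_zero ρ (hU.pow _) hl0 hinj hlmul (hsurj (by omega)) heq hb hb0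
  have hsup : U ^ (t + 2) ≤ (U ^ (t + 1)).map (LinearMap.mulLeft K l) ⊔ U ^ (t + 1) := by
    obtain rfl | h : t = 1 ∨ 2 ≤ t := by omega
    · rw [pow_one] at hker
      exact pow_three_le_of_map_eq_top ρ hL hU h1 hker hsur hρU hLU
    · exact pow_add_two_le_of_map_eq_top ρ h1 (hsurj h) hker
  have hinf : (U ^ t).map (LinearMap.mulLeft K l) ≤
      (U ^ (t + 1)).map (LinearMap.mulLeft K l) ⊓ U ^ (t + 1) :=
    le_inf (Submodule.map_mono (hmono t.le_succ)) hlmul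
  have hdim := Submodule.finrank_sup_add_finrank_inf_eq
    ((U ^ (t + 1)).map (LinearMap.mulLeft K l)) (U ^ (t + 1))
  have hsup_le := Submodule.finrank_mono hsup
  have hinf_le := Submodule.finrank_mono hinf
  rw [finrank_map_of_injective _ hinj] at hdim hinf_le
  omega

end HilbertFunctionStep

/-! ### Generic pairs of points -/

section TensorDomain

open TensorProduct

variable {k A B : Type*} [Field k]

lemma exists_algHom_apply_ne_zero [IsAlgClosed k] [CommRing A] [IsDomain A] [Algebra k A]
    [Algebra.FiniteType k A] {a : A} (ha : a ≠ 0) : ∃ χ : A →ₐ[k] k, χ a ≠ 0 := by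
  let S := Localization.Away a
  have : Algebra.FiniteType A S := IsLocalization.finiteType_of_monoid_fg (Submonoid.powers a) S
  have : Algebra.FiniteType k S := Algebra.FiniteType.trans (S := A) inferInstance inferInstance
  have ha' : IsUnit (algebraMap A S a) := IsLocalization.Away.algebraMap_isUnit a
  have : Nontrivial S := (IsLocalization.injective S
    (powers_le_nonZeroDivisors_of_noZeroDivisors ha)).nontrivial
  obtain ⟨m, _⟩ := Ideal.exists_maximal S
  let _ : Field (S ⧸ m) := Ideal.Quotient.field m
  have : Module.Finite k (S ⧸ m) := finite_of_finite_type_of_isJacobsonRing k (S ⧸ m)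
  let e : k ≃ₐ[k] (S ⧸ m) := AlgEquiv.ofBijective (Algebra.ofId k (S ⧸ m))
    IsAlgClosed.algebraMap_bijective_of_isIntegral
  let f : S →ₐ[k] k := e.symm.toAlgHom.comp (Ideal.Quotient.mkₐ k m)
  exact ⟨f.comp (IsScalarTower.toAlgHom k A S), (ha'.map f).ne_zero⟩

variable [CommRing A] [Algebra k A] [CommRing B] [Algebra k B]

lemma exists_fg_subalgebra_of_finite {s : Set (A ⊗[k] B)} (hs : s.Finite) :
    ∃ A' : Subalgebra k A, A'.FG ∧
      s ⊆ Set.range (Algebra.TensorProduct.map A'.val (AlgHom.id k B)) := by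
  obtain ⟨M, hM, hsM⟩ := TensorProduct.exists_finite_submodule_left_of_setFinite s hs
  obtain ⟨t, rfl⟩ := Module.Finite.iff_fg.1 hM
  refine ⟨Algebra.adjoin k t, Subalgebra.fg_adjoin_finset t, fun p hp => ?_⟩
  obtain ⟨q, rfl⟩ := hsM hp
  refine ⟨(Submodule.inclusion (Algebra.span_le_adjoin k (t : Set A))).rTensor B q, ?_⟩
  exact (LinearMap.rTensor_comp_apply B (Algebra.adjoin k (t : Set A)).val.toLinearMap _ q).symm

/-- The homomorphism `A ⊗ B → B` evaluating the left factor at a rational point `χ` of `A`. -/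
noncomputable def evalLeft (B : Type*) [CommRing B] [Algebra k B] (χ : A →ₐ[k] k) :
    A ⊗[k] B →ₐ[k] B :=
  Algebra.TensorProduct.lift ((Algebra.ofId k B).comp χ) (AlgHom.id k B) fun _ _ => .all _ _

lemma repr_evalLeft {ι : Type*} (b : Module.Basis ι k B) (χ : A →ₐ[k] k) (p : A ⊗[k] B) (i : ι) :
    b.repr (evalLeft B χ p) i = χ ((Algebra.TensorProduct.basis A b).repr p i) := by
  induction p using TensorProduct.induction_on with
  | zero => simp
  | tmul x y =>
    simpa [evalLeft, Algebra.ofId_apply, ← Algebra.commutes, ← Algebra.smul_def]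
      using mul_comm _ _
  | add p q hp hq => simp [hp, hq]

variable [IsAlgClosed k] [IsDomain A] [IsDomain B]

lemma noZeroDivisors_tensorProduct_of_finiteType [Algebra.FiniteType k A] :
    NoZeroDivisors (A ⊗[k] B) := by
  refine ⟨fun {p q} hpq => ?_⟩
  by_contra! hne
  let b := Module.Free.chooseBasis k B
  have exists_repr_ne_zero {p : A ⊗[k] B} (hp : p ≠ 0) :
      ∃ i, (Algebra.TensorProduct.basis A b).repr p i ≠ 0 := by
    by_contra! h
    exact hp (((Algebra.TensorProduct.basis A b).repr.map_eq_zero_iff).1 (Finsupp.ext h))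
  obtain ⟨i, hi⟩ := exists_repr_ne_zero hne.1
  obtain ⟨j, hj⟩ := exists_repr_ne_zero hne.2
  obtain ⟨χ, hχ⟩ := exists_algHom_apply_ne_zero (k := k) (mul_ne_zero hi hj)
  rw [map_mul, ← repr_evalLeft, ← repr_evalLeft] at hχ
  have hzero : evalLeft B χ p * evalLeft B χ q = 0 := by rw [← map_mul, hpq, map_zero]
  rcases mul_eq_zero.1 hzero with h | h <;> simp [h] at hχ

theorem isDomain_tensorProduct : IsDomain (A ⊗[k] B) := by
  have : Nontrivial (A ⊗[k] B) := inferInstance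
  suffices NoZeroDivisors (A ⊗[k] B) from NoZeroDivisors.to_isDomain _
  refine ⟨fun {p q} hpq => ?_⟩
  obtain ⟨A', hA', hsub⟩ := exists_fg_subalgebra_of_finite (Set.toFinite {p, q})
  obtain ⟨p, rfl⟩ := hsub (Set.mem_insert _ _)
  obtain ⟨q, rfl⟩ := hsub (Set.mem_insert_of_mem _ rfl)
  have : Algebra.FiniteType k A' := (Subalgebra.fg_iff_finiteType _).1 hA'
  have hinj : Function.Injective (Algebra.TensorProduct.map A'.val (AlgHom.id k B)) :=
    Module.Flat.rTensor_preserves_injective_linearMap (M := B) A'.val.toLinearMap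
      Subtype.val_injective
  have := noZeroDivisors_tensorProduct_of_finiteType (k := k) (A := A') (B := B)
  rw [← map_mul, map_eq_zero_iff _ hinj, mul_eq_zero] at hpq
  exact hpq.imp (by rintro rfl; exact map_zero _) (by rintro rfl; exact map_zero _)

end TensorDomain

section Pairs

open TensorProduct

lemma mem_range_algebraMap_of_tmul_one_eq {k F : Type*} [Field k] [CommRing F] [Algebra k F]
    [Nontrivial F] {y : F} (h : y ⊗ₜ[k] (1 : F) = 1 ⊗ₜ[k] y) : y ∈ Set.range (algebraMap k F) := by
  obtain ⟨g, hg⟩ := LinearMap.exists_leftInverse_of_injective (Algebra.linearMap k F)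
    (LinearMap.ker_eq_bot.2 (algebraMap k F).injective)
  have hg1 : g 1 = 1 := by simpa using LinearMap.congr_fun hg 1
  have := congrArg (fun q => TensorProduct.rid k F (LinearMap.lTensor F g q)) h
  simp only [LinearMap.lTensor_tmul, hg1, TensorProduct.rid_tmul, one_smul] at this
  exact ⟨g y, by rw [Algebra.algebraMap_eq_smul_one]; exact this.symm⟩

lemma isAlgebraic_adjoin_map {k A B δ : Type*} [Field k] [Field A] [CommRing B] [Nontrivial B]
    [Algebra k A] [Algebra k B] {x : δ → A} (hx : IsTranscendenceBasis k x) (h : A →ₐ[k] B)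
    {T : Set B} (hT : ∀ d, h (x d) ∈ T) (y : A) : IsAlgebraic (Algebra.adjoin k T) (h y) := by
  have hle : Algebra.adjoin k (Set.range x) ≤ (Algebra.adjoin k T).comap h :=
    Algebra.adjoin_le (by rintro _ ⟨d, rfl⟩; exact Algebra.subset_adjoin (hT d))
  let g : Algebra.adjoin k (Set.range x) →ₐ[k] Algebra.adjoin k T :=
    (h.comp (Algebra.adjoin k (Set.range x)).val).codRestrict _
      fun s => hle s.2
  exact (hx.isAlgebraic.isAlgebraic y).ringHom_of_comp_eq g h.toRingHom
    (fun s t e => Subtype.ext (h.toRingHom.injective (congrArg Subtype.val e))) rfl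

lemma injective_of_algebraicIndependent_comp {k D Ω κ : Type*} [Field k] [CommRing D] [IsDomain D]
    [CommRing Ω] [Algebra k D] [Algebra k Ω] {w : κ → D}
    [Algebra.IsAlgebraic (Algebra.adjoin k (Set.range w)) D] (g : D →ₐ[k] Ω)
    (h : AlgebraicIndependent k (g ∘ w)) : Function.Injective g := by
  rw [injective_iff_map_eq_zero]
  intro p hp
  by_contra hp0
  obtain ⟨q, hq0, p', hq⟩ :=
    (Algebra.IsAlgebraic.isAlgebraic (R := Algebra.adjoin k (Set.range w)) p).exists_nonzero_dvd
      (mem_nonZeroDivisors_of_ne_zero hp0)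
  obtain ⟨P, hP⟩ : ∃ P : MvPolynomial κ k, MvPolynomial.aeval w P = (q : D) :=
    (Algebra.adjoin_range_eq_range_aeval k w).le q.2
  have hgP : MvPolynomial.aeval (g ∘ w) P = 0 := by
    have hcomp := MvPolynomial.comp_aeval_apply w g P
    rw [hP, show (q : D) = p * p' from hq, map_mul, hp, zero_mul] at hcomp
    exact hcomp.symm
  have hP0 : P = 0 := (injective_iff_map_eq_zero _).1 h P hgP
  exact hq0 (Subtype.ext (by rw [← hP, hP0, map_zero]; rfl))

section FieldHoms

variable {k G Ω M : Type*} [Field k] [Field G] [Field Ω] [Field M] [Algebra k G] [Algebra k Ω]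
  [Algebra k M] {s : Set G}

lemma fieldRange_le_of_adjoin_eq_top (hs : IntermediateField.adjoin k s = ⊤) {b : G →ₐ[k] Ω}
    {E : IntermediateField k Ω} (h : ∀ x ∈ s, b x ∈ E) : b.fieldRange ≤ E := by
  rw [AlgHom.fieldRange_eq_map, ← hs, IntermediateField.adjoin_map, IntermediateField.adjoin_le_iff]
  rintro _ ⟨x, hx, rfl⟩
  exact h x hx

lemma algHom_ext_of_adjoin_eq_top (hs : IntermediateField.adjoin k s = ⊤) {a b : G →ₐ[k] Ω}
    (h : ∀ x ∈ s, a x = b x) : a = b := by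
  let E : IntermediateField k G :=
    (RingHom.eqLocusField (a : G →+* Ω) (b : G →+* Ω)).toIntermediateField
      fun c => (a.commutes c).trans (b.commutes c).symm
  have hE : IntermediateField.adjoin k s ≤ E := IntermediateField.adjoin_le_iff.2 h
  exact AlgHom.ext fun g => hE (hs ▸ IntermediateField.mem_top)

lemma exists_comp_eq_of_fieldRange_le {a : G →ₐ[k] Ω} {θ : M →ₐ[k] Ω}
    (h : a.fieldRange ≤ θ.fieldRange) : ∃ α : G →ₐ[k] M, θ.comp α = a := by
  let e : M ≃ₐ[k] θ.fieldRange := AlgEquiv.ofInjectiveField θ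
  refine ⟨e.symm.toAlgHom.comp (a.codRestrict θ.fieldRange.toSubalgebra fun g => h ⟨g, rfl⟩), ?_⟩
  ext g
  exact congrArg Subtype.val (e.apply_symm_apply ⟨a g, h ⟨g, rfl⟩⟩)

end FieldHoms

section Incident

variable {k F G Ω Ω' I ι : Type*} [Field k] [Field F] [Field G] [Field Ω] [Field Ω']
  [Algebra k F] [Algebra k G] [Algebra k Ω] [Algebra k Ω'] [Fintype ι]

/-- Two embeddings `a`, `j` of `G = F(u)` that agree on the coefficients `u m` of a family of
linear forms (without constant term) in the coordinates `z`, and on the values of these forms: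
geometrically, two points of the linear section with equations `u`. -/
structure IsIncident (z : ι → F) (f : F →ₐ[k] G) (u : I → ι → G) (a j : G →ₐ[k] Ω) : Prop where
  agree : ∀ m l, a (u m l) = j (u m l)
  lin : ∀ m, ∑ l, a (f (z l)) * a (u m l) = ∑ l, j (f (z l)) * j (u m l)

variable {z : ι → F} {f : F →ₐ[k] G} {u : I → ι → G} {a j a' j' : G →ₐ[k] Ω} {i : ι}

namespace IsIncident

lemma coeff_eq [DecidableEq ι] (h : IsIncident z f u a j) (hi : a (f (z i)) ≠ j (f (z i)))
    (m : I) :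
    a (u m i) = -(∑ l ∈ Finset.univ.erase i, (a (f (z l)) - j (f (z l))) * a (u m l)) /
      (a (f (z i)) - j (f (z i))) := by
  rw [eq_div_iff (sub_ne_zero.2 hi), eq_neg_iff_add_eq_zero, mul_comm,
    Finset.add_sum_erase _ (fun l => (a (f (z l)) - j (f (z l))) * a (u m l)) (Finset.mem_univ i)]
  simp only [sub_mul, Finset.sum_sub_distrib]
  rw [sub_eq_zero, h.lin]
  exact Finset.sum_congr rfl fun l _ => by rw [h.agree]

lemma comp_iff (θ : Ω →ₐ[k] Ω') :
    IsIncident z f u (θ.comp a) (θ.comp j) ↔ IsIncident z f u a j := by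
  constructor <;> intro h <;>
    refine ⟨fun m l => ?_, fun m => ?_⟩
  · exact θ.injective (h.agree m l)
  · exact θ.injective (by simpa only [map_mul, map_sum] using! h.lin m)
  · exact congrArg θ (h.agree m l)
  · simpa only [AlgHom.comp_apply, map_sum, map_mul] using congrArg θ (h.lin m)

variable (hG : IntermediateField.adjoin k
  (Set.range f ∪ Set.range fun p : I × ι => u p.1 p.2) = ⊤)

include hG

lemma fieldRange_le (h : IsIncident z f u a j) (hi : a (f (z i)) ≠ j (f (z i)))
    {E : IntermediateField k Ω} (ha : ∀ y, a (f y) ∈ E) (hj : ∀ y, j (f y) ∈ E)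
    (hu : ∀ m l, l ≠ i → a (u m l) ∈ E) : a.fieldRange ≤ E ∧ j.fieldRange ≤ E := by
  classical
  have hu' : ∀ m l, a (u m l) ∈ E := by
    intro m l
    by_cases hl : l = i
    · subst hl
      rw [h.coeff_eq hi]
      exact div_mem (neg_mem (sum_mem fun l hl => mul_mem (sub_mem (ha _) (hj _))
        (hu m l (Finset.ne_of_mem_erase hl)))) (sub_mem (ha _) (hj _))
    · exact hu m l hl
  constructor <;> refine fieldRange_le_of_adjoin_eq_top hG ?_ <;>
    rintro _ (⟨y, rfl⟩ | ⟨⟨m, l⟩, rfl⟩)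
  exacts [ha y, hu' m l, hj y, h.agree m l ▸ hu' m l]

lemma ext (h : IsIncident z f u a j) (h' : IsIncident z f u a' j')
    (hi : a (f (z i)) ≠ j (f (z i))) (ha : ∀ y, a (f y) = a' (f y)) (hj : ∀ y, j (f y) = j' (f y))
    (hu : ∀ m l, l ≠ i → a (u m l) = a' (u m l)) : a = a' ∧ j = j' := by
  classical
  have hu' : ∀ m l, a (u m l) = a' (u m l) := by
    intro m l
    by_cases hl : l = i
    · subst hl
      rw [h.coeff_eq hi, h'.coeff_eq (ha (z l) ▸ hj (z l) ▸ hi), ha, hj]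
      congr 2
      exact Finset.sum_congr rfl fun l' hl' => by
        rw [ha, hj, hu m l' (Finset.ne_of_mem_erase hl')]
    · exact hu m l hl
  constructor <;> refine algHom_ext_of_adjoin_eq_top hG ?_ <;>
    rintro _ (⟨y, rfl⟩ | ⟨⟨m, l⟩, rfl⟩)
  exacts [ha y, hu' m l, hj y, by rw [← h.agree, ← h'.agree]; exact hu' m l]

end IsIncident

end Incident

section PairEval

variable {k F J δ B : Type*} [Field k] [Field F] [CommRing B] [Algebra k F] [Algebra k B]
  (h₁ h₂ : F →ₐ[k] B) (v : J → B)

/-- The evaluation of polynomials with coefficients in `F ⊗ F` given by two points with values in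
`B` and values `v` of the variables. -/
noncomputable def pairEval : MvPolynomial J (F ⊗[k] F) →ₐ[k] B :=
  MvPolynomial.aevalTower (Algebra.TensorProduct.lift h₁ h₂ fun _ _ => Commute.all _ _) v

@[simp]
lemma pairEval_C_tmul (y y' : F) :
    pairEval h₁ h₂ v (MvPolynomial.C (y ⊗ₜ y')) = h₁ y * h₂ y' := by
  rw [pairEval, MvPolynomial.aevalTower_C, Algebra.TensorProduct.lift_tmul]

@[simp]
lemma pairEval_X (p : J) : pairEval h₁ h₂ v (MvPolynomial.X p) = v p :=
  MvPolynomial.aevalTower_X _ _ _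

variable {h₁ h₂ v} {x : δ → F}

/-- `F ⊗ F` is a domain, so the polynomial ring over it is an algebraic extension of the polynomial
ring in the two copies of `x` and the variables, on which the evaluation is injective. -/
lemma pairEval_injective [IsAlgClosed k] (hx : IsTranscendenceBasis k x)
    (hind : AlgebraicIndependent k (Sum.elim (Sum.elim (h₁ ∘ x) (h₂ ∘ x)) v)) :
    Function.Injective (pairEval h₁ h₂ v) := by
  have : IsDomain (F ⊗[k] F) := isDomain_tensorProduct
  let D := MvPolynomial J (F ⊗[k] F)
  let c : F ⊗[k] F →ₐ[k] D := IsScalarTower.toAlgHom k (F ⊗[k] F) D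
  let c₁ : F →ₐ[k] D := c.comp Algebra.TensorProduct.includeLeft
  let c₂ : F →ₐ[k] D := c.comp Algebra.TensorProduct.includeRight
  let w : (δ ⊕ δ) ⊕ J → D := Sum.elim (Sum.elim (c₁ ∘ x) (c₂ ∘ x)) MvPolynomial.X
  have hcomp : pairEval h₁ h₂ v ∘ w = Sum.elim (Sum.elim (h₁ ∘ x) (h₂ ∘ x)) v := by
    funext q
    rcases q with (d | d) | p
    · exact (pairEval_C_tmul h₁ h₂ v (x d) 1).trans (by simp)
    · exact (pairEval_C_tmul h₁ h₂ v 1 (x d)).trans (by simp)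
    · exact pairEval_X h₁ h₂ v p
  have hw₁ : ∀ d, c₁ (x d) ∈ Set.range w := fun d => ⟨.inl (.inl d), rfl⟩
  have hw₂ : ∀ d, c₂ (x d) ∈ Set.range w := fun d => ⟨.inl (.inr d), rfl⟩
  have hC : ∀ y : F ⊗[k] F, IsAlgebraic (Algebra.adjoin k (Set.range w)) (c y) := by
    intro y
    induction y using TensorProduct.induction_on with
    | zero => rw [map_zero]; exact isAlgebraic_zero
    | tmul y y' =>
      rw [← mul_one y, ← one_mul y', ← Algebra.TensorProduct.tmul_mul_tmul, map_mul]
      exact (isAlgebraic_adjoin_map hx c₁ hw₁ y).mul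
        (isAlgebraic_adjoin_map hx c₂ hw₂ y')
    | add y y' hy hy' => rw [map_add]; exact hy.add hy'
  have : Algebra.IsAlgebraic (Algebra.adjoin k (Set.range w)) D := by
    refine ⟨fun p => ?_⟩
    induction p using MvPolynomial.induction_on with
    | C y => exact hC y
    | add p q hp hq => exact hp.add hq
    | mul_X p q hp => exact hp.mul (isAlgebraic_algebraMap
        (⟨_, Algebra.subset_adjoin ⟨.inr q, rfl⟩⟩ : Algebra.adjoin k (Set.range w)))
  exact injective_of_algebraicIndependent_comp _ (hcomp ▸ hind)

end PairEval

section GenericPair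

variable {k G I ι : Type*} {F Ω Ω' : Type u} [Field k] [Field F] [Field G] [Field Ω] [Field Ω']
  [Algebra k F] [Algebra k G] [Algebra k Ω] [Algebra k Ω'] [Fintype ι]

/-- Two points of the linear section with equations `u` which are as independent as the equations
allow: the compositum of `a` and `j` has at least the transcendence degree of two independent
generic points together with the coefficients of linear forms taking equal values at both. -/
structure IsGenericPair [Fintype I] (z : ι → F) (f : F →ₐ[k] G) (u : I → ι → G)
    (a j : G →ₐ[k] Ω) : Prop extends IsIncident z f u a j where
  alg : ∀ w : Ω, IsAlgebraic (Algebra.adjoin k (Set.range a ∪ Set.range j)) w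
  trdeg : 2 * Algebra.trdeg k F + (Fintype.card I * (Fintype.card ι - 1) : ℕ) ≤ Algebra.trdeg k Ω

variable {z : ι → F} {f : F →ₐ[k] G} {u : I → ι → G} {a j : G →ₐ[k] Ω} {i : ι}

namespace IsGenericPair

variable [Fintype I] (hG : IntermediateField.adjoin k
  (Set.range f ∪ Set.range fun p : I × ι => u p.1 p.2) = ⊤)

include hG

lemma algebraicIndependent [FinTrdeg k F] {δ : Type u} {x : δ → F}
    (hx : IsTranscendenceBasis k x) (h : IsGenericPair z f u a j) (hi : a (f (z i)) ≠ j (f (z i))) :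
    AlgebraicIndependent k (Sum.elim (Sum.elim (a.comp f ∘ x) (j.comp f ∘ x))
      fun p : I × {l // l ≠ i} => a (u p.1 p.2)) := by
  classical
  set w : (δ ⊕ δ) ⊕ I × {l // l ≠ i} → Ω := Sum.elim (Sum.elim (a.comp f ∘ x) (j.comp f ∘ x))
    fun p => a (u p.1 p.2)
  have : Finite δ := finite_of_isTranscendenceBasis hx
  let R := Algebra.adjoin k (Set.range w)
  let E : IntermediateField k Ω := ((Subalgebra.algebraicClosure R Ω).restrictScalars
    k).toIntermediateField fun _ h => IsAlgebraic.inv h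
  obtain ⟨ha, hj⟩ := h.fieldRange_le hG hi (E := E)
    (isAlgebraic_adjoin_map hx (a.comp f) fun d => ⟨.inl (.inl d), rfl⟩)
    (isAlgebraic_adjoin_map hx (j.comp f) fun d => ⟨.inl (.inr d), rfl⟩)
    (fun m l hl => isAlgebraic_algebraMap
      (⟨_, Algebra.subset_adjoin ⟨.inr (m, ⟨l, hl⟩), rfl⟩⟩ : R))
  have halg : Algebra.IsAlgebraic R Ω := ⟨fun y => (h.alg y).adjoin_of_forall_isAlgebraic (by
    rintro _ ⟨⟨g, rfl⟩ | ⟨g, rfl⟩, _⟩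
    exacts [ha ⟨g, rfl⟩, hj ⟨g, rfl⟩])⟩
  refine (Algebra.IsAlgebraic.isTranscendenceBasis_of_lift_le_trdeg_of_finite k w ?_).1
  refine le_trans (le_of_eq ?_) (Cardinal.lift_le.2 h.trdeg)
  simp [← hx.cardinalMk_eq_trdeg, two_mul, Fintype.card_subtype_compl]

variable [IsAlgClosed k] [FinTrdeg k F] (hz : IntermediateField.adjoin k (Set.range z) = ⊤)

include hz

lemma apply_ne (h : IsGenericPair z f u a j) (hne : a ≠ j)
    (hi : z i ∉ Set.range (algebraMap k F)) : a (f (z i)) ≠ j (f (z i)) := by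
  obtain ⟨δ, x, hx⟩ := exists_isTranscendenceBasis' k F
  obtain ⟨i₀, hi₀⟩ : ∃ i, a (f (z i)) ≠ j (f (z i)) := by
    by_contra! hcon
    have hf : a.comp f = j.comp f :=
      algHom_ext_of_adjoin_eq_top hz (by rintro _ ⟨l, rfl⟩; exact hcon l)
    refine hne (algHom_ext_of_adjoin_eq_top hG ?_)
    rintro _ (⟨y, rfl⟩ | ⟨p, rfl⟩)
    exacts [AlgHom.congr_fun hf y, h.agree _ _]
  have hinj := pairEval_injective hx (h.algebraicIndependent hG hx hi₀)
  intro he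
  have heval : (MvPolynomial.C (z i ⊗ₜ 1) : MvPolynomial (I × {l // l ≠ i₀}) (F ⊗[k] F)) =
      MvPolynomial.C (1 ⊗ₜ z i) := hinj (by simpa using he)
  exact hi (mem_range_algebraMap_of_tmul_one_eq (MvPolynomial.C_injective _ _ heval))

/-- The compositum of a generic pair of distinct points is the same for all pairs: it is the
function field of the variety of triples (point, point, linear section through both). -/
theorem apply_eq_of_apply_eq {a' j' : G →ₐ[k] Ω'} (h : IsGenericPair z f u a j)
    (h' : IsGenericPair z f u a' j') (hne : a ≠ j) (hne' : a' ≠ j')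
    (hi : z i ∉ Set.range (algebraMap k F)) {g : G} (hg : a g = j g) : a' g = j' g := by
  have : IsDomain (F ⊗[k] F) := isDomain_tensorProduct
  obtain ⟨δ, x, hx⟩ := exists_isTranscendenceBasis' k F
  have hc := h.apply_ne hG hz hne hi
  have hc' := h'.apply_ne hG hz hne' hi
  let D := MvPolynomial (I × {l // l ≠ i}) (F ⊗[k] F)
  let M := FractionRing D
  have hinj := pairEval_injective hx (h.algebraicIndependent hG hx hc)
  have hinj' := pairEval_injective hx (h'.algebraicIndependent hG hx hc')
  let θ : M →ₐ[k] Ω := IsFractionRing.liftAlgHom hinj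
  let θ' : M →ₐ[k] Ω' := IsFractionRing.liftAlgHom hinj'
  have hθ : ∀ p : D, θ (algebraMap D M p) = pairEval (a.comp f) (j.comp f) _ p :=
    IsFractionRing.lift_algebraMap hinj
  have hθ' : ∀ p : D, θ' (algebraMap D M p) = pairEval (a'.comp f) (j'.comp f) _ p :=
    IsFractionRing.lift_algebraMap hinj'
  have ha : ∀ y, θ (algebraMap D M (.C (y ⊗ₜ 1))) = a (f y) := fun y => by simp [hθ]
  have hj : ∀ y, θ (algebraMap D M (.C (1 ⊗ₜ y))) = j (f y) := fun y => by simp [hθ]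
  have hu : ∀ m l (hl : l ≠ i), θ (algebraMap D M (.X (m, ⟨l, hl⟩))) = a (u m l) :=
    fun m l hl => by simp [hθ]
  obtain ⟨hale, hjle⟩ := h.fieldRange_le hG hc (E := θ.fieldRange)
    (fun y => ⟨_, ha y⟩) (fun y => ⟨_, hj y⟩) (fun m l hl => ⟨_, hu m l hl⟩)
  obtain ⟨α, hα⟩ := exists_comp_eq_of_fieldRange_le hale
  obtain ⟨β, hβ⟩ := exists_comp_eq_of_fieldRange_le hjle
  have hinc : IsIncident z f u α β := (IsIncident.comp_iff θ).1 (hα ▸ hβ ▸ h.toIsIncident)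
  have hα' : ∀ {p y}, θ (algebraMap D M p) = a y →
      θ' (α y) = pairEval (a'.comp f) (j'.comp f) _ p :=
    fun {p y} hp => (congrArg θ' (θ.injective (hp.trans
      (DFunLike.congr_fun hα y).symm))).symm.trans (hθ' p)
  have hβ' : ∀ {p y}, θ (algebraMap D M p) = j y →
      θ' (β y) = pairEval (a'.comp f) (j'.comp f) _ p :=
    fun {p y} hp => (congrArg θ' (θ.injective (hp.trans
      (DFunLike.congr_fun hβ y).symm))).symm.trans (hθ' p)
  obtain ⟨ha', hj'⟩ := h'.toIsIncident.ext hG ((IsIncident.comp_iff θ').2 hinc) hc'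
    (fun y => by simp [hα' (ha y)]) (fun y => by simp [hβ' (hj y)])
    (fun m l hl => by simp [hα' (hu m l hl)])
  have hαβ : α g = β g := θ.injective
    ((DFunLike.congr_fun hα g).trans (hg.trans (DFunLike.congr_fun hβ g).symm))
  rw [ha', hj']
  exact congrArg θ' hαβ

end IsGenericPair

end GenericPair

end Pairs

section Coefficients

open MvPolynomial

lemma forall_mem_subfield_of_adjoin_eq_top {F A L : Type*} [Field F] [Field A] [Field L]
    [Algebra F A] {s : Set A} (hs : IntermediateField.adjoin F s = ⊤) (h : A →+* L)
    {E : Subfield L} (hF : ∀ y, h (algebraMap F A y) ∈ E) (hE : ∀ x ∈ s, h x ∈ E) (x : A) :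
    h x ∈ E := by
  let E' : IntermediateField F A := { E.comap h with algebraMap_mem' := hF }
  have hle : IntermediateField.adjoin F s ≤ E' := IntermediateField.adjoin_le_iff.2 hE
  exact hle (hs ▸ IntermediateField.mem_top)

namespace GenericSection

section Coef

variable {k K F F' ι : Type*} [Field k] [Field F] [Field K] [Field F'] [Algebra k F]
  [Algebra k K] [Algebra K F'] [Algebra F F'] [Fintype ι] {z : Option ι → F}
  (G : GenericSection k F K F' z)

/-- The coefficients of the generic linear form, as elements of the function field of the section;
in contrast to those over the base, they satisfy one linear relation over `F`. -/
noncomputable def coef (i : Option ι) : F' := G.toSection (X i)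

lemma coef_eq_algebraMap (i : Option ι) : G.coef i = algebraMap K F' (G.toBase (X i)) :=
  G.toSection_X i

lemma sum_mul_coef (hz : z none = 1) :
    ∑ i, algebraMap F F' (z (some i)) * G.coef (some i) = -G.coef none := by
  have h : G.toSection (linearForm z) = 0 :=
    RingHom.mem_ker.1 (G.ker_toSection ▸ Ideal.mem_span_singleton_self _)
  rw [linearForm, map_sum, Fintype.sum_option, hz, C_1, one_mul] at h
  rw [eq_neg_iff_add_eq_zero, add_comm, ← h]
  congr 1
  refine Finset.sum_congr rfl fun i _ => ?_
  rw [map_mul, ← MvPolynomial.algebraMap_eq, AlgHom.commutes]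
  rfl

section Map

variable {Ω : Type*} [CommRing Ω] {a j : F' →+* Ω}
  (h : ∀ c, a (algebraMap K F' c) = j (algebraMap K F' c))

include h

lemma map_coef_eq (i : Option ι) : a (G.coef i) = j (G.coef i) := by
  rw [coef_eq_algebraMap, h]

lemma sum_map_mul_map_coef_eq (hz : z none = 1) :
    ∑ i, a (algebraMap F F' (z (some i))) * a (G.coef (some i)) =
      ∑ i, j (algebraMap F F' (z (some i))) * j (G.coef (some i)) := by
  have hsum (b : F' →+* Ω) :
      ∑ i, b (algebraMap F F' (z (some i))) * b (G.coef (some i)) = -b (G.coef none) := by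
    simp only [← map_mul, ← map_sum, G.sum_mul_coef hz, map_neg]
  rw [hsum, hsum, G.map_coef_eq h]

end Map

lemma adjoin_coef_some_eq_top (hz : z none = 1) :
    IntermediateField.adjoin F (Set.range fun i => G.coef (some i)) = ⊤ := by
  set E := IntermediateField.adjoin F (Set.range fun i => G.coef (some i))
  have hs (i : ι) : G.coef (some i) ∈ E := IntermediateField.subset_adjoin _ _ ⟨i, rfl⟩
  have hcoef : ∀ i, G.coef i ∈ E
    | none => by
      rw [← neg_mem_iff, ← G.sum_mul_coef hz]
      exact sum_mem fun i _ => mul_mem (E.algebraMap_mem _) (hs i)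
    | some i => hs i
  have hE (p : MvPolynomial (Option ι) F) : G.toSection p ∈ E := by
    induction p using MvPolynomial.induction_on with
    | C y => rw [← MvPolynomial.algebraMap_eq, AlgHom.commutes]; exact E.algebraMap_mem y
    | add p q hp hq => rw [map_add]; exact add_mem hp hq
    | mul_X p i hp => rw [map_mul]; exact mul_mem hp (hcoef i)
  rw [eq_top_iff]
  rintro x -
  obtain ⟨p, q, hq, h⟩ := G.exists_toSection_mul_eq x
  rw [eq_div_of_mul_eq hq ((mul_comm _ _).trans h)]
  exact div_mem (hE p) (hE q)

end Coef

variable {k K F F' ι : Type u} [Field k] [Field F] [Field K] [Field F'] [Algebra k F]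
  [Algebra k K] [Algebra K F'] [Algebra F F'] [Fintype ι] {z : Option ι → F}
  (G : GenericSection k F K F' z)

lemma trdeg_add_le [Algebra k F'] [IsScalarTower k F F']
    (hind : AlgebraicIndependent F fun i => G.coef (some i)) :
    Algebra.trdeg k F + Fintype.card ι ≤ Algebra.trdeg k F' := by
  rw [← trdeg_add_eq k F (A := F')]
  gcongr
  rw [← Cardinal.mk_fintype]
  exact hind.cardinalMk_le_trdeg

include G in
lemma trdeg_base_le : Algebra.trdeg k K ≤ (Fintype.card ι + 1 : ℕ) := by
  let S := Set.range fun i => G.toBase (X i)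
  have hmem (p : MvPolynomial (Option ι) k) : G.toBase p ∈ Algebra.adjoin k S := by
    rw [MvPolynomial.aeval_unique G.toBase, Algebra.adjoin_range_eq_range_aeval]
    exact ⟨p, rfl⟩
  have : Algebra.IsAlgebraic (Algebra.adjoin k S) K := by
    refine ⟨fun x => ?_⟩
    obtain ⟨p, q, hq, h⟩ := G.exists_toBase_mul_eq x
    have halg (p : MvPolynomial (Option ι) k) : IsAlgebraic (Algebra.adjoin k S) (G.toBase p) :=
      isAlgebraic_algebraMap (⟨_, hmem p⟩ : Algebra.adjoin k S)
    rw [eq_div_of_mul_eq (G.toBase_ne_zero hq) ((mul_comm _ _).trans h), div_eq_mul_inv]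
    exact (halg p).mul (halg q).inv
  refine (Algebra.IsAlgebraic.trdeg_le_cardinalMk k S).trans (Cardinal.mk_range_le.trans ?_)
  rw [Cardinal.mk_fintype, Fintype.card_option]

lemma trdeg_le [Algebra k F'] [IsScalarTower k F F'] [IsScalarTower k K F']
    (hind : AlgebraicIndependent F fun i => G.coef (some i)) :
    Algebra.trdeg k F ≤ Algebra.trdeg K F' + 1 := by
  refine (Cardinal.add_le_add_iff_of_lt_aleph0
    (Cardinal.natCast_lt_aleph0 (n := Fintype.card ι))).1 ?_
  calc Algebra.trdeg k F + Fintype.card ι ≤ Algebra.trdeg k F' := G.trdeg_add_le hind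
    _ = Algebra.trdeg k K + Algebra.trdeg K F' := (trdeg_add_eq k K (A := F')).symm
    _ ≤ (Fintype.card ι + 1 : ℕ) + Algebra.trdeg K F' := by gcongr; exact G.trdeg_base_le
    _ = Algebra.trdeg K F' + 1 + Fintype.card ι := by push_cast; ring

end GenericSection

end Coefficients

/-! ### Two facts of Bertini type -/

section Monodromy

open MvPolynomial

/-- In characteristic zero the minimal polynomial of `x` has a root different from `b`. -/
lemma exists_algHom_apply_ne {K E Ω : Type*} [Field K] [CharZero K] [Field E] [Field Ω]
    [Algebra K E] [Algebra K Ω] [IsAlgClosed Ω] [Algebra.IsAlgebraic K E] {x : E}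
    (hx : x ∉ Set.range (algebraMap K E)) (b : Ω) : ∃ j : E →ₐ[K] Ω, j x ≠ b := by
  classical
  have hxint : IsIntegral K x := Algebra.IsIntegral.isIntegral x
  have hcard : 1 < ((minpoly K x).rootSet Ω).ncard := by
    rw [← Nat.card_coe_set_eq, Nat.card_eq_fintype_card, Polynomial.card_rootSet_eq_natDegree
      (minpoly.irreducible hxint).separable (IsAlgClosed.splits _)]
    exact (minpoly.two_le_natDegree_iff hxint).2 hx
  obtain ⟨y, hy, hyb⟩ := Set.exists_ne_of_one_lt_ncard hcard b
  obtain ⟨j, hj⟩ := IntermediateField.exists_algHom_of_splits_of_aeval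
    (fun s : E => ⟨Algebra.IsIntegral.isIntegral (R := K) s, IsAlgClosed.splits _⟩)
    (Polynomial.aeval_eq_zero_of_mem_rootSet hy)
  exact ⟨j, hj ▸ hyb⟩

lemma adjoin_range_comp_some_eq_top {k F ι : Type*} [Field k] [Field F] [Algebra k F]
    {z : Option ι → F} (hz₀ : z none = 1) (hz : IntermediateField.adjoin k (Set.range z) = ⊤) :
    IntermediateField.adjoin k (Set.range (z ∘ some)) = ⊤ := by
  rw [eq_top_iff, ← hz, IntermediateField.adjoin_le_iff]
  rintro _ ⟨_ | i, rfl⟩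
  · rw [hz₀]; exact one_mem _
  · exact IntermediateField.subset_adjoin _ _ ⟨i, rfl⟩

variable {k k₁ K F F₁ L ι : Type u} [Field k] [Field k₁] [Field K] [Field F] [Field F₁] [Field L]
  [Algebra k F] [Algebra k k₁] [Algebra k₁ F₁] [Algebra F F₁] [Algebra k₁ K] [Algebra K L]
  [Algebra F₁ L] [Fintype ι] {z : Option ι → F} (G₁ : GenericSection k F k₁ F₁ z)
  (G₂ : GenericSection k₁ F₁ K L (algebraMap F F₁ ∘ z))

/-- The coefficients, other than the constant ones, of the two linear forms that define a generic
linear section of codimension two. -/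
noncomputable def twoSectionCoef : Bool → ι → L
  | false, i => algebraMap F₁ L (G₁.coef (some i))
  | true, i => G₂.coef (some i)

section

variable [Algebra k F₁] [IsScalarTower k F F₁] [Algebra k L] [IsScalarTower k F₁ L]

variable (k F F₁ L) in
/-- The pullback of rational functions to the linear section. -/
noncomputable def twoSectionHom : F →ₐ[k] L :=
  (IsScalarTower.toAlgHom k F₁ L).comp (IsScalarTower.toAlgHom k F F₁)

lemma adjoin_twoSectionHom_union_twoSectionCoef_eq_top (hz₀ : z none = 1) :
    IntermediateField.adjoin k (Set.range (twoSectionHom k F F₁ L) ∪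
      Set.range fun p : Bool × ι => twoSectionCoef G₁ G₂ p.1 p.2) = ⊤ := by
  set E := IntermediateField.adjoin k (Set.range (twoSectionHom k F F₁ L) ∪
    Set.range fun p : Bool × ι => twoSectionCoef G₁ G₂ p.1 p.2)
  have hu (b : Bool) (i : ι) : twoSectionCoef G₁ G₂ b i ∈ E.toSubfield :=
    IntermediateField.subset_adjoin _ _ (.inr ⟨(b, i), rfl⟩)
  have hF₁ : ∀ y, algebraMap F₁ L y ∈ E.toSubfield :=
    forall_mem_subfield_of_adjoin_eq_top (G₁.adjoin_coef_some_eq_top hz₀) _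
      (fun y => IntermediateField.subset_adjoin _ _ (.inl ⟨y, rfl⟩))
      (by rintro _ ⟨i, rfl⟩; exact hu false i)
  have hL : ∀ y, RingHom.id L y ∈ E.toSubfield :=
    forall_mem_subfield_of_adjoin_eq_top (G₂.adjoin_coef_some_eq_top (by simp [hz₀])) _ hF₁
      (by rintro _ ⟨i, rfl⟩; exact hu true i)
  exact eq_top_iff.2 fun y _ => hL y

lemma isIncident_twoSectionCoef {Ω : Type*} [Field Ω] [Algebra k Ω] [Algebra k₁ L]
    [IsScalarTower k₁ F₁ L] [IsScalarTower k₁ K L] (hz₀ : z none = 1) {a j : L →ₐ[k] Ω}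
    (h : ∀ c, a (algebraMap K L c) = j (algebraMap K L c)) :
    IsIncident (z ∘ some) (twoSectionHom k F F₁ L) (twoSectionCoef G₁ G₂) a j := by
  let r : F₁ →+* L := algebraMap F₁ L
  have h₁ (c : k₁) : (a.toRingHom.comp r) (algebraMap k₁ F₁ c) =
      (j.toRingHom.comp r) (algebraMap k₁ F₁ c) := by
    have hc : r (algebraMap k₁ F₁ c) = algebraMap K L (algebraMap k₁ K c) := by
      rw [← IsScalarTower.algebraMap_apply k₁ K L, ← IsScalarTower.algebraMap_apply k₁ F₁ L]
    exact (congrArg a hc).trans ((h _).trans (congrArg j hc).symm)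
  refine ⟨?_, ?_⟩
  · rintro (_ | _) i
    exacts [G₁.map_coef_eq h₁ _, G₂.map_coef_eq (a := a.toRingHom) (j := j.toRingHom) h _]
  · rintro (_ | _)
    exacts [G₁.sum_map_mul_map_coef_eq h₁ hz₀, G₂.sum_map_mul_map_coef_eq (a := a.toRingHom)
      (j := j.toRingHom) h (by simp [hz₀])]

end

lemma trdeg_twoSection_le [Algebra k F₁] [IsScalarTower k F F₁] [Algebra k L]
    [IsScalarTower k F₁ L] [Nonempty ι]
    (hind₁ : AlgebraicIndependent F fun i => G₁.coef (some i))
    (hind₂ : AlgebraicIndependent F₁ fun i => G₂.coef (some i)) (hd : Algebra.trdeg k F ≤ 2) :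
    2 * Algebra.trdeg k F + (Fintype.card Bool * (Fintype.card ι - 1) : ℕ) ≤
      Algebra.trdeg k L := by
  have hcard : 2 + 2 * (Fintype.card ι - 1) = Fintype.card ι + Fintype.card ι := by
    have := Fintype.card_pos (α := ι)
    lia
  calc 2 * Algebra.trdeg k F + (Fintype.card Bool * (Fintype.card ι - 1) : ℕ)
      ≤ Algebra.trdeg k F + 2 + (2 * (Fintype.card ι - 1) : ℕ) := by
        rw [two_mul, Fintype.card_bool]
        gcongr
    _ = Algebra.trdeg k F + Fintype.card ι + Fintype.card ι := by
        rw [add_assoc, add_assoc]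
        congr 1
        exact_mod_cast hcard
    _ ≤ Algebra.trdeg k F₁ + Algebra.trdeg F₁ L := by
        gcongr
        · exact G₁.trdeg_add_le hind₁
        · rw [← Cardinal.mk_fintype]
          exact hind₂.cardinalMk_le_trdeg
    _ = Algebra.trdeg k L := trdeg_add_eq k F₁

/-- The monodromy of the points of a generic linear section of codimension two is doubly
transitive, so the extension `L / K` has no proper intermediate field. -/
theorem adjoin_simple_eq_top_of_section [IsAlgClosed k] [CharZero k] [Algebra k F₁]
    [IsScalarTower k F F₁] [Algebra k K] [Algebra k L] [Algebra k₁ L] [IsScalarTower k F₁ L]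
    [IsScalarTower k₁ F₁ L] [IsScalarTower k₁ K L] [IsScalarTower k K L]
    [Algebra.IsAlgebraic K L]
    (hind₁ : AlgebraicIndependent F fun i => G₁.coef (some i))
    (hind₂ : AlgebraicIndependent F₁ fun i => G₂.coef (some i)) (hz₀ : z none = 1)
    (hz : IntermediateField.adjoin k (Set.range z) = ⊤) {i : ι}
    (hi : z (some i) ∉ Set.range (algebraMap k F)) (hd : Algebra.trdeg k F ≤ 2) {c : L}
    (hc : c ∉ Set.range (algebraMap K L)) : IntermediateField.adjoin K {c} = ⊤ := by
  have : FinTrdeg k F := finTrdeg_iff_trdeg.2 (hd.trans_lt Cardinal.natCast_lt_aleph0)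
  have : CharZero K := charZero_of_injective_algebraMap (algebraMap k K).injective
  have : Nonempty ι := ⟨i⟩
  let Ω := AlgebraicClosure L
  let a : L →ₐ[K] Ω := IsScalarTower.toAlgHom K L Ω
  have hpair (j : L →ₐ[K] Ω) : IsGenericPair (z ∘ some) (twoSectionHom k F F₁ L)
      (twoSectionCoef G₁ G₂) (a.restrictScalars k) (j.restrictScalars k) := by
    refine ⟨isIncident_twoSectionCoef G₁ G₂ hz₀ fun c => (a.commutes c).trans (j.commutes c).symm,
      fun w => ?_, (trdeg_twoSection_le G₁ G₂ hind₁ hind₂ hd).trans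
        ((trdeg_add_eq k L (A := Ω)).symm ▸ le_self_add)⟩
    let B := Algebra.adjoin k (Set.range (a.restrictScalars k) ∪ Set.range (j.restrictScalars k))
    let g : L →ₐ[k] B := (a.restrictScalars k).codRestrict B
      fun s => Algebra.subset_adjoin (.inl ⟨s, rfl⟩)
    exact (Algebra.IsAlgebraic.isAlgebraic (R := L) w).ringHom_of_comp_eq g.toRingHom
      (RingHom.id Ω) g.toRingHom.injective rfl
  have hne {j : L →ₐ[K] Ω} {x : L} (h : j x ≠ a x) : a.restrictScalars k ≠ j.restrictScalars k :=
    fun h' => h (AlgHom.congr_fun h' x).symm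
  by_contra htop
  obtain ⟨y, hy⟩ : ∃ y : L, y ∉ IntermediateField.adjoin K {c} := by
    by_contra! h
    exact htop (eq_top_iff.2 fun y _ => h y)
  obtain ⟨j, hj⟩ := exists_algHom_apply_ne (K := IntermediateField.adjoin K {c}) (x := y)
    (by rintro ⟨w, rfl⟩; exact hy w.2) (a y)
  obtain ⟨j', hj'⟩ := exists_algHom_apply_ne hc (a c)
  have hjc : j c = a c := j.commutes ⟨c, IntermediateField.mem_adjoin_simple_self K c⟩
  exact hj' ((hpair (j.restrictScalars K)).apply_eq_of_apply_eq
    (adjoin_twoSectionHom_union_twoSectionCoef_eq_top G₁ G₂ hz₀)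
    (adjoin_range_comp_some_eq_top hz₀ hz) (hpair j') (hne hj) (hne hj') hi hjc.symm).symm

end Monodromy

section GeometricIrreducibility

open Polynomial

lemma exists_algHom_extending {k E F Ω ι : Type*} [Field k] [Field E] [Field F] [Field Ω]
    [Algebra k E] [Algebra E F] [Algebra k F] [IsScalarTower k E F] [Algebra k Ω] [IsAlgClosed Ω]
    [Algebra.IsAlgebraic k E] {x : ι → F} (hx : IsTranscendenceBasis k x) {X : ι → Ω}
    (hX : AlgebraicIndependent k X) (j₀ : E →ₐ[k] Ω) :
    ∃ j : F →ₐ[k] Ω, (∀ e, j (algebraMap E F e) = j₀ e) ∧ ∀ i, j (x i) = X i := by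
  let _ : Algebra E Ω := j₀.toAlgebra
  have : IsScalarTower k E Ω := IsScalarTower.of_algHom j₀
  have hxE : AlgebraicIndependent E x := hx.1.extendScalars E
  let A := Algebra.adjoin E (Set.range x)
  let g : A →ₐ[E] Ω := (MvPolynomial.aeval X).comp hxE.aevalEquiv.symm.toAlgHom
  have hXE : Function.Injective (MvPolynomial.aeval X : MvPolynomial ι E →ₐ[E] Ω) :=
    hX.extendScalars E
  have hg : Function.Injective g := hXE.comp hxE.aevalEquiv.symm.injective
  have hgx (i : ι) : g ⟨x i, Algebra.subset_adjoin ⟨i, rfl⟩⟩ = X i := by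
    have : (⟨x i, Algebra.subset_adjoin ⟨i, rfl⟩⟩ : A) = hxE.aevalEquiv (.X i) :=
      Subtype.ext (by simp)
    simp [g, this]
  let _ : Algebra A Ω := g.toAlgebra
  have : Module.IsTorsionFree A Ω := Module.isTorsionFree_iff_algebraMap_injective.2 hg
  have hle : Algebra.adjoin k (Set.range x) ≤ A.restrictScalars k :=
    Algebra.adjoin_le Algebra.subset_adjoin
  have : Algebra.IsAlgebraic A F :=
    have := hx.isAlgebraic
    Algebra.IsAlgebraic.ringHom_of_comp_eq (Subalgebra.inclusion hle).toRingHom (RingHom.id F)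
      (Subalgebra.inclusion_injective hle) Function.surjective_id rfl
  let j : F →ₐ[A] Ω := IsAlgClosed.lift
  have hjE (e : E) : j (algebraMap E F e) = j₀ e :=
    (j.commutes (algebraMap E A e)).trans (g.commutes e)
  refine ⟨{ j.toRingHom with commutes' := fun c => ?_ }, hjE, fun i => ?_⟩
  · exact (congrArg j (IsScalarTower.algebraMap_apply k E F c)).trans
      ((hjE _).trans (j₀.commutes c))
  · exact (j.commutes ⟨x i, Algebra.subset_adjoin ⟨i, rfl⟩⟩).trans (hgx i)

lemma algebraMap_algebraicClosure_polynomial_injective (F : Type*) [Field F] :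
    Function.Injective (algebraMap F[X] (AlgebraicClosure (FractionRing F[X]))) :=
  (algebraMap (FractionRing F[X]) (AlgebraicClosure (FractionRing F[X]))).injective.comp
    (IsFractionRing.injective F[X] (FractionRing F[X]))

lemma isAlgebraic_of_algebraMap_mem {k F : Type*} [Field k] [Field F] [Algebra k F]
    {B : Subalgebra k (AlgebraicClosure (FractionRing F[X]))}
    (hF : ∀ c : F, algebraMap F _ c ∈ B) (hX : algebraMap F[X] _ X ∈ B)
    (w : AlgebraicClosure (FractionRing F[X])) : IsAlgebraic B w := by
  have hw : IsAlgebraic F[X] w :=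
    (IsFractionRing.isAlgebraic_iff F[X] (FractionRing F[X]) _).2
      (Algebra.IsAlgebraic.isAlgebraic w)
  have hB (p : F[X]) : algebraMap F[X] (AlgebraicClosure (FractionRing F[X])) p ∈ B := by
    induction p using Polynomial.induction_on' with
    | add p q hp hq => rw [map_add]; exact add_mem hp hq
    | monomial n c =>
      rw [← C_mul_X_pow_eq_monomial, map_mul, map_pow, C_eq_algebraMap,
        ← IsScalarTower.algebraMap_apply]
      exact mul_mem (hF c) (pow_mem hX n)
  refine hw.ringHom_of_comp_eq ((algebraMap F[X] _).codRestrict B hB) (RingHom.id _) ?_ rfl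
  exact fun p q hpq => algebraMap_algebraicClosure_polynomial_injective F (congrArg Subtype.val hpq)

variable {k k₁ F F₁ ι : Type u} [Field k] [Field k₁] [Field F] [Field F₁] [Algebra k F]
  [Algebra k k₁] [Algebra k₁ F₁] [Algebra F F₁] [Algebra k F₁] [IsScalarTower k F F₁]
  [Fintype ι] {z : Option ι → F} (G : GenericSection k F k₁ F₁ z)

lemma adjoin_range_union_range_coef_eq_top (hz₀ : z none = 1) :
    IntermediateField.adjoin k (Set.range (IsScalarTower.toAlgHom k F F₁) ∪
      Set.range fun p : Unit × ι => G.coef (some p.2)) = ⊤ := by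
  set E := IntermediateField.adjoin k (Set.range (IsScalarTower.toAlgHom k F F₁) ∪
    Set.range fun p : Unit × ι => G.coef (some p.2))
  have hE : ∀ y, RingHom.id F₁ y ∈ E.toSubfield :=
    forall_mem_subfield_of_adjoin_eq_top (G.adjoin_coef_some_eq_top hz₀) _
      (fun y => IntermediateField.subset_adjoin _ _ (.inl ⟨y, rfl⟩))
      (by rintro _ ⟨i, rfl⟩; exact IntermediateField.subset_adjoin _ _ (.inr ⟨((), i), rfl⟩))
  exact eq_top_iff.2 fun y _ => hE y

lemma isIncident_coef {Ω : Type*} [Field Ω] [Algebra k Ω] (hz₀ : z none = 1) {a j : F₁ →ₐ[k] Ω}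
    (h : ∀ c, a (algebraMap k₁ F₁ c) = j (algebraMap k₁ F₁ c)) :
    IsIncident (z ∘ some) (IsScalarTower.toAlgHom k F F₁) (fun (_ : Unit) i => G.coef (some i))
      a j :=
  ⟨fun _ _ => G.map_coef_eq (a := a.toRingHom) (j := j.toRingHom) h _,
    fun _ => G.sum_map_mul_map_coef_eq (a := a.toRingHom) (j := j.toRingHom) h hz₀⟩

lemma trdeg_section_le {Ω : Type u} [Field Ω] [Algebra F₁ Ω] [Algebra k Ω] [IsScalarTower k F₁ Ω]
    [Nonempty ι] (hind : AlgebraicIndependent F fun i => G.coef (some i))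
    (hd : Algebra.trdeg k F ≤ 2) {T : Ω} (hT : Transcendental F₁ T) :
    2 * Algebra.trdeg k F + (Fintype.card Unit * (Fintype.card ι - 1) : ℕ) ≤
      Algebra.trdeg k Ω := by
  have hcard : 2 + (Fintype.card ι - 1) = Fintype.card ι + 1 := by
    have := Fintype.card_pos (α := ι)
    lia
  calc 2 * Algebra.trdeg k F + (Fintype.card Unit * (Fintype.card ι - 1) : ℕ)
      ≤ Algebra.trdeg k F + 2 + (Fintype.card ι - 1 : ℕ) := by
        rw [two_mul, Fintype.card_unit, one_mul]
        gcongr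
    _ = Algebra.trdeg k F + Fintype.card ι + 1 := by
        rw [add_assoc, add_assoc]
        congr 1
        exact_mod_cast hcard
    _ ≤ Algebra.trdeg k F₁ + Algebra.trdeg F₁ Ω := by
        gcongr
        · exact G.trdeg_add_le hind
        · simpa using (algebraicIndependent_unique_type_iff.2 hT :
            AlgebraicIndependent F₁ fun _ : PUnit.{u + 1} => T).cardinalMk_le_trdeg
    _ = Algebra.trdeg k Ω := trdeg_add_eq k F₁

-- Two embeddings of `F₁` into `Ω`, the given one and one sending `t` to the independent `T`, are a
-- generic pair of points of one hyperplane section; a conjugate of `y` would give a second one.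
lemma mem_range_algebraMap_of_isAlgebraic_of_transcendental [IsAlgClosed k] [CharZero k]
    [IsScalarTower k k₁ F₁] {Ω : Type u} [Field Ω] [IsAlgClosed Ω] [Algebra F₁ Ω] [Algebra k₁ Ω]
    [Algebra k Ω] [IsScalarTower k₁ F₁ Ω] [IsScalarTower k F₁ Ω]
    (hind : AlgebraicIndependent F fun i => G.coef (some i)) (hz₀ : z none = 1)
    (hz : IntermediateField.adjoin k (Set.range z) = ⊤) {i : ι}
    (hi : z (some i) ∉ Set.range (algebraMap k F)) (hd : Algebra.trdeg k F ≤ 2) {t : F₁}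
    (ht : IsTranscendenceBasis k₁ fun _ : Unit => t) {T : Ω} (hT : Transcendental F₁ T)
    (hΩ : ∀ {B : Subalgebra k Ω}, (∀ c : F₁, algebraMap F₁ Ω c ∈ B) → T ∈ B →
      ∀ w : Ω, IsAlgebraic B w) {y : F₁} (hy : IsAlgebraic k₁ y) :
    y ∈ Set.range (algebraMap k₁ F₁) := by
  have : FinTrdeg k F := finTrdeg_iff_trdeg.2 (hd.trans_lt Cardinal.natCast_lt_aleph0)
  have : CharZero k₁ := charZero_of_injective_algebraMap (algebraMap k k₁).injective
  have : Nonempty ι := ⟨i⟩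
  have hTk : AlgebraicIndependent k₁ fun _ : Unit => T :=
    algebraicIndependent_unique_type_iff.2 (hT.restrictScalars (algebraMap k₁ F₁).injective)
  have : IsScalarTower k k₁ Ω := IsScalarTower.to₁₂₄ k k₁ F₁ Ω
  let a : F₁ →ₐ[k₁] Ω := IsScalarTower.toAlgHom k₁ F₁ Ω
  have hpair {j : F₁ →ₐ[k₁] Ω} (hj : j t = T) : IsGenericPair (z ∘ some)
      (IsScalarTower.toAlgHom k F F₁) (fun (_ : Unit) i => G.coef (some i))
      (a.restrictScalars k) (j.restrictScalars k) :=
    ⟨isIncident_coef G hz₀ fun c => (a.commutes c).trans (j.commutes c).symm,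
      hΩ (fun c => Algebra.subset_adjoin (.inl ⟨c, rfl⟩))
        (Algebra.subset_adjoin (.inr ⟨t, hj⟩)), trdeg_section_le G hind hd hT⟩
  have hne {j : F₁ →ₐ[k₁] Ω} (hj : j t = T) : a.restrictScalars k ≠ j.restrictScalars k :=
    fun h => hT (hj ▸ AlgHom.congr_fun h t ▸ isAlgebraic_algebraMap t)
  by_contra hcon
  let E := algebraicClosure k₁ F₁
  let y' : E := ⟨y, mem_algebraicClosure_iff.2 hy⟩
  obtain ⟨j₀, hj₀⟩ := exists_algHom_apply_ne (x := y')
    (by rintro ⟨c, hc⟩; exact hcon ⟨c, congrArg Subtype.val hc⟩) (a y)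
  obtain ⟨j, hj, hjt⟩ := exists_algHom_extending ht hTk (a.comp E.val)
  obtain ⟨j', hj', hjt'⟩ := exists_algHom_extending ht hTk j₀
  have hyy : a.restrictScalars k y = j'.restrictScalars k y :=
    IsGenericPair.apply_eq_of_apply_eq (f := IsScalarTower.toAlgHom k F F₁)
      (u := fun (_ : Unit) i => G.coef (some i)) (adjoin_range_union_range_coef_eq_top G hz₀)
      (adjoin_range_comp_some_eq_top hz₀ hz) (hpair (hjt ())) (hpair (hjt' ())) (hne (hjt ()))
      (hne (hjt' ())) hi (hj y').symm
  exact hj₀ ((hj' y').symm.trans hyy.symm)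

/-- A generic hyperplane section of a surface is geometrically irreducible: its field of constants
is algebraically closed in its function field. -/
theorem mem_range_algebraMap_of_isAlgebraic [IsAlgClosed k] [CharZero k] [IsScalarTower k k₁ F₁]
    (hind : AlgebraicIndependent F fun i => G.coef (some i)) (hz₀ : z none = 1)
    (hz : IntermediateField.adjoin k (Set.range z) = ⊤) {i : ι}
    (hi : z (some i) ∉ Set.range (algebraMap k F)) (hd : Algebra.trdeg k F ≤ 2) {t : F₁}
    (ht : IsTranscendenceBasis k₁ fun _ : Unit => t) {y : F₁} (hy : IsAlgebraic k₁ y) :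
    y ∈ Set.range (algebraMap k₁ F₁) := by
  refine mem_range_algebraMap_of_isAlgebraic_of_transcendental G hind hz₀ hz hi hd ht
    (Ω := AlgebraicClosure (FractionRing F₁[X])) (T := algebraMap F₁[X] _ X)
    ((transcendental_algebraMap_iff (algebraMap_algebraicClosure_polynomial_injective F₁)).2
      (transcendental_X F₁)) (fun hF hX => isAlgebraic_of_algebraMap_mem hF hX) hy

end GeometricIrreducibility

/-! ### Numerical functions -/

section HilbertFunctions

/-- `h` is the Hilbert function of a surface of degree `s`, sectional genus `π` and arithmetic genus
`p`: for large `t`, its value is `s * t * (t + 1) / 2 + (1 - π) * t + 1 + p`. The equation is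
doubled to avoid division in `ℤ`. -/
def IsSurfaceHilbertFunction (h : ℕ → ℕ) (s π p : ℤ) : Prop :=
  ∃ N : ℕ, ∀ t, N ≤ t → 2 * (h t : ℤ) = s * (t * (t + 1)) + 2 * (1 - π) * t + 2 + 2 * p

lemma exists_linear_lt_quadratic {s : ℤ} (hs : 0 < s) (C D : ℤ) (N : ℕ) :
    ∃ n : ℕ, N ≤ n ∧ C * n + D < s * (n * (n + 1)) := by
  obtain ⟨n, hn⟩ : ∃ n : ℕ, (n : ℤ) = |C| + |D| + N + 1 :=
    ⟨C.natAbs + D.natAbs + N + 1, by simp⟩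
  have hN : (N : ℤ) ≤ n := by linarith [abs_nonneg C, abs_nonneg D]
  have hn1 : 1 ≤ (n : ℤ) := by linarith [abs_nonneg C, abs_nonneg D, Int.natCast_nonneg N]
  refine ⟨n, by exact_mod_cast hN, ?_⟩
  calc C * n + D ≤ |C| * n + |D| * n := by
        gcongr
        · exact le_abs_self C
        · exact (le_abs_self D).trans (le_mul_of_one_le_right (abs_nonneg D) hn1)
    _ < n * (n + 1) := by nlinarith
    _ ≤ s * (n * (n + 1)) := le_mul_of_one_le_left (by positivity) hs

lemma add_sum_le_of_add_le {f g : ℕ → ℕ} (h : ∀ t, f t + g (t + 1) ≤ f (t + 1)) (T : ℕ) :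
    f 0 + ∑ t ∈ Finset.range T, g (t + 1) ≤ f T := by
  induction T with
  | zero => simp
  | succ T ih =>
    rw [Finset.sum_range_succ, ← add_assoc]
    exact (Nat.add_le_add_right ih _).trans (h T)

lemma le_add_sum_of_le_add {f g : ℕ → ℕ} (h : ∀ t, f (t + 1) ≤ f t + g (t + 1)) (T : ℕ) :
    f T ≤ f 0 + ∑ t ∈ Finset.range T, g (t + 1) := by
  induction T with
  | zero => simp
  | succ T ih =>
    rw [Finset.sum_range_succ, ← add_assoc]
    exact (h T).trans (Nat.add_le_add_right ih _)

lemma two_mul_sum_range_linear (s c : ℤ) (T : ℕ) :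
    2 * ∑ t ∈ Finset.range T, (s * (t + 1) + c) = s * (T * (T + 1)) + 2 * c * T := by
  induction T with
  | zero => simp
  | succ T ih =>
    rw [Finset.sum_range_succ, mul_add, ih]
    push_cast
    ring

lemma eq_linear_of_forall_add {b : ℕ → ℤ} {s s' c : ℤ} {n : ℕ} (hb : ∀ t, b (t + 1) = b t + s')
    (hn : ∀ t, n ≤ t → b t = s * t + c) : s' = s ∧ ∀ t : ℕ, b t = s * t + c := by
  have hs : s' = s := by
    have h := hn (n + 1) n.le_succ
    rw [hb, hn n le_rfl] at h
    push_cast at h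
    linarith
  have hb' (t : ℕ) : b t = b 0 + s * t := by
    induction t with
    | zero => simp
    | succ t ih =>
      rw [hb, ih, hs]
      push_cast
      ring
  refine ⟨hs, fun t => ?_⟩
  linarith [hb' t, hb' n, hn n le_rfl]

lemma apply_succ_le_sub_one {d : ℕ → ℤ} (hd : Antitone d)
    (hstab : ∀ t, d (t + 1) = d t → d (t + 2) = d (t + 1)) {n : ℕ} (hn : ∀ t, n ≤ t → d t = 0)
    {t : ℕ} (ht : d t ≠ 0) : d (t + 1) ≤ d t - 1 := by
  refine Int.le_sub_one_of_lt ((hd t.le_succ).lt_of_ne fun heq => ht ?_)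
  have hconst (m : ℕ) : d (t + m + 1) = d (t + m) := by
    induction m with
    | zero => exact heq
    | succ m ih => exact hstab _ ih
  have ht (m : ℕ) : d (t + m) = d t := by
    induction m with
    | zero => rfl
    | succ m ih => exact (hconst m).trans ih
  exact (ht n).symm.trans (hn _ (n.le_add_left t))

lemma two_mul_sum_range_le {d : ℕ → ℤ} (hd : Antitone d)
    (hstab : ∀ t, d (t + 1) = d t → d (t + 2) = d (t + 1)) {n : ℕ} (hn : ∀ t, n ≤ t → d t = 0)
    (T : ℕ) : 2 * ∑ t ∈ Finset.range T, d t ≤ d 0 * (d 0 + 1) := by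
  have hpos (t : ℕ) : 0 ≤ d t := hn (max n t) (le_max_left _ _) ▸ hd (le_max_right _ _)
  have hsum : 2 * ∑ t ∈ Finset.range T, d t + d T * (d T + 1) ≤ d 0 * (d 0 + 1) := by
    induction T with
    | zero => simp
    | succ T ih =>
      rw [Finset.sum_range_succ]
      by_cases h0 : d T = 0
      · have : d (T + 1) = 0 := le_antisymm (h0 ▸ hd T.le_succ) (hpos _)
        rw [h0] at ih
        rw [this, h0]
        linarith
      · nlinarith [apply_succ_le_sub_one hd hstab hn h0, hpos (T + 1)]
  nlinarith [hpos T]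

namespace IsSurfaceHilbertFunction

variable {h₂ h₁ : ℕ → ℕ} {s π p : ℤ}

lemma not_forall_le_linear (h : IsSurfaceHilbertFunction h₂ s π p) (hs : 0 < s) (c : ℕ) :
    ¬ ∀ t, h₂ t ≤ 1 + c * t := by
  intro hle
  obtain ⟨N, hN⟩ := h
  obtain ⟨n, hNn, hn⟩ := exists_linear_lt_quadratic hs (2 * c - 2 * (1 - π)) (-2 * p) N
  have hupper : (h₂ n : ℤ) ≤ 1 + c * n := by exact_mod_cast hle n
  linarith [hN n hNn]

theorem le_degree (h : IsSurfaceHilbertFunction h₂ s π p)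
    (h₂₁ : ∀ t, h₂ t + h₁ (t + 1) ≤ h₂ (t + 1)) {h₀ : ℕ → ℕ}
    (h₁₀ : ∀ t, h₁ t + h₀ (t + 1) ≤ h₁ (t + 1)) (hmono : Monotone h₀) (m : ℕ) :
    (h₀ m : ℤ) ≤ s := by
  by_contra! hlt
  have hcurve (n : ℕ) : h₀ m * n ≤ h₁ (m + n) := by
    induction n with
    | zero => simp
    | succ n ih =>
      rw [← add_assoc]
      linarith [h₁₀ (m + n), hmono (show m ≤ m + n + 1 by lia)]
  have hsurface (n : ℕ) : h₀ m * (n * (n + 1)) ≤ 2 * h₂ (m + n) := by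
    induction n with
    | zero => simp
    | succ n ih =>
      have hc := hcurve (n + 1)
      rw [← add_assoc] at hc ⊢
      linarith [h₂₁ (m + n)]
  obtain ⟨N, hN⟩ := h
  obtain ⟨n, hNn, hn⟩ := exists_linear_lt_quadratic (sub_pos.2 hlt) (2 * s * m + 2 * (1 - π))
    (s * (m * m + m) + 2 * (1 - π) * m + 2 + 2 * p) N
  have hlower : (h₀ m : ℤ) * (n * (n + 1)) ≤ 2 * h₂ (m + n) := by exact_mod_cast hsurface n
  have hquad := hN (m + n) (by lia)
  push_cast at hquad
  nlinarith

lemma exists_section_eq_linear (h : IsSurfaceHilbertFunction h₂ s π p) {n : ℕ}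
    (h₂₁ : ∀ t, n ≤ t → h₂ (t + 1) = h₂ t + h₁ (t + 1)) :
    ∃ m : ℕ, ∀ t, m ≤ t → (h₁ (t + 1) : ℤ) = s * (t + 1) + (1 - π) := by
  obtain ⟨N, hN⟩ := h
  refine ⟨max n N, fun t ht => ?_⟩
  have hsection := h₂₁ t (by lia)
  have hquad := hN t (by lia)
  have hquad' := hN (t + 1) (by lia)
  zify at hsection
  push_cast at hquad'
  linarith

variable {b : ℕ → ℕ}

lemma arithmeticGenus_nonpos (h : IsSurfaceHilbertFunction h₂ s π p) {a : ℕ → ℕ}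
    (hle : ∀ t, h₂ t ≤ a t) (ha₀ : a 0 = 1) (hab : ∀ t, a (t + 1) ≤ a t + b (t + 1))
    (hb : ∀ t : ℕ, (b (t + 1) : ℤ) = s * (t + 1) + (1 - π)) : p ≤ 0 := by
  obtain ⟨N, hN⟩ := h
  have hsum : (h₂ N : ℤ) ≤ 1 + ∑ t ∈ Finset.range N, (b (t + 1) : ℤ) := by
    exact_mod_cast ha₀ ▸ (hle N).trans (le_add_sum_of_le_add hab N)
  rw [Finset.sum_congr rfl fun t _ => hb t] at hsum
  linarith [hN N le_rfl, two_mul_sum_range_linear s (1 - π) N]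

-- The deficits `b (t + 1) - h₁ (t + 1)` decrease strictly until they vanish.
lemma neg_le_two_mul_arithmeticGenus (h : IsSurfaceHilbertFunction h₂ s π p) {s' n : ℕ}
    (h₂₀ : h₂ 0 = 1) (h₂₁ : ∀ t, h₂ t + h₁ (t + 1) ≤ h₂ (t + 1))
    (h₁₀ : ∀ t, h₁ (t + 1) + s' ≤ h₁ (t + 2))
    (hstep : ∀ t, h₁ (t + 2) = h₁ (t + 1) + s' → h₁ (t + 3) ≤ h₁ (t + 2) + s')
    (hb' : ∀ t, b (t + 2) = b (t + 1) + s') (hn : ∀ t, n ≤ t → h₁ (t + 1) = b (t + 1))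
    (hb : ∀ t : ℕ, (b (t + 1) : ℤ) = s * (t + 1) + (1 - π)) :
    -((s - h₁ 1 + 1 - π) * (s - h₁ 1 + 1 - π + 1)) ≤ 2 * p := by
  obtain ⟨N, hN⟩ := h
  let d : ℕ → ℤ := fun t => b (t + 1) - h₁ (t + 1)
  have hanti : Antitone d := antitone_nat_of_succ_le fun t => by
    have := h₁₀ t
    have := hb' t
    simp only [d]
    lia
  have hd : 2 * ∑ t ∈ Finset.range N, d t ≤ d 0 * (d 0 + 1) := by
    refine two_mul_sum_range_le hanti (fun t ht => ?_) (n := n) (fun t ht => ?_) N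
    · have := h₁₀ (t + 1)
      have := hstep t
      have := hb' t
      have := hb' (t + 1)
      simp only [d, add_assoc, Nat.reduceAdd] at *
      lia
    · simp [d, hn t ht]
  have hd₀ : d 0 = s - h₁ 1 + 1 - π := by
    have := hb 0
    simp only [d, zero_add, Nat.cast_zero, mul_one] at *
    linarith
  have hsum : 1 + ∑ t ∈ Finset.range N, (h₁ (t + 1) : ℤ) ≤ h₂ N := by
    exact_mod_cast h₂₀ ▸ add_sum_le_of_add_le h₂₁ N
  have hd' : ∑ t ∈ Finset.range N, d t =
      ∑ t ∈ Finset.range N, (s * (t + 1) + (1 - π)) - ∑ t ∈ Finset.range N, (h₁ (t + 1) : ℤ) := by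
    rw [← Finset.sum_sub_distrib]
    exact Finset.sum_congr rfl fun t _ => by rw [← hb]
  rw [hd₀] at hd
  linarith [hN N le_rfl, two_mul_sum_range_linear s (1 - π) N]

end IsSurfaceHilbertFunction

end HilbertFunctions

/-! ### Hilbert functions of generic sections -/

section LargeDegrees

variable {k F : Type*} [Field k] [Field F] [Algebra k F] {V : Submodule k F}

lemma finrank_one_submodule : Module.finrank k (1 : Submodule k F) = 1 := by
  rw [Submodule.one_eq_span, finrank_span_singleton one_ne_zero]

lemma fg_one_submodule : (1 : Submodule k F).FG := by
  rw [Submodule.one_eq_span]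
  exact Submodule.fg_span_singleton 1

lemma saturation_zero_eq_one (hV : V.FG) (h1 : 1 ∈ V)
    (hk : ∀ x : F, IsAlgebraic k x → x ∈ Set.range (algebraMap k F)) : saturation V 0 = 1 := by
  refine le_antisymm (fun x hx => ?_) (pow_zero V ▸ pow_le_saturation V 0)
  obtain ⟨c, rfl⟩ := hk x (isIntegral_of_mem_saturation_zero hV h1 hx).isAlgebraic
  exact Submodule.mem_one.2 ⟨c, rfl⟩

lemma exists_saturation_eq_pow {t₀ : ℕ} (hfg : (saturation V t₀).FG)
    (hgen : ∀ t, t₀ ≤ t → saturation V (t + 1) ≤ V ^ (t + 1) ⊔ V * saturation V t) :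
    ∃ n, ∀ t, n ≤ t → saturation V t = V ^ t := by
  obtain ⟨n, hn⟩ := exists_mul_pow_le hfg le_rfl
  have hle (m : ℕ) : saturation V (t₀ + m) ≤ V ^ (t₀ + m) ⊔ V ^ m * saturation V t₀ := by
    induction m with
    | zero => simp
    | succ m ih =>
      refine (hgen (t₀ + m) (t₀.le_add_right m)).trans (sup_le le_sup_left ?_)
      calc V * saturation V (t₀ + m) ≤ V * (V ^ (t₀ + m) ⊔ V ^ m * saturation V t₀) :=
            mul_le_mul' le_rfl ih
        _ = V ^ (t₀ + (m + 1)) ⊔ V ^ (m + 1) * saturation V t₀ := by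
            rw [Submodule.mul_sup, ← mul_assoc, ← pow_succ', ← pow_succ', add_assoc]
  refine ⟨t₀ + n, fun t ht => le_antisymm ?_ (pow_le_saturation V t)⟩
  obtain ⟨m, rfl⟩ := Nat.exists_eq_add_of_le ((Nat.le_add_right t₀ n).trans ht)
  refine (hle m).trans (sup_le le_rfl ?_)
  rw [mul_comm, add_comm]
  exact hn m (Nat.le_of_add_le_add_left ht)

lemma exists_forall_pow_eq (hV : V.FG) (h1 : 1 ∈ V) {c : ℕ}
    (hc : ∀ t, Module.finrank k (V ^ t : Submodule k F) ≤ c) :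
    ∃ t₀, ∀ t, t₀ ≤ t → V ^ t = V ^ t₀ := by
  let s := Set.range fun t => Module.finrank k (V ^ t : Submodule k F)
  have hs : BddAbove s := ⟨c, Set.forall_mem_range.2 hc⟩
  obtain ⟨t₀, ht₀⟩ : sSup s ∈ s := Nat.sSup_mem (Set.range_nonempty _) hs
  refine ⟨t₀, fun t ht => ?_⟩
  have : Module.Finite k (V ^ t : Submodule k F) := Module.Finite.iff_fg.2 (hV.pow t)
  exact (Submodule.eq_of_le_of_finrank_le (pow_le_pow_right' (Submodule.one_le.2 h1) ht)
    ((le_csSup hs ⟨t, rfl⟩).trans_eq ht₀.symm)).symm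

lemma subalgebra_eq_top_of_adjoin_eq_top {B : Subalgebra k F} [Algebra.IsIntegral k B] {s : Set F}
    (hs : s ⊆ B) (hadj : IntermediateField.adjoin k s = ⊤) : B = ⊤ := by
  let E := B.toIntermediateField' (isField_of_isIntegral_of_isField' (Field.toIsField k))
  have hE : E = ⊤ := top_le_iff.1 (hadj ▸ IntermediateField.adjoin_le_iff.2 hs)
  exact eq_top_iff.2 fun x _ => (hE ▸ IntermediateField.mem_top : x ∈ E)

-- Once the powers of `V` are stationary, they form a subalgebra that is finite over `k`.
lemma exists_pow_eq_top (hV : V.FG) (h1 : 1 ∈ V)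
    (hadj : IntermediateField.adjoin k (V : Set F) = ⊤) {c : ℕ}
    (hc : ∀ t, Module.finrank k (V ^ t : Submodule k F) ≤ c) : ∃ t, V ^ t = ⊤ := by
  obtain ⟨t₀, ht₀⟩ := exists_forall_pow_eq hV h1 hc
  have hone : 1 ∈ V ^ t₀ := by simpa using Submodule.pow_mem_pow V h1 t₀
  let B := (V ^ t₀).toSubalgebra hone fun x y hx hy => by
    rw [← ht₀ (t₀ + t₀) (t₀.le_add_right t₀), pow_add]
    exact Submodule.mul_mem_mul hx hy
  have : Module.Finite k B := Module.Finite.iff_fg.2 (hV.pow t₀)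
  have hVB : (V : Set F) ⊆ B := fun x hx => by
    change x ∈ V ^ t₀
    rw [← ht₀ (t₀ + 1) t₀.le_succ, pow_succ']
    simpa using Submodule.mul_mem_mul hx hone
  have hB : B = ⊤ := subalgebra_eq_top_of_adjoin_eq_top hVB hadj
  exact ⟨t₀, eq_top_iff.2 fun x _ => (hB ▸ Algebra.mem_top : x ∈ B)⟩

lemma saturation_le_adjoin (h1 : 1 ∈ V) (t : ℕ) :
    saturation V t ≤ Subalgebra.toSubmodule (Algebra.adjoin k (V : Set F)) := by
  set B := Subalgebra.toSubmodule (Algebra.adjoin k (V : Set F))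
  have hB : 1 ≤ B := Submodule.one_le.2 (one_mem (Algebra.adjoin k (V : Set F)))
  have hVB : V ≤ B := Algebra.subset_adjoin (R := k) (s := (V : Set F))
  have hpow (n : ℕ) : V ^ n ≤ B :=
    calc V ^ n ≤ B ^ n := pow_le_pow_left' hVB n
      _ ≤ B ^ (n + 1) := pow_le_pow_right' hB n.le_succ
      _ = B := (Subalgebra.isIdempotentElem_toSubmodule _).pow_succ_eq n
  intro x hx
  obtain ⟨n, hn⟩ := mem_saturation.1 hx
  simpa using hpow _ (hn 1 (by simpa using Submodule.pow_mem_pow V h1 n))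

lemma exists_forall_finrank_saturation_le (hV : V.FG) (h1 : 1 ∈ V)
    (halg : ∀ x ∈ V, IsAlgebraic k x) :
    ∃ c, ∀ t, (saturation V t).FG ∧ Module.finrank k (saturation V t) ≤ c := by
  let B := Subalgebra.toSubmodule (Algebra.adjoin k (V : Set F))
  have hB : B.FG := by
    obtain ⟨s, rfl⟩ := hV
    simp only [B, Algebra.adjoin_span]
    exact fg_adjoin_of_finite s.finite_toSet
      fun x hx => (halg x (Submodule.subset_span hx)).isIntegral
  have : Module.Finite k B := Module.Finite.iff_fg.2 hB
  refine ⟨Module.finrank k B, fun t => ?_⟩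
  have : Module.Finite k (saturation V t) :=
    Submodule.finiteDimensional_of_le (saturation_le_adjoin h1 t)
  exact ⟨Module.Finite.iff_fg.1 this, Submodule.finrank_mono (saturation_le_adjoin h1 t)⟩

lemma mem_range_algebraMap_of_isAlgClosed [IsAlgClosed k] {x : F} (hx : IsAlgebraic k x) :
    x ∈ Set.range (algebraMap k F) :=
  minpoly.mem_range_of_degree_eq_one k x
    (IsAlgClosed.degree_eq_one_of_irreducible k (minpoly.irreducible hx.isIntegral))

lemma GenericSection.adjoin_algebraMap_eq_top {k F K F' ι : Type*} [Field k] [Field F] [Field K]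
    [Field F'] [Algebra k F] [Algebra k K] [Algebra K F'] [Algebra F F'] [Algebra k F']
    [IsScalarTower k F F'] [IsScalarTower k K F'] [Fintype ι] {z : Option ι → F}
    (G : GenericSection k F K F' z) (hz₀ : z none = 1)
    (hz : IntermediateField.adjoin k (Set.range z) = ⊤) :
    IntermediateField.adjoin K (Set.range (algebraMap F F' ∘ z)) = ⊤ := by
  set E := IntermediateField.adjoin K (Set.range (algebraMap F F' ∘ z))
  have hF : ∀ y, algebraMap F F' y ∈ E.toSubfield :=
    forall_mem_subfield_of_adjoin_eq_top hz (algebraMap F F')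
      (fun c => by
        rw [← IsScalarTower.algebraMap_apply k F F', IsScalarTower.algebraMap_apply k K F']
        exact E.algebraMap_mem _)
      (by rintro _ ⟨i, rfl⟩; exact IntermediateField.subset_adjoin _ _ ⟨i, rfl⟩)
  have hF' : ∀ x, RingHom.id F' x ∈ E.toSubfield :=
    forall_mem_subfield_of_adjoin_eq_top (G.adjoin_coef_some_eq_top hz₀) (RingHom.id F') hF
      (by rintro _ ⟨i, rfl⟩; exact G.toSection_X _ ▸ E.algebraMap_mem _)
  exact eq_top_iff.2 fun x _ => hF' x

end LargeDegrees

section LinearSections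

open Module Submodule TensorProduct

section

variable {k F : Type*} [Field k] [Field F] [Algebra k F]

lemma finiteDimensional_and_finrank_le {V : Submodule k F} (hV : V.FG) (h1 : 1 ∈ V)
    (hadj : IntermediateField.adjoin k (V : Set F) = ⊤) {c : ℕ}
    (hc : ∀ t, finrank k (V ^ t : Submodule k F) ≤ c) :
    FiniteDimensional k F ∧ finrank k F ≤ c := by
  obtain ⟨t, ht⟩ := exists_pow_eq_top hV h1 hadj hc
  refine ⟨⟨ht ▸ hV.pow t⟩, ?_⟩
  rw [← finrank_top k F, ← ht]
  exact hc t

lemma monotone_finrank_pow {V : Submodule k F} (hV : V.FG) (h1 : 1 ∈ V) :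
    Monotone fun t => finrank k (V ^ t : Submodule k F) := fun _ n hmn => by
  have : Module.Finite k (V ^ n : Submodule k F) := Module.Finite.iff_fg.2 (hV.pow n)
  exact Submodule.finrank_mono (pow_le_pow_right' (one_le.2 h1) hmn)

variable {K F' σ : Type*} [Field K] [Field F'] [Algebra k K] [Algebra K F'] [Algebra F F']
  [Algebra k F'] [IsScalarTower k F F'] [IsScalarTower k K F'] {z : σ → F} {V : Submodule k F}

lemma fg_of_eq_span [Finite σ] (hV : V = span k (Set.range z)) : V.FG :=
  hV ▸ fg_span (Set.finite_range z)

lemma ne_zero_of_one_mem (hV : V = span k (Set.range z)) (h1 : 1 ∈ V) : z ≠ 0 := by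
  rintro rfl
  obtain rfl : V = ⊥ := hV.trans (span_eq_bot.2 (by rintro _ ⟨i, rfl⟩; rfl))
  exact one_ne_zero ((mem_bot k).1 h1)

lemma scalarExt_eq_span (hV : V = span k (Set.range z)) :
    scalarExt K F' V = span K (Set.range (algebraMap F F' ∘ z)) := by
  rw [hV, scalarExt_span, Set.range_comp]

variable (K F') in
lemma one_mem_scalarExt (h1 : 1 ∈ V) : 1 ∈ scalarExt K F' V :=
  map_one (algebraMap F F') ▸ algebraMap_mem_scalarExt h1

lemma scalarExt_pow_eq_top (h1 : 1 ∈ V) (hsq : scalarExt K F' V ^ 2 = ⊤) {t : ℕ} (ht : 1 ≤ t) :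
    scalarExt K F' V ^ (t + 1) = ⊤ :=
  eq_top_iff.2 (hsq ▸ pow_le_pow_right' (one_le.2 (one_mem_scalarExt K F' h1)) (by omega))

end

namespace GenericSection

variable {k F K F' σ : Type*} [Field k] [Field F] [Field K] [Field F'] [Algebra k F]
  [Algebra k K] [Algebra K F'] [Algebra F F'] [Fintype σ] {z : σ → F}
  (G : GenericSection k F K F' z) [Algebra k F'] [IsScalarTower k F F'] [IsScalarTower k K F']
  {V : Submodule k F} (hV : V = span k (Set.range z))

include G hV

lemma finrank_eq_finrank_scalarExt_add_one (h1 : 1 ∈ V) (h0 : saturation V 0 = 1) :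
    finrank k V = finrank K (scalarExt K F' V) + 1 := by
  have hle := G.finrank_pow_add_finrank_scalarExt_pow_le hV 0 (ne_zero_of_one_mem hV h1)
  have hge := G.finrank_pow_succ_le hV 0 (h0 ▸ fg_one_submodule)
  rw [pow_zero, zero_add, pow_one, pow_one, finrank_one_submodule] at hle
  rw [h0, zero_add, pow_one, pow_one, finrank_one_submodule] at hge
  omega

lemma fg_saturation (h0 : saturation V 0 = 1)
    (hs : ∀ t, (saturation (scalarExt K F' V) t).FG) (t : ℕ) : (saturation V t).FG := by
  induction t with
  | zero => exact h0 ▸ fg_one_submodule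
  | succ t ih => exact (G.fg_saturation_succ_and_finrank_le hV t ih (hs _)).1

lemma exists_finrank_pow_le_linear (h1 : 1 ∈ V) (h0 : saturation V 0 = 1)
    (halg : ∀ i, IsAlgebraic K (algebraMap F F' (z i))) :
    ∃ c, ∀ t, finrank k (V ^ t : Submodule k F) ≤ 1 + c * t := by
  have hV' := scalarExt_eq_span (K := K) (F' := F') hV
  have halg' : ∀ x ∈ scalarExt K F' V, IsAlgebraic K x := fun x hx => by
    rw [hV'] at hx
    induction hx using span_induction with
    | mem x hx => obtain ⟨i, rfl⟩ := hx; exact halg i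
    | zero => exact isAlgebraic_zero
    | add x y _ _ hx hy => exact hx.add hy
    | smul a x _ hx => exact hx.smul a
  obtain ⟨c, hc⟩ := exists_forall_finrank_saturation_le (fg_of_eq_span hV')
    (one_mem_scalarExt K F' h1) halg'
  have hfg := G.fg_saturation hV h0 fun t => (hc t).1
  have hle (t : ℕ) : finrank k (saturation V t) ≤ 1 + c * t := by
    induction t with
    | zero => rw [h0, finrank_one_submodule]; omega
    | succ t ih =>
      have hstep := (G.fg_saturation_succ_and_finrank_le hV t (hfg t) (hc _).1).2
      have hct := (hc (t + 1)).2
      rw [mul_add]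
      omega
  refine ⟨c, fun t => ?_⟩
  have : Module.Finite k (saturation V t) := Module.Finite.iff_fg.2 (hfg t)
  exact (Submodule.finrank_mono (pow_le_saturation V t)).trans (hle t)

section Curve

-- By `hsq` the points of the section impose independent conditions on quadrics.
variable (h1 : 1 ∈ V) (hsq : scalarExt K F' V ^ 2 = ⊤)
include h1 hsq

lemma finrank_pow_add_finrank_le {t : ℕ} (ht : 1 ≤ t) :
    finrank k (V ^ t : Submodule k F) + finrank K F' ≤
      finrank k (V ^ (t + 1) : Submodule k F) := by
  have hle := G.finrank_pow_add_finrank_scalarExt_pow_le hV t (ne_zero_of_one_mem hV h1)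
  rwa [scalarExt_pow_eq_top h1 hsq ht, finrank_top] at hle

variable [FiniteDimensional K F'] (h0 : saturation V 0 = 1)
include h0

lemma finrank_pow_add_two_le_of_eq
    (hL : ∀ c : F', c ∉ Set.range (algebraMap K F') → IntermediateField.adjoin K {c} = ⊤)
    (hdeg : finrank K F' + 4 ≤ 2 * finrank k V) {t : ℕ} (ht : 1 ≤ t)
    (heq : finrank k (V ^ (t + 1) : Submodule k F) =
      finrank k (V ^ t : Submodule k F) + finrank K F') :
    finrank k (V ^ (t + 2) : Submodule k F) ≤
      finrank k (V ^ (t + 1) : Submodule k F) + finrank K F' := by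
  have hpow (n : ℕ) : finrank K ((V.baseChange K) ^ n : Submodule K (K ⊗[k] F)) =
      finrank k (V ^ n : Submodule k F) := by
    rw [← baseChange_pow, finrank_baseChange_submodule]
  have hmap : ((V.baseChange K) ^ 2).map (specialization k F K F').toLinearMap = ⊤ := by
    rw [← baseChange_pow, ← hsq, ← scalarExt_pow, scalarExt]
  have hρ : finrank K ((V.baseChange K).map (specialization k F K F').toLinearMap) + 1 =
      finrank K (V.baseChange K) := by
    rw [finrank_baseChange_submodule, G.finrank_eq_finrank_scalarExt_add_one hV h1 h0, scalarExt]
  simp only [← hpow] at heq ⊢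
  exact finrank_pow_add_two_le (specialization k F K F') hL (fg_baseChange (fg_of_eq_span hV))
    (tmul_mem_baseChange_of_mem (1 : K) h1) (hV ▸ G.tensorForm_mem_baseChange)
    G.specialization_tensorForm (G.mulLeft_tensorForm_injective (ne_zero_of_one_mem hV h1)) hmap hρ
    (by rwa [finrank_baseChange_submodule]) ht heq

lemma exists_saturation_eq_pow_of_section : ∃ n, ∀ t, n ≤ t → saturation V t = V ^ t :=
  exists_saturation_eq_pow
    (G.fg_saturation hV h0 (fun _ => Module.Finite.iff_fg.1 inferInstance) 1) fun t ht =>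
    G.saturation_succ_le_of_section hV t (scalarExt_pow_eq_top h1 hsq ht ▸ le_top)

lemma finrank_saturation_succ {t : ℕ} (ht : 1 ≤ t) :
    finrank k (saturation V (t + 1)) = finrank k (saturation V t) + finrank K F' := by
  have hfg' (t : ℕ) : (saturation (scalarExt K F' V) t).FG := Module.Finite.iff_fg.1 inferInstance
  have hfg := G.fg_saturation hV h0 hfg'
  have htop : scalarExt K F' (saturation V (t + 1)) = ⊤ := by
    rw [eq_top_iff, ← scalarExt_pow_eq_top h1 hsq ht, ← scalarExt_pow]
    exact scalarExt_mono K F' (pow_le_saturation V _)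
  have hle := (G.fg_saturation_succ_and_finrank_le hV t (hfg t) (hfg' _)).2
  have hge := G.finrank_saturation_add_finrank_scalarExt_le hV t (ne_zero_of_one_mem hV h1)
    (hfg _)
  have hsection := Submodule.finrank_le (saturation (scalarExt K F' V) (t + 1))
  rw [htop, finrank_top] at hge
  omega

end Curve

end GenericSection

end LinearSections

section SurfaceBound

open Module Submodule MvPolynomial

section

variable {k k₁ K F F₁ L σ : Type*} [Field k] [Field k₁] [Field K] [Field F] [Field F₁] [Field L]
  [Algebra k F] [Algebra k k₁] [Algebra k₁ F₁] [Algebra F F₁] [Algebra k F₁] [IsScalarTower k F F₁]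
  [IsScalarTower k k₁ F₁] [Algebra k₁ K] [Algebra K L] [Algebra F₁ L] [Algebra k₁ L]
  [IsScalarTower k₁ F₁ L] [IsScalarTower k₁ K L] [Fintype σ] {z : σ → F}
  (G₁ : GenericSection k F k₁ F₁ z) (G₂ : GenericSection k₁ F₁ K L (algebraMap F F₁ ∘ z))
  {V : Submodule k F} (hV : V = span k (Set.range z)) (h1 : 1 ∈ V) {s π p : ℤ}
  (h : IsSurfaceHilbertFunction (fun t => finrank k (V ^ t : Submodule k F)) s π p)

include G₁ G₂ hV h1 h in
lemma finrank_scalarExt_scalarExt_pow_le (t : ℕ) :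
    (finrank K (scalarExt K L (scalarExt k₁ F₁ V) ^ t : Submodule K L) : ℤ) ≤ s := by
  have hV₁ := scalarExt_eq_span (K := k₁) (F' := F₁) hV
  have h1₁ := one_mem_scalarExt k₁ F₁ h1
  exact h.le_degree
    (fun t => G₁.finrank_pow_add_finrank_scalarExt_pow_le hV t (ne_zero_of_one_mem hV h1))
    (fun t => G₂.finrank_pow_add_finrank_scalarExt_pow_le hV₁ t (ne_zero_of_one_mem hV₁ h1₁))
    (monotone_finrank_pow (fg_of_eq_span (scalarExt_eq_span hV₁)) (one_mem_scalarExt K L h1₁)) t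

include G₁ G₂ hV h1 h in
lemma finiteDimensional_and_finrank_le_degree
    (hz : IntermediateField.adjoin K (Set.range (algebraMap F₁ L ∘ algebraMap F F₁ ∘ z)) = ⊤) :
    FiniteDimensional K L ∧ (finrank K L : ℤ) ≤ s := by
  have hV₂ := scalarExt_eq_span (K := K) (F' := L) (scalarExt_eq_span (K := k₁) (F' := F₁) hV)
  have hdeg := finrank_scalarExt_scalarExt_pow_le G₁ G₂ hV h1 h
  have hadj : IntermediateField.adjoin K (scalarExt K L (scalarExt k₁ F₁ V) : Set L) = ⊤ := by
    rw [eq_top_iff, ← hz, hV₂]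
    exact IntermediateField.adjoin.mono _ _ _ subset_span
  obtain ⟨hfin, hle⟩ := finiteDimensional_and_finrank_le (c := s.toNat) (fg_of_eq_span hV₂)
    (one_mem_scalarExt K L (one_mem_scalarExt k₁ F₁ h1)) hadj fun t => by
      have := hdeg t
      omega
  have := hdeg 0
  exact ⟨hfin, by omega⟩

variable [FiniteDimensional K L] (h0 : saturation V 0 = 1)
  (h0₁ : saturation (scalarExt k₁ F₁ V) 0 = 1)
  (hsq : scalarExt K L (scalarExt k₁ F₁ V) ^ 2 = ⊤)

include G₁ G₂ hV h1 h0 h0₁ hsq in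
lemma exists_finrank_pow_succ_eq : ∃ n, ∀ t, n ≤ t →
    finrank k₁ (saturation (scalarExt k₁ F₁ V) (t + 1)) =
      finrank k₁ (scalarExt k₁ F₁ V ^ (t + 1) : Submodule k₁ F₁) ∧
    finrank k (V ^ (t + 1) : Submodule k F) = finrank k (V ^ t : Submodule k F) +
      finrank k₁ (scalarExt k₁ F₁ V ^ (t + 1) : Submodule k₁ F₁) := by
  have hV₁ := scalarExt_eq_span (K := k₁) (F' := F₁) hV
  have h1₁ := one_mem_scalarExt k₁ F₁ h1
  have hfg := G₁.fg_saturation hV h0 (G₂.fg_saturation hV₁ h0₁ fun _ =>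
    Module.Finite.iff_fg.1 inferInstance)
  obtain ⟨n₁, hn₁⟩ := G₂.exists_saturation_eq_pow_of_section hV₁ h1₁ hsq h0₁
  obtain ⟨n, hn⟩ := exists_saturation_eq_pow (hfg n₁) fun t ht =>
    G₁.saturation_succ_le_of_section hV t (hn₁ (t + 1) (by omega)).le
  refine ⟨max n n₁, fun t ht => ⟨by rw [hn₁ (t + 1) (by omega)], ?_⟩⟩
  have hle := G₁.finrank_pow_succ_le hV t (hfg t)
  have hge := G₁.finrank_pow_add_finrank_scalarExt_pow_le hV t (ne_zero_of_one_mem hV h1)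
  rw [hn t (by omega)] at hle
  omega

include G₁ G₂ hV h1 h0 h0₁ hsq h in
lemma finrank_saturation_eq_linear (t : ℕ) :
    (finrank k₁ (saturation (scalarExt k₁ F₁ V) (t + 1)) : ℤ) = s * (t + 1) + (1 - π) := by
  have hV₁ := scalarExt_eq_span (K := k₁) (F' := F₁) hV
  obtain ⟨n, hn⟩ := exists_finrank_pow_succ_eq G₁ G₂ hV h1 h0 h0₁ hsq
  obtain ⟨m, hm⟩ := h.exists_section_eq_linear
    (h₁ := fun t => finrank k₁ (scalarExt k₁ F₁ V ^ t : Submodule k₁ F₁))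
    fun t ht => (hn t ht).2
  have hlin := (eq_linear_of_forall_add (n := max n m) (s := s) (s' := finrank K L)
    (c := s + (1 - π)) (b := fun t => (finrank k₁ (saturation (scalarExt k₁ F₁ V) (t + 1)) : ℤ))
    (fun t => by
      rw [G₂.finrank_saturation_succ hV₁ (one_mem_scalarExt k₁ F₁ h1) hsq h0₁ (Nat.le_add_left 1 t),
        Nat.cast_add]) fun t ht => ?_).2 t
  · linarith
  · rw [(hn t (by omega)).1, hm t (by omega)]
    ring

include G₁ G₂ hV h1 h0 h0₁ hsq h in
theorem arithmeticGenus_bounds_of_sections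
    (hL : ∀ c : L, c ∉ Set.range (algebraMap K L) → IntermediateField.adjoin K {c} = ⊤)
    {d : ℕ} (hd : finrank k₁ (scalarExt k₁ F₁ V) = d) (hdeg : finrank K L + 4 ≤ 2 * d) :
    -((s - d + 1 - π) * (s - d + 1 - π + 1)) ≤ 2 * p ∧ p ≤ 0 := by
  subst hd
  have hV₁ := scalarExt_eq_span (K := k₁) (F' := F₁) hV
  have h1₁ := one_mem_scalarExt k₁ F₁ h1
  have hfg₁ := G₂.fg_saturation hV₁ h0₁ fun _ => Module.Finite.iff_fg.1 inferInstance
  have hfg := G₁.fg_saturation hV h0 hfg₁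
  have hlin := finrank_saturation_eq_linear G₁ G₂ hV h1 h h0 h0₁ hsq
  obtain ⟨n, hn⟩ := exists_finrank_pow_succ_eq G₁ G₂ hV h1 h0 h0₁ hsq
  constructor
  · rw [← pow_one (scalarExt k₁ F₁ V)]
    exact h.neg_le_two_mul_arithmeticGenus
      (h₁ := fun t => finrank k₁ (scalarExt k₁ F₁ V ^ t : Submodule k₁ F₁))
      (b := fun t => finrank k₁ (saturation (scalarExt k₁ F₁ V) t))
      (by rw [pow_zero, finrank_one_submodule])
      (fun t => G₁.finrank_pow_add_finrank_scalarExt_pow_le hV t (ne_zero_of_one_mem hV h1))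
      (fun t => G₂.finrank_pow_add_finrank_le hV₁ h1₁ hsq (Nat.le_add_left 1 t))
      (fun t => G₂.finrank_pow_add_two_le_of_eq hV₁ h1₁ hsq h0₁ hL hdeg (Nat.le_add_left 1 t))
      (fun t => G₂.finrank_saturation_succ hV₁ h1₁ hsq h0₁ (Nat.le_add_left 1 t))
      (fun t ht => (hn t ht).1.symm) hlin
  · refine h.arithmeticGenus_nonpos (a := fun t => finrank k (saturation V t))
      (b := fun t => finrank k₁ (saturation (scalarExt k₁ F₁ V) t)) (fun t => ?_)
      (by rw [h0, finrank_one_submodule]) (fun t => ?_) hlin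
    · have : Module.Finite k (saturation V t) := Module.Finite.iff_fg.2 (hfg t)
      exact Submodule.finrank_mono (pow_le_saturation V t)
    · exact (G₁.fg_saturation_succ_and_finrank_le hV t (hfg t) (hfg₁ _)).2.trans_eq (add_comm _ _)

end

section

variable {k F ι : Type*} [Field k] [Field F] [Algebra k F] {z : Option ι → F}

lemma notMem_range_algebraMap_of_linearIndependent (hz₀ : z none = 1)
    (hli : LinearIndependent k z) (i : ι) : z (some i) ∉ Set.range (algebraMap k F) := by
  rintro ⟨c, hc⟩
  refine hli.notMem_span_image (s := {none}) (x := some i) (by simp) ?_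
  rw [Set.image_singleton, hz₀, ← hc, Algebra.algebraMap_eq_smul_one]
  exact smul_mem _ _ (mem_span_singleton_self _)

end

section

variable {k F ι : Type u} [Field k] [Field F] [Algebra k F] [Fintype ι] {z : Option ι → F}
  [IsAlgClosed k] [CharZero k] (hz₀ : z none = 1)
  (hz : IntermediateField.adjoin k (Set.range z) = ⊤)

section

variable {k₁ F₁ : Type u} [Field k₁] [Field F₁] [Algebra k k₁] [Algebra k₁ F₁] [Algebra F F₁]
  [Algebra k F₁] [IsScalarTower k F F₁] [IsScalarTower k k₁ F₁] (G₁ : GenericSection k F k₁ F₁ z)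
  (hind₁ : AlgebraicIndependent F fun i => G₁.coef (some i)) {i : ι}
  (hi : z (some i) ∉ Set.range (algebraMap k F))

include hz₀ hz hind₁ hi in
lemma saturation_scalarExt_zero_eq_one {t : F₁} (ht : Transcendental k₁ t)
    (hd : Algebra.trdeg k₁ F₁ ≤ 1) :
    saturation (scalarExt k₁ F₁ (span k (Set.range z))) 0 = 1 := by
  have hbasis : IsTranscendenceBasis k₁ fun _ : Unit => t :=
    (algebraicIndependent_unique_type_iff.2 ht).isTranscendenceBasis_of_lift_trdeg_le_of_finite
      (by simpa using hd)
  have hd₂ : Algebra.trdeg k F ≤ 2 := (G₁.trdeg_le hind₁).trans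
    ((add_le_add_left hd 1).trans_eq one_add_one_eq_two)
  exact saturation_zero_eq_one (fg_of_eq_span (scalarExt_eq_span rfl))
    (one_mem_scalarExt k₁ F₁ (subset_span ⟨none, hz₀⟩)) fun y hy =>
      mem_range_algebraMap_of_isAlgebraic G₁ hind₁ hz₀ hz hi hd₂ hbasis hy

variable {V : Submodule k F} (hV : V = span k (Set.range z)) {s π p : ℤ}
  (h : IsSurfaceHilbertFunction (fun t => finrank k (V ^ t : Submodule k F)) s π p)

include hz₀ hz hind₁ hi hV h in
lemma arithmeticGenus_bounds_of_genericSections (hr : finrank k V = Fintype.card ι + 1)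
    (hs : s + 4 ≤ 2 * Fintype.card ι) (h0 : saturation V 0 = 1)
    {j : Option ι} (hj : Transcendental k₁ (algebraMap F F₁ (z j)))
    {K L : Type u} [Field K] [Field L] [Algebra k₁ K] [Algebra K L] [Algebra F₁ L] [Algebra k₁ L]
    [IsScalarTower k₁ F₁ L] [IsScalarTower k₁ K L]
    (G₂ : GenericSection k₁ F₁ K L (algebraMap F F₁ ∘ z))
    (hind₂ : AlgebraicIndependent F₁ fun i => G₂.coef (some i)) :
    -((s - Fintype.card ι + 1 - π) * (s - Fintype.card ι + 1 - π + 1)) ≤ 2 * p ∧ p ≤ 0 := by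
  let _ : Algebra k K := ((algebraMap k₁ K).comp (algebraMap k k₁)).toAlgebra
  let _ : Algebra k L := ((algebraMap F₁ L).comp (algebraMap k F₁)).toAlgebra
  have : IsScalarTower k F₁ L := IsScalarTower.of_algebraMap_eq fun _ => rfl
  have : IsScalarTower k K L := IsScalarTower.of_algebraMap_eq fun x => by
    change algebraMap F₁ L (algebraMap k F₁ x) = algebraMap K L (algebraMap k₁ K _)
    rw [← IsScalarTower.algebraMap_apply k₁ K L, IsScalarTower.algebraMap_apply k k₁ F₁,
      IsScalarTower.algebraMap_apply k₁ F₁ L]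
  have h1 : 1 ∈ V := hV ▸ subset_span ⟨none, hz₀⟩
  have hV₁ := scalarExt_eq_span (K := k₁) (F' := F₁) hV
  have h1₁ := one_mem_scalarExt k₁ F₁ h1
  obtain ⟨_, hdeg⟩ := finiteDimensional_and_finrank_le_degree G₁ G₂ hV h1 h
    (G₂.adjoin_algebraMap_eq_top (by simp [hz₀]) (G₁.adjoin_algebraMap_eq_top hz₀ hz))
  have hd₁ : Algebra.trdeg k₁ F₁ ≤ 1 := by
    simpa [trdeg_eq_zero (R := K) (A := L)] using G₂.trdeg_le hind₂
  have hd : Algebra.trdeg k F ≤ 2 := (G₁.trdeg_le hind₁).trans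
    ((add_le_add_left hd₁ 1).trans_eq one_add_one_eq_two)
  have h0₁ : saturation (scalarExt k₁ F₁ V) 0 = 1 :=
    hV ▸ saturation_scalarExt_zero_eq_one hz₀ hz G₁ hind₁ hi hj hd₁
  have hr₁ := G₁.finrank_eq_finrank_scalarExt_add_one hV h1 h0
  have hr₂ := G₂.finrank_eq_finrank_scalarExt_add_one hV₁ h1₁ h0₁
  have hsq : scalarExt K L (scalarExt k₁ F₁ V) ^ 2 = ⊤ := by
    rw [pow_two]
    exact mul_eq_top_of_finrank_lt (by omega)
  exact arithmeticGenus_bounds_of_sections G₁ G₂ hV h1 h h0 h0₁ hsq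
    (fun c => adjoin_simple_eq_top_of_section G₁ G₂ hind₁ hind₂ hz₀ hz hi hd)
    (by omega) (by omega)

end

include hz₀ hz in
theorem arithmeticGenus_bounds (hli : LinearIndependent k z) {s π p : ℤ}
    (h : IsSurfaceHilbertFunction
      (fun t => finrank k (span k (Set.range z) ^ t : Submodule k F)) s π p)
    (hs : 0 < s) (hs' : s + 4 ≤ 2 * Fintype.card ι) :
    -((s - Fintype.card ι + 1 - π) * (s - Fintype.card ι + 1 - π + 1)) ≤ 2 * p ∧ p ≤ 0 := by
  obtain ⟨i⟩ : Nonempty ι := Fintype.card_pos_iff.1 (by omega)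
  have hi := notMem_range_algebraMap_of_linearIndependent hz₀ hli i
  have h1 : 1 ∈ span k (Set.range z) := subset_span ⟨none, hz₀⟩
  have h0 : saturation (span k (Set.range z)) 0 = 1 :=
    saturation_zero_eq_one (fg_of_eq_span rfl) h1 fun _ => mem_range_algebraMap_of_isAlgClosed
  obtain ⟨k₁, F₁, _, _, _, _, _, _, _, _, G₁, hind₁⟩ := exists_genericSection hz₀ (i := some i)
    fun h => hi (mem_range_algebraMap_of_isAlgClosed h)
  obtain ⟨j, hj⟩ : ∃ j, Transcendental k₁ (algebraMap F F₁ (z j)) := by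
    by_contra! hcon
    obtain ⟨c, hc⟩ := G₁.exists_finrank_pow_le_linear rfl h1 h0 fun j => not_not.1 (hcon j)
    exact h.not_forall_le_linear hs c hc
  obtain ⟨K, L, _, _, _, _, _, _, _, _, G₂, hind₂⟩ :=
    exists_genericSection (z := algebraMap F F₁ ∘ z) (by simp [hz₀]) hj
  have hr : finrank k (span k (Set.range z)) = Fintype.card ι + 1 := by
    rw [finrank_span_eq_card hli, Fintype.card_option]
  exact arithmeticGenus_bounds_of_genericSections hz₀ hz G₁ hind₁ hi rfl h hr hs' h0 hj G₂ hind₂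

end

end SurfaceBound

/-! ### From coordinate rings to function fields -/

section CoordinateRing

open Module Submodule MvPolynomial

lemma finrank_pow_map_mulLeft {k F : Type*} [Field k] [Field F] [Algebra k F] {c : F} (hc : c ≠ 0)
    (W : Submodule k F) (t : ℕ) :
    finrank k (W.map (LinearMap.mulLeft k c) ^ t : Submodule k F) =
      finrank k (W ^ t : Submodule k F) := by
  have hmul (d : F) (U : Submodule k F) : U.map (LinearMap.mulLeft k d) = span k {d} * U := by
    ext
    rw [mem_span_singleton_mul]
    rfl
  rw [hmul, mul_pow, span_pow, Set.singleton_pow, ← hmul]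
  exact finrank_map_of_injective _ (mul_right_injective₀ (pow_ne_zero t hc))

lemma finrank_pow_map_algHom {R A B : Type*} [CommSemiring R] [Semiring A] [Semiring B]
    [Algebra R A] [Algebra R B] {f : A →ₐ[R] B} (hf : Function.Injective f) (W : Submodule R A)
    (t : ℕ) :
    finrank R (W.map f.toLinearMap ^ t : Submodule R B) = finrank R (W ^ t : Submodule R A) := by
  rw [← Submodule.map_pow]
  exact finrank_map_of_injective _ hf

lemma exists_adjoin_eq_top_of_linearIndependent {k Q : Type*} [Field k] [Field Q] [Algebra k Q]
    {n : ℕ} {x : Fin (n + 1) → Q} (hx : LinearIndependent k x) :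
    ∃ (E : IntermediateField k Q) (z : Option (Fin n) → E), z none = 1 ∧ LinearIndependent k z ∧
      IntermediateField.adjoin k (Set.range z) = ⊤ ∧
      ∀ t, finrank k (span k (Set.range z) ^ t : Submodule k E) =
        finrank k (span k (Set.range x) ^ t : Submodule k Q) := by
  have hx₀ : (x 0)⁻¹ ≠ 0 := inv_ne_zero (hx.ne_zero 0)
  let e := (finSuccEquiv n).symm
  let y : Option (Fin n) → Q := fun j => (x 0)⁻¹ * x (e j)
  let E := IntermediateField.adjoin k (Set.range y)
  let z : Option (Fin n) → E := fun j => ⟨y j, IntermediateField.subset_adjoin _ _ ⟨j, rfl⟩⟩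
  have hy : LinearIndependent k y := (hx.comp e e.injective).map' (LinearMap.mulLeft k (x 0)⁻¹)
    (LinearMap.ker_eq_bot.2 (mul_right_injective₀ hx₀))
  have hspan : (span k (Set.range z)).map E.val.toLinearMap =
      (span k (Set.range x)).map (LinearMap.mulLeft k (x 0)⁻¹) := by
    rw [map_span, map_span, ← Set.range_comp, ← Set.range_comp]
    exact congrArg (span k) (e.surjective.range_comp fun i => (x 0)⁻¹ * x i)
  refine ⟨E, z, Subtype.ext ?_, LinearIndependent.of_comp E.val.toLinearMap hy,
    IntermediateField.lift_injective E ?_, fun t => ?_⟩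
  · change (x 0)⁻¹ * x (e none) = 1
    rw [show e none = 0 from finSuccEquiv_symm_none, inv_mul_cancel₀ (hx.ne_zero 0)]
  · rw [IntermediateField.lift_adjoin, IntermediateField.lift_top, ← Set.range_comp]
    rfl
  · rw [← finrank_pow_map_algHom (f := E.val) E.val.injective, hspan, finrank_pow_map_mulLeft hx₀]

variable {n : ℕ} {I : Ideal (MPoly n)}

lemma degQ_eq_pow (t : ℕ) :
    degQ I t = span ℂ (Set.range fun i => Ideal.Quotient.mkₐ ℂ I (X i)) ^ t := by
  rw [degQ, ← homogeneousSubmodule_one_pow, Submodule.map_pow, homogeneousSubmodule_one_eq_span_X,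
    map_span, ← Set.range_comp]
  rfl

lemma linearIndependent_mk_X_of_nondeg (h : Nondeg I) :
    LinearIndependent ℂ fun i => Ideal.Quotient.mkₐ ℂ I (X i) := by
  rw [Fintype.linearIndependent_iff]
  intro c hc i
  have hmem : ∑ i, c i • X i ∈ I := by
    refine Ideal.Quotient.eq_zero_iff_mem.1 ?_
    simpa only [map_sum, map_smul] using! hc
  have hzero := h _ (sum_mem fun i _ => smul_mem _ _
    ((mem_homogeneousSubmodule _ _).2 (isHomogeneous_X ℂ i))) hmem
  simpa [coeff_sum, coeff_X, Finsupp.single_left_inj] using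
    congrArg (coeff (Finsupp.single i 1)) hzero

lemma exists_functionField {n : ℕ} {I : Ideal (MPoly (n + 1))} (hI : I.IsPrime) (h : Nondeg I) :
    ∃ (E : Type) (_ : Field E) (_ : Algebra ℂ E) (z : Option (Fin n) → E), z none = 1 ∧
      LinearIndependent ℂ z ∧ IntermediateField.adjoin ℂ (Set.range z) = ⊤ ∧
      ∀ t, finrank ℂ (span ℂ (Set.range z) ^ t : Submodule ℂ E) = finrank ℂ (degQ I t) := by
  let Q := FractionRing (MPoly (n + 1) ⧸ I)
  let g := IsScalarTower.toAlgHom ℂ (MPoly (n + 1) ⧸ I) Q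
  have hg : Function.Injective g := IsFractionRing.injective (MPoly (n + 1) ⧸ I) Q
  obtain ⟨E, z, hz₀, hli, hz, hpow⟩ := exists_adjoin_eq_top_of_linearIndependent
    ((linearIndependent_mk_X_of_nondeg h).map' g.toLinearMap (LinearMap.ker_eq_bot.2 hg))
  refine ⟨E, inferInstance, inferInstance, z, hz₀, hli, hz, fun t => ?_⟩
  rw [hpow, degQ_eq_pow, ← finrank_pow_map_algHom hg, map_span, Set.range_comp]

lemma two_mul_binom2_add_one (m : ℤ) : 2 * binom2 (m + 1) = m * (m + 1) := by
  rw [binom2, add_sub_cancel_right, mul_comm (m + 1),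
    Int.mul_ediv_cancel' (Int.even_mul_succ_self m).two_dvd]

lemma isSurfaceHilbertFunction_of_surfInv {s π p : ℤ} (h : SurfInv I s π p) :
    IsSurfaceHilbertFunction (fun t => finrank ℂ (degQ I t)) s π p := by
  obtain ⟨N, hN⟩ := h
  refine ⟨N.toNat, fun t ht => ?_⟩
  have ht := hN t (by omega)
  rw [hilbZ, hilbNat, degQZ, if_pos (by omega), Int.toNat_natCast] at ht
  have heven := Int.mul_ediv_cancel' (Int.even_mul_succ_self (t : ℤ)).two_dvd
  linear_combination 2 * ht + s * heven

end CoordinateRing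

end SurfaceGenus

/-- Corollary 3.5.  Let `S ⊆ ℙ^r` be an integral nondegenerate surface of
degree `s`, sectional genus `π` and arithmetic genus `p_a(S)`, with `r ≥ 4` and
`r-1 ≤ s ≤ 2r-4`.  Then `-binom(π₀-π+1, 2) ≤ p_a(S) ≤ 0`. -/
theorem statement_14 (r : ℕ) (s π pa : ℤ) (hr : 4 ≤ r)
    (hs1 : (r : ℤ) - 1 ≤ s) (hs2 : s ≤ 2 * (r : ℤ) - 4)
    (IS : Ideal (MPoly (r + 1)))
    (hsurf : IsSurface IS) (hnd : Nondeg IS) (hsinv : SurfInv IS s π pa) :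
    -(binom2 (s - (r : ℤ) + 1 - π + 1)) ≤ pa ∧ pa ≤ 0 := by
  obtain ⟨E, _, _, z, hz₀, hli, hz, hpow⟩ := SurfaceGenus.exists_functionField hsurf.2.1 hnd
  have hHilb := SurfaceGenus.isSurfaceHilbertFunction_of_surfInv hsinv
  simp only [← hpow] at hHilb
  obtain ⟨hlower, hupper⟩ := SurfaceGenus.arithmeticGenus_bounds hz₀ hz hli hHilb (by omega)
    (by rw [Fintype.card_fin]; omega)
  rw [Fintype.card_fin, ← SurfaceGenus.two_mul_binom2_add_one] at hlower
  exact ⟨by omega, hupper⟩
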